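/- For every r > 0 there exists a constant C = C(r) > 0, independent of f, x, n and d, with the following property. Let d ≥ 3 be an integer, x ∈ S^d, δ > 0, and f ∈ C(S^d) be such that ‖f‖ := ‖f‖_∞ + min_{P ∈ Π_r^d} max_{y ∈ B(x,δ)} |f(y)−P(y)|/|x−y|_{d+1}^r < ∞. Let n be an integer with nd ≥ (d+r+1)² and √(16 r (log n)/n) ≤ δ, and let ν ∈ MZQ(d; 2(d+2)n). Then |f(x) − σ_{d;n,r}(ν,f)(x)| ≤ C · d^{1/6} · dim(Π_{2(d+2)n}^d)^{−r/d} · ‖f‖ · |||ν|||_{d;2(d+2)n}. -/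

import Mathlib

noncomputable section

open MeasureTheory Real Set
open scoped RealInnerProductSpace

/-- Value at `x` of the orthonormalized Jacobi polynomial `p_n^{(α,β)}`. -/
def jacobiP (α β : ℝ) (n : ℕ) (x : ℝ) : ℝ :=
  Real.sqrt ((2 * (n : ℝ) + α + β + 1) / 2 ^ (α + β + 1) *
      (Real.Gamma ((n : ℝ) + α + β + 1) * (n.factorial : ℝ) /
        (Real.Gamma ((n : ℝ) + α + 1) * Real.Gamma ((n : ℝ) + β + 1)))) *
    (Real.Gamma (α + n + 1) / ((n.factorial : ℝ) * Real.Gamma (α + β + n + 1))) *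
    ∑ m ∈ Finset.range (n + 1),
      (n.choose m : ℝ) * (Real.Gamma (α + β + n + m + 1) / Real.Gamma (α + m + 1)) *
        ((x - 1) / 2) ^ m

/-- The kernel `K_n^{(α,β)}(x) = Σ_{ℓ<n} p_ℓ^{(α,β)}(1) p_ℓ^{(α,β)}(x)`. -/
def jacobiK (α β : ℝ) (n : ℕ) (x : ℝ) : ℝ :=
  ∑ ℓ ∈ Finset.range n, jacobiP α β ℓ 1 * jacobiP α β ℓ x

/-- The unit sphere `S^d ⊂ ℝ^{d+1}`. -/
abbrev Sph (d : ℕ) := Metric.sphere (0 : EuclideanSpace ℝ (Fin (d + 1))) 1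

/-- The rotation invariant Riemannian volume probability measure `μ_d^*` on `S^d`. -/
def sphMeasure (d : ℕ) : Measure (Sph d) :=
  ((volume : Measure (EuclideanSpace ℝ (Fin (d + 1)))).toSphere Set.univ)⁻¹ •
    (volume : Measure (EuclideanSpace ℝ (Fin (d + 1)))).toSphere

/-- `f : S^d → ℝ` is the restriction to the sphere of an algebraic polynomial in `d+1`
variables of total degree `< n`, i.e. `f ∈ Π_n^d`. -/
def IsSphPoly (d : ℕ) (n : ℝ) (f : Sph d → ℝ) : Prop :=
  ∃ p : MvPolynomial (Fin (d + 1)) ℝ, (p.totalDegree : ℝ) < n ∧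
    ∀ y : Sph d, f y = MvPolynomial.eval (fun i => (y : EuclideanSpace ℝ (Fin (d + 1))) i) p

/-- Integral of `f` with respect to a signed measure (via the Jordan decomposition). -/
def sInt {X : Type*} [MeasurableSpace X] (ν : SignedMeasure X) (f : X → ℝ) : ℝ :=
  (∫ x, f x ∂ν.toJordanDecomposition.posPart) - ∫ x, f x ∂ν.toJordanDecomposition.negPart

/-- Integral of `f` over a set `s` with respect to a signed measure. -/
def sIntOn {X : Type*} [MeasurableSpace X] (ν : SignedMeasure X) (s : Set X) (f : X → ℝ) : ℝ :=
  (∫ x in s, f x ∂ν.toJordanDecomposition.posPart) -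
    ∫ x in s, f x ∂ν.toJordanDecomposition.negPart

/-- `ν` is a quadrature measure of order `n` on `S^d`. -/
def IsQuadrature (d : ℕ) (n : ℝ) (ν : SignedMeasure (Sph d)) : Prop :=
  ∀ f : Sph d → ℝ, IsSphPoly d n f → sInt ν f = ∫ y, f y ∂sphMeasure d

/-- `ν` satisfies the Marcinkiewicz-Zygmund inequality of order `n` with constant `c`;
`ν ∈ MZ(d;n)` means this holds for some `c`, and `|||ν|||_{d;n}` is the least such `c`. -/
def IsMZ (d : ℕ) (n : ℝ) (ν : SignedMeasure (Sph d)) (c : ℝ) : Prop :=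
  ∀ f : Sph d → ℝ, IsSphPoly d (n / 2) f →
    (∫ y, (f y) ^ 2 ∂ν.totalVariation) ≤ c * ∫ y, (f y) ^ 2 ∂sphMeasure d

/-- `ω_d`, the volume of `S^d`. -/
def omegaS (d : ℕ) : ℝ := 2 * Real.pi ^ (((d : ℝ) + 1) / 2) / Real.Gamma (((d : ℝ) + 1) / 2)

/-- The reproducing kernel `K_{d;n}` of `Π_n^d`. -/
def sphK (d n : ℕ) (x : ℝ) : ℝ :=
  (omegaS d / omegaS (d - 1)) * jacobiK ((d : ℝ) / 2 - 1) ((d : ℝ) / 2 - 1) n x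

/-- The kernel `Φ̃_{d;n,r}`. -/
def PhiTilde (d n : ℕ) (r : ℝ) (x : ℝ) : ℝ :=
  sphK d ((d + 2) * n) x *
    (jacobiP ((d : ℝ) / 2 + r) ((d : ℝ) / 2 - 2) (d * n) x /
      jacobiP ((d : ℝ) / 2 + r) ((d : ℝ) / 2 - 2) (d * n) 1)

/-- The kernel `Φ_{d;n,r}`. -/
def Phi (d n : ℕ) (r : ℝ) (x : ℝ) : ℝ := PhiTilde d n r x * ((1 + x) / 2) ^ n

/-- The inner product `x·y` of two points of `S^d`. -/
def ip {d : ℕ} (x y : Sph d) : ℝ :=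
  ⟪(x : EuclideanSpace ℝ (Fin (d + 1))), (y : EuclideanSpace ℝ (Fin (d + 1)))⟫

/-- The operator `σ_{d;n,r}(ν, f)`. -/
def sigmaOp (d n : ℕ) (r : ℝ) (ν : SignedMeasure (Sph d)) (f : Sph d → ℝ) (x : Sph d) : ℝ :=
  sInt ν (fun y => f y * Phi d n r (ip x y))

/-- The operator `σ̃_{d;n,r}(ν, f)`. -/
def sigmaTildeOp (d n : ℕ) (r : ℝ) (ν : SignedMeasure (Sph d)) (f : Sph d → ℝ) (x : Sph d) : ℝ :=
  sInt ν (fun y => f y * PhiTilde d n r (ip x y))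

/-- The uniform (supremum) norm `‖f‖_∞`. -/
def supNorm {X : Type*} (f : X → ℝ) : ℝ := sSup (Set.range fun x => |f x|)

/-- `E_{d;n}(f)`, the degree of approximation of `f` from `Π_n^d` in the uniform norm. -/
def bestApprox (d : ℕ) (n : ℝ) (f : Sph d → ℝ) : ℝ :=
  sInf {t | ∃ g, IsSphPoly d n g ∧ ∀ y, |f y - g y| ≤ t}

/-- `dim Π_n^d = (2n+d−2)·Γ(n+d−1)/(Γ(n)·Γ(d+1))` (for `n ≥ 2`). -/
def dimPi (d n : ℕ) : ℝ :=
  (2 * (n : ℝ) + d - 2) * Real.Gamma ((n : ℝ) + d - 1) /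
    (Real.Gamma n * Real.Gamma ((d : ℝ) + 1))

/-!
Write `u = (1 - x·y) / 2 = |x - y|² / 4`. On the cap where `f` is compared with `P`, smoothness
gives `|f - P| ≤ L |x - y| ^ r`. Off the cap, `P` grows at most like a power of `u` (on great
circles through `x`, Chebyshev polynomials are extremal), and the factor `(1 - u) ^ n` of
`Φ_{d;n,r}` outweighs this growth because the cap has radius at least `√(16 r log n / n)`. Hence
`|f - P| (1 - u) ^ n` is at most a constant times `(‖f‖_∞ + L) |x - y| ^ r` on the whole sphere.
Since `σ_{d;n,r}(ν, ·)` reproduces `P` and `f x = P x`, the error is bounded by the integral of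
`|x - y| ^ r |K p|` against `|ν|`, where `K` is the reproducing kernel and `p` the normalised Jacobi
factor of `Φ_{d;n,r}`.

By the inequality of arithmetic and geometric means it remains to integrate `K²` and `u ^ r p²`
against `|ν|`. The Marcinkiewicz–Zygmund inequality handles `K²` directly and extends to sums of
squares, among which are all products of powers of `u` and `1 - u` with squares. Replacing `u ^ r`
by a polynomial majorant that is accurate down to the scale `n⁻²` reduces the second integral to
Jacobi integrals of `p²`, which the orthogonality of `p` bounds. These two bounds are balanced so
that the factors growing with `d` cancel, leaving `n ^ (-r)`, which is comparable to
`dim(Π_{2(d+2)n}^d) ^ (-r / d)`.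
-/

open Polynomial

section JacobiIntegral

/-- The integral `∫₀¹ p(u) uᵃ (1 - u)ᵇ du` of a polynomial against the Jacobi weight, transported
from `[-1, 1]` to `[0, 1]` by `u = (1 - t) / 2`, so that `a` is the exponent at `t = 1`. -/
def jacobiInt (a b : ℝ) (p : ℝ[X]) : ℝ :=
  ∫ u in (0 : ℝ)..1, u ^ a * (1 - u) ^ b * p.eval u

lemma ofReal_cpow_mul_one_sub_cpow (a b : ℝ) {u : ℝ} (hu : u ∈ Icc (0 : ℝ) 1) :
    (u : ℂ) ^ (((a + 1 : ℝ) : ℂ) - 1) * (1 - (u : ℂ)) ^ (((b + 1 : ℝ) : ℂ) - 1) =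
      ((u ^ a * (1 - u) ^ b : ℝ) : ℂ) := by
  push_cast
  rw [add_sub_cancel_right, add_sub_cancel_right, Complex.ofReal_cpow hu.1,
    Complex.ofReal_cpow (sub_nonneg.2 hu.2), Complex.ofReal_sub, Complex.ofReal_one]

variable {a b : ℝ}

lemma intervalIntegrable_rpow_mul_one_sub_rpow (ha : -1 < a) (hb : -1 < b) :
    IntervalIntegrable (fun u : ℝ ↦ u ^ a * (1 - u) ^ b) volume 0 1 := by
  have hbeta := (Complex.betaIntegral_convergent (u := ((a + 1 : ℝ) : ℂ))
    (v := ((b + 1 : ℝ) : ℂ)) (by simpa using neg_lt_iff_pos_add.1 ha)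
    (by simpa using neg_lt_iff_pos_add.1 hb)).norm
  refine hbeta.congr fun u hu ↦ ?_
  rw [uIoc_of_le zero_le_one] at hu
  have hu' : u ∈ Icc (0 : ℝ) 1 := Ioc_subset_Icc_self hu
  have hu1 : 0 ≤ 1 - u := sub_nonneg.2 hu'.2
  have hu0 : 0 ≤ u := hu'.1
  simp only [ofReal_cpow_mul_one_sub_cpow a b hu', Complex.norm_real]
  exact Real.norm_of_nonneg (by positivity)

lemma intervalIntegrable_jacobiWeight_mul (ha : -1 < a) (hb : -1 < b) {f : ℝ → ℝ}
    (hf : Continuous f) :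
    IntervalIntegrable (fun u : ℝ ↦ u ^ a * (1 - u) ^ b * f u) volume 0 1 :=
  (intervalIntegrable_rpow_mul_one_sub_rpow ha hb).mul_continuousOn hf.continuousOn

lemma jacobiInt_one (ha : -1 < a) (hb : -1 < b) :
    jacobiInt a b 1 = Gamma (a + 1) * Gamma (b + 1) / Gamma (a + b + 2) := by
  have hbeta := ProbabilityTheory.beta_eq_betaIntegralReal (a + 1) (b + 1)
    (by linarith) (by linarith)
  rw [ProbabilityTheory.beta, show a + 1 + (b + 1) = a + b + 2 by ring] at hbeta
  rw [hbeta, Complex.betaIntegral, intervalIntegral.integral_congr fun u hu ↦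
    ofReal_cpow_mul_one_sub_cpow a b (by rwa [uIcc_of_le zero_le_one] at hu),
    intervalIntegral.integral_ofReal, Complex.ofReal_re]
  simp [jacobiInt]

lemma jacobiInt_add (ha : -1 < a) (hb : -1 < b) (p q : ℝ[X]) :
    jacobiInt a b (p + q) = jacobiInt a b p + jacobiInt a b q := by
  simp only [jacobiInt, eval_add, mul_add]
  exact intervalIntegral.integral_add (intervalIntegrable_jacobiWeight_mul ha hb p.continuous)
    (intervalIntegrable_jacobiWeight_mul ha hb q.continuous)

lemma jacobiInt_C_mul (a b c : ℝ) (p : ℝ[X]) :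
    jacobiInt a b (C c * p) = c * jacobiInt a b p := by
  simp only [jacobiInt, eval_mul, eval_C, ← intervalIntegral.integral_const_mul,
    mul_left_comm c]

lemma jacobiInt_sub (ha : -1 < a) (hb : -1 < b) (p q : ℝ[X]) :
    jacobiInt a b (p - q) = jacobiInt a b p - jacobiInt a b q := by
  rw [show p - q = p + C (-1) * q by simp [sub_eq_add_neg], jacobiInt_add ha hb, jacobiInt_C_mul]
  ring

lemma jacobiInt_sum (ha : -1 < a) (hb : -1 < b) {ι : Type*} (s : Finset ι) (p : ι → ℝ[X]) :
    jacobiInt a b (∑ i ∈ s, p i) = ∑ i ∈ s, jacobiInt a b (p i) := by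
  classical
  induction s using Finset.induction_on with
  | empty => simp [jacobiInt]
  | insert i s hi ih => rw [Finset.sum_insert hi, Finset.sum_insert hi, jacobiInt_add ha hb, ih]

lemma jacobiInt_nonneg {p : ℝ[X]} (hp : ∀ u ∈ Icc (0 : ℝ) 1, 0 ≤ p.eval u) :
    0 ≤ jacobiInt a b p := by
  refine intervalIntegral.integral_nonneg zero_le_one fun u hu ↦ ?_
  have hu0 : 0 ≤ u := hu.1
  have hu1 : 0 ≤ 1 - u := sub_nonneg.2 hu.2
  have := hp u hu
  positivity

lemma jacobiInt_mul_self_nonneg (a b : ℝ) (p : ℝ[X]) : 0 ≤ jacobiInt a b (p * p) :=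
  jacobiInt_nonneg fun u _ ↦ by simpa using mul_self_nonneg (p.eval u)

lemma jacobiInt_mono (ha : -1 < a) (hb : -1 < b) {p q : ℝ[X]}
    (hpq : ∀ u ∈ Icc (0 : ℝ) 1, p.eval u ≤ q.eval u) : jacobiInt a b p ≤ jacobiInt a b q := by
  rw [← sub_nonneg, ← jacobiInt_sub ha hb]
  exact jacobiInt_nonneg fun u hu ↦ by simpa using hpq u hu

lemma integral_unitInterval_congr {f g : ℝ → ℝ} (h : ∀ u ∈ Ioo (0 : ℝ) 1, f u = g u) :
    ∫ u in (0 : ℝ)..1, f u = ∫ u in (0 : ℝ)..1, g u := by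
  rw [intervalIntegral.integral_of_le zero_le_one, intervalIntegral.integral_of_le zero_le_one,
    integral_Ioc_eq_integral_Ioo, integral_Ioc_eq_integral_Ioo]
  exact setIntegral_congr_fun measurableSet_Ioo h

lemma jacobiInt_X_pow_mul (a b : ℝ) (k : ℕ) (p : ℝ[X]) :
    jacobiInt a b (X ^ k * p) = jacobiInt (a + k) b p := by
  refine integral_unitInterval_congr fun u hu ↦ ?_
  rw [eval_mul, eval_pow, eval_X, rpow_add_natCast hu.1.ne']
  ring

lemma jacobiInt_one_sub_X_pow_mul (a b : ℝ) (k : ℕ) (p : ℝ[X]) :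
    jacobiInt a b ((1 - X) ^ k * p) = jacobiInt a (b + k) p := by
  refine integral_unitInterval_congr fun u hu ↦ ?_
  rw [eval_mul, eval_pow, eval_sub, eval_one, eval_X, rpow_add_natCast (sub_pos.2 hu.2).ne']
  ring

lemma jacobiInt_X_mul (a b : ℝ) (p : ℝ[X]) : jacobiInt a b (X * p) = jacobiInt (a + 1) b p := by
  simpa using jacobiInt_X_pow_mul a b 1 p

lemma jacobiInt_one_sub_X_mul (a b : ℝ) (p : ℝ[X]) :
    jacobiInt a b ((1 - X) * p) = jacobiInt a (b + 1) p := by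
  simpa using jacobiInt_one_sub_X_pow_mul a b 1 p

lemma jacobiInt_eq_add (ha : -1 < a) (hb : -1 < b) (p : ℝ[X]) :
    jacobiInt a b p = jacobiInt a (b + 1) p + jacobiInt (a + 1) b p := by
  rw [← jacobiInt_one_sub_X_mul, ← jacobiInt_X_mul, ← jacobiInt_add ha hb]
  congr 1
  ring

lemma hasDerivAt_jacobiWeight_mul (a b : ℝ) (p : ℝ[X]) {u : ℝ} (hu : u ∈ Ioo (0 : ℝ) 1) :
    HasDerivAt (fun u : ℝ ↦ u ^ a * (1 - u) ^ b * p.eval u)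
      (a * (u ^ (a - 1) * (1 - u) ^ b * p.eval u) - b * (u ^ a * (1 - u) ^ (b - 1) * p.eval u) +
        u ^ a * (1 - u) ^ b * (derivative p).eval u) u := by
  have hleft : HasDerivAt (fun u : ℝ ↦ u ^ a) (a * u ^ (a - 1)) u :=
    Real.hasDerivAt_rpow_const (Or.inl hu.1.ne')
  have hright : HasDerivAt (fun u : ℝ ↦ (1 - u) ^ b) (-1 * b * (1 - u) ^ (b - 1)) u :=
    ((hasDerivAt_id u).const_sub 1).rpow_const (Or.inl (sub_pos.2 hu.2).ne')
  refine ((hleft.mul hright).mul (p.hasDerivAt u)).congr_deriv ?_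
  simp only [Pi.mul_apply]
  ring

lemma jacobiInt_derivative (ha : 0 < a) (hb : 0 < b) (p : ℝ[X]) :
    jacobiInt a b (derivative p) = b * jacobiInt a (b - 1) p - a * jacobiInt (a - 1) b p := by
  have hint₁ := intervalIntegrable_jacobiWeight_mul (by linarith : -1 < a - 1)
    (by linarith : -1 < b) p.continuous
  have hint₂ := intervalIntegrable_jacobiWeight_mul (by linarith : -1 < a)
    (by linarith : -1 < b - 1) p.continuous
  have hint₃ := intervalIntegrable_jacobiWeight_mul (by linarith : -1 < a)
    (by linarith : -1 < b) (derivative p).continuous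
  have hcont : Continuous fun u : ℝ ↦ u ^ a * (1 - u) ^ b * p.eval u :=
    ((continuous_id.rpow_const fun _ ↦ Or.inr ha.le).mul
      ((continuous_const.sub continuous_id).rpow_const fun _ ↦ Or.inr hb.le)).mul p.continuous
  have hftc := intervalIntegral.integral_eq_sub_of_hasDerivAt_of_le zero_le_one hcont.continuousOn
    (fun u hu ↦ hasDerivAt_jacobiWeight_mul a b p hu)
    (((hint₁.const_mul a).sub (hint₂.const_mul b)).add hint₃)
  rw [intervalIntegral.integral_add ((hint₁.const_mul a).sub (hint₂.const_mul b)) hint₃,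
    intervalIntegral.integral_sub (hint₁.const_mul a) (hint₂.const_mul b),
    intervalIntegral.integral_const_mul, intervalIntegral.integral_const_mul, sub_self,
    zero_rpow ha.ne', zero_rpow hb.ne', mul_zero, zero_mul, zero_mul, zero_mul, sub_zero] at hftc
  simp only [jacobiInt]
  linarith

end JacobiIntegral

section JacobiOrthogonal

/-- `p` is a (not normalised) Jacobi polynomial of degree `n` for the weight `uᵃ (1 - u)ᵇ` on
`[0, 1]`: it has degree at most `n` and is orthogonal to all polynomials of degree `< n`. -/
structure IsJacobiOrthogonal (a b : ℝ) (n : ℕ) (p : ℝ[X]) : Prop where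
  natDegree_le : p.natDegree ≤ n
  integral_mul_eq_zero : ∀ q : ℝ[X], q.degree < n → jacobiInt a b (p * q) = 0

lemma degree_sub_C_mul_lt {p q : ℝ[X]} {n : ℕ} {c : ℝ} (hp : p.natDegree ≤ n)
    (hq : q.natDegree ≤ n) (hc : q.coeff n = c * p.coeff n) : (q - C c * p).degree < n := by
  rw [degree_lt_iff_coeff_zero]
  intro m hm
  rw [coeff_sub, coeff_C_mul]
  rcases hm.eq_or_lt with rfl | hlt
  · rw [hc, sub_self]
  · rw [coeff_eq_zero_of_natDegree_lt (hq.trans_lt hlt),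
      coeff_eq_zero_of_natDegree_lt (hp.trans_lt hlt), mul_zero, sub_zero]

lemma coeff_X_mul_derivative (p : ℝ[X]) (m : ℕ) : (X * derivative p).coeff m = m * p.coeff m := by
  cases m with
  | zero => simp
  | succ m => rw [coeff_X_mul, coeff_derivative]; push_cast; ring

lemma natDegree_X_mul_derivative_le (p : ℝ[X]) : (X * derivative p).natDegree ≤ p.natDegree := by
  rw [natDegree_le_iff_coeff_eq_zero]
  intro m hm
  rw [coeff_X_mul_derivative, coeff_eq_zero_of_natDegree_lt hm, mul_zero]

variable {a b : ℝ} {n : ℕ} {p : ℝ[X]}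

/-- The adjoint `q ↦ ((a + b + 2) u - (a + 1)) q - u (1 - u) q'` of the derivative, acting from
polynomials with the weight `u^(a+1) (1 - u)^(b+1)` to polynomials with the weight `uᵃ (1 - u)ᵇ`. -/
def jacobiAdjoint (a b : ℝ) (q : ℝ[X]) : ℝ[X] :=
  X * (C (a + b + 2) * q + X * derivative q) - (C (a + 1) * q + X * derivative q)

lemma coeff_zero_jacobiAdjoint (a b : ℝ) (q : ℝ[X]) :
    (jacobiAdjoint a b q).coeff 0 = -((a + 1) * q.coeff 0) := by
  simp [jacobiAdjoint]

lemma coeff_succ_jacobiAdjoint (a b : ℝ) (q : ℝ[X]) (m : ℕ) :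
    (jacobiAdjoint a b q).coeff (m + 1) =
      (a + b + 2 + m) * q.coeff m - (a + m + 2) * q.coeff (m + 1) := by
  rw [jacobiAdjoint, coeff_sub, coeff_X_mul, coeff_add, coeff_add, coeff_C_mul, coeff_C_mul,
    coeff_X_mul_derivative, coeff_X_mul_derivative]
  push_cast
  ring

lemma jacobiInt_derivative_mul (ha : -1 < a) (hb : -1 < b) (p q : ℝ[X]) :
    jacobiInt (a + 1) (b + 1) (derivative p * q) = jacobiInt a b (p * jacobiAdjoint a b q) := by
  have hparts := jacobiInt_derivative (a := a + 1) (b := b + 1) (by linarith) (by linarith) (p * q)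
  rw [derivative_mul, jacobiInt_add (by linarith) (by linarith), add_sub_cancel_right,
    add_sub_cancel_right, ← jacobiInt_X_mul a b, ← jacobiInt_one_sub_X_mul a b,
    ← jacobiInt_one_sub_X_mul (a + 1) b (p * derivative q),
    ← jacobiInt_X_mul a b ((1 - X) * (p * derivative q))] at hparts
  rw [eq_sub_of_add_eq hparts, ← jacobiInt_C_mul, ← jacobiInt_C_mul, ← jacobiInt_sub ha hb,
    ← jacobiInt_sub ha hb]
  congr 1
  simp only [jacobiAdjoint, map_add, map_one, map_ofNat]
  ring

namespace IsJacobiOrthogonal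

lemma integral_mul_eq (h : IsJacobiOrthogonal a b n p) (ha : -1 < a) (hb : -1 < b) {q : ℝ[X]}
    {c : ℝ} (hq : q.natDegree ≤ n) (hc : q.coeff n = c * p.coeff n) :
    jacobiInt a b (p * q) = c * jacobiInt a b (p * p) := by
  rw [← jacobiInt_C_mul, ← sub_eq_zero, ← jacobiInt_sub ha hb,
    ← h.integral_mul_eq_zero _ (degree_sub_C_mul_lt h.natDegree_le hq hc)]
  congr 1
  ring

lemma coeff_derivative_eq_zero (h : IsJacobiOrthogonal a b n p) : (derivative p).coeff n = 0 := by
  rw [coeff_derivative, coeff_eq_zero_of_natDegree_lt (Nat.lt_succ_of_le h.natDegree_le), zero_mul]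

lemma natDegree_derivative_le (h : IsJacobiOrthogonal a b n p) :
    (derivative p).natDegree ≤ n - 1 :=
  (Polynomial.natDegree_derivative_le p).trans (Nat.sub_le_sub_right h.natDegree_le 1)

lemma mul_integral_sq (h : IsJacobiOrthogonal a b n p) (ha : 0 < a) (hb : -1 < b) :
    a * jacobiInt (a - 1) (b + 1) (p * p) = (2 * n + b + 1) * jacobiInt a b (p * p) := by
  have hparts := jacobiInt_derivative ha (by linarith : 0 < b + 1) (p * p)
  have hlead : jacobiInt a b (p * (derivative p - X * derivative p)) =
      -n * jacobiInt a b (p * p) := by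
    refine h.integral_mul_eq (by linarith) hb ((natDegree_sub_le_of_le
      h.natDegree_derivative_le ((natDegree_X_mul_derivative_le p).trans h.natDegree_le)).trans
      (by simp)) ?_
    rw [coeff_sub, h.coeff_derivative_eq_zero, coeff_X_mul_derivative]
    ring
  rw [show derivative (p * p) = C 2 * (p * derivative p) by rw [derivative_mul, C_ofNat]; ring,
    jacobiInt_C_mul, ← jacobiInt_one_sub_X_mul,
    show (1 - X) * (p * derivative p) = p * (derivative p - X * derivative p) by ring, hlead,
    add_sub_cancel_right] at hparts
  linarith

lemma derivative (h : IsJacobiOrthogonal a b n p) (ha : -1 < a) (hb : -1 < b) :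
    IsJacobiOrthogonal (a + 1) (b + 1) (n - 1) (derivative p) where
  natDegree_le := h.natDegree_derivative_le
  integral_mul_eq_zero q hq := by
    rw [jacobiInt_derivative_mul ha hb]
    refine h.integral_mul_eq_zero _ ?_
    rw [degree_lt_iff_coeff_zero] at hq ⊢
    intro m hm
    cases m with
    | zero => rw [coeff_zero_jacobiAdjoint, hq 0 (by omega), mul_zero, neg_zero]
    | succ m =>
      rw [coeff_succ_jacobiAdjoint, hq m (by omega), hq (m + 1) (by omega)]
      ring

lemma integral_derivative_sq (h : IsJacobiOrthogonal a b n p) (ha : -1 < a) (hb : -1 < b) :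
    jacobiInt (a + 1) (b + 1) (Polynomial.derivative p * Polynomial.derivative p) =
      n * (n + a + b + 1) * jacobiInt a b (p * p) := by
  have hcoeff (m : ℕ) (hm : n ≤ m) : (Polynomial.derivative p).coeff m = 0 := by
    rw [coeff_derivative, coeff_eq_zero_of_natDegree_lt (by have := h.natDegree_le; omega),
      zero_mul]
  rw [jacobiInt_derivative_mul ha hb]
  refine h.integral_mul_eq ha hb (natDegree_le_iff_coeff_eq_zero.2 fun m hm ↦ ?_) ?_
  · obtain ⟨m, rfl⟩ := Nat.exists_eq_add_one_of_ne_zero (by omega : m ≠ 0)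
    rw [coeff_succ_jacobiAdjoint, hcoeff m (by omega), hcoeff (m + 1) (by omega)]
    ring
  · cases n with
    | zero => rw [coeff_zero_jacobiAdjoint, hcoeff 0 le_rfl]; simp
    | succ n =>
      rw [coeff_succ_jacobiAdjoint, hcoeff (n + 1) le_rfl, coeff_derivative]
      push_cast
      ring

end IsJacobiOrthogonal

lemma jacobiInt_hardy (ha : 1 < a) (hb : -1 < b) (p : ℝ[X]) :
    (a - 1) / 2 * jacobiInt (a - 2) (b + 1) (p * p) ≤
      (b + 1) * jacobiInt (a - 1) b (p * p) +
        2 / (a - 1) * jacobiInt a (b + 1) (derivative p * derivative p) := by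
  have ha' : 0 < a - 1 := by linarith
  have hparts := jacobiInt_derivative ha' (by linarith : 0 < b + 1) (p * p)
  have hcross : -jacobiInt (a - 1) (b + 1) (derivative (p * p)) ≤
      jacobiInt (a - 2) (b + 1) (C ((a - 1) / 2) * (p * p) +
        C (2 / (a - 1)) * (X ^ 2 * (derivative p * derivative p))) := by
    have hshift := jacobiInt_X_mul (a - 2) (b + 1) (derivative (p * p))
    rw [show a - 2 + 1 = a - 1 by ring] at hshift
    rw [← hshift, ← neg_one_mul, ← jacobiInt_C_mul]
    refine jacobiInt_mono (by linarith) (by linarith) fun u _ ↦ sub_nonneg.1 ?_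
    have hsq : 0 ≤ 2 / (a - 1) * ((a - 1) / 2 * p.eval u + u * (derivative p).eval u) ^ 2 := by
      positivity
    convert hsq using 1
    simp only [derivative_mul, eval_add, eval_mul, eval_C, eval_X, eval_pow]
    field_simp
    ring
  rw [jacobiInt_add (by linarith) (by linarith), jacobiInt_C_mul, jacobiInt_C_mul,
    jacobiInt_X_pow_mul, Nat.cast_ofNat, sub_add_cancel] at hcross
  rw [add_sub_cancel_right, show a - 1 - 1 = a - 2 by ring] at hparts
  linarith

namespace IsJacobiOrthogonal

lemma integral_sq_le (h : IsJacobiOrthogonal a b n p) (ha : 0 < a) (hb : -1 < b)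
    (han : a ≤ 2 * n + b + 1) :
    jacobiInt a b (p * p) ≤ jacobiInt (a - 1) (b + 1) (p * p) :=
  le_of_mul_le_mul_left ((mul_le_mul_of_nonneg_right han
    (jacobiInt_mul_self_nonneg a b p)).trans (h.mul_integral_sq ha hb).ge) ha

lemma integral_derivative_sq_le (h : IsJacobiOrthogonal a b n p) (ha : 0 < a) (hb : -1 < b)
    (habn : a + b + 1 ≤ n) :
    jacobiInt a (b + 1) (Polynomial.derivative p * Polynomial.derivative p) ≤
      4 * n ^ 2 * jacobiInt (a - 1) (b + 1) (p * p) := by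
  set I := jacobiInt (a - 1) (b + 1) (p * p)
  set H := jacobiInt a b (p * p)
  set p' := Polynomial.derivative p
  have hI : 0 ≤ I := jacobiInt_mul_self_nonneg _ _ p
  have hn' : (0 : ℝ) < n := by linarith
  have hn : 1 ≤ n := by exact_mod_cast hn'
  have hIH : a * I = (2 * n + b + 1) * H := h.mul_integral_sq ha hb
  have henergy : jacobiInt (a + 1) (b + 1) (p' * p') = n * (n + a + b + 1) * H :=
    h.integral_derivative_sq (by linarith) hb
  have hsum : jacobiInt a (b + 1) (p' * p') =
      jacobiInt a (b + 1 + 1) (p' * p') + jacobiInt (a + 1) (b + 1) (p' * p') :=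
    jacobiInt_eq_add (by linarith) (by linarith) _
  have hIH' : (a + 1) * jacobiInt a (b + 1 + 1) (p' * p') =
      (2 * n + b) * jacobiInt (a + 1) (b + 1) (p' * p') := by
    have := (h.derivative (by linarith) hb).mul_integral_sq (by linarith) (by linarith)
    rw [add_sub_cancel_right, Nat.cast_sub hn] at this
    rw [this]
    push_cast
    ring
  have hid : (a + 1) * (2 * n + b + 1) * jacobiInt a (b + 1) (p' * p') =
      (2 * n + a + b + 1) * (n * (n + a + b + 1)) * (a * I) := by
    linear_combination (a + 1) * (2 * n + b + 1) * hsum + (2 * n + b + 1) * hIH' +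
      (2 * n + a + b + 1) * (2 * n + b + 1) * henergy -
      (2 * n + a + b + 1) * (n * (n + a + b + 1)) * hIH
  have hcoeff : (2 * n + a + b + 1) * (n * (n + a + b + 1)) ≤
      2 * (2 * n + b + 1) * (n * (2 * n)) := by
    have : 0 ≤ n + a + b + 1 := by linarith
    gcongr ?_ * (_ * ?_) <;> linarith
  refine le_of_mul_le_mul_left (a := (a + 1) * (2 * n + b + 1)) ?_ (by nlinarith)
  calc (a + 1) * (2 * n + b + 1) * jacobiInt a (b + 1) (p' * p')
      ≤ 2 * (2 * n + b + 1) * (n * (2 * n)) * ((a + 1) * I) := by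
        rw [hid]
        gcongr
        · have : 0 ≤ 2 * n + b + 1 := by linarith
          positivity
        · linarith
    _ = (a + 1) * (2 * n + b + 1) * (4 * n ^ 2 * I) := by ring

lemma integral_sq_le_mul (h : IsJacobiOrthogonal a b n p) (ha : 1 < a) (hb : -1 < b)
    (hab : b + 2 ≤ a) (habn : a + b + 1 ≤ n) :
    jacobiInt (a - 2) (b + 1) (p * p) ≤
      (4 + 16 * (n / (a - 1)) ^ 2) * jacobiInt (a - 1) (b + 1) (p * p) := by
  set I := jacobiInt (a - 1) (b + 1) (p * p)
  have ha' : 0 < a - 1 := by linarith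
  have hI : 0 ≤ I := jacobiInt_mul_self_nonneg _ _ p
  have hsplit : jacobiInt (a - 1) b (p * p) = I + jacobiInt a b (p * p) := by
    rw [jacobiInt_eq_add (by linarith) hb, sub_add_cancel]
  have hle : jacobiInt (a - 1) b (p * p) ≤ 2 * I := by
    linarith [h.integral_sq_le (by linarith) hb (by linarith)]
  refine le_of_mul_le_mul_left (a := (a - 1) / 2) ?_ (by positivity)
  calc (a - 1) / 2 * jacobiInt (a - 2) (b + 1) (p * p)
      ≤ (a - 1) * (2 * I) + 2 / (a - 1) * (4 * n ^ 2 * I) := by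
        refine (jacobiInt_hardy ha hb p).trans ?_
        gcongr
        · rw [hsplit]
          exact add_nonneg hI (jacobiInt_mul_self_nonneg _ _ p)
        · linarith
        · exact h.integral_derivative_sq_le (by linarith) hb habn
    _ = (a - 1) / 2 * ((4 + 16 * (n / (a - 1)) ^ 2) * I) := by
        field_simp
        ring

end IsJacobiOrthogonal

end JacobiOrthogonal

section ShiftedJacobi

lemma Gamma_add_natCast {x : ℝ} (hx : 0 < x) (j : ℕ) :
    Gamma (x + j) = Gamma x * (ascPochhammer ℝ j).eval x := by
  induction j with
  | zero => simp
  | succ j ih =>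
    rw [ascPochhammer_succ_eval, ← mul_assoc, ← ih, Nat.cast_succ, ← add_assoc,
      Real.Gamma_add_one (by positivity), mul_comm]

lemma neg_one_pow_mul_neg_one_pow_sub {n m : ℕ} (h : m ≤ n) :
    (-1 : ℝ) ^ n * (-1) ^ (n - m) = (-1) ^ m := by
  obtain ⟨k, rfl⟩ := Nat.exists_eq_add_of_le h
  rw [Nat.add_sub_cancel_left, pow_add, mul_assoc, ← mul_pow]
  simp

lemma sum_neg_one_pow_mul_choose_mul_eval {n : ℕ} {q : ℝ[X]} (hq : q.natDegree < n) :
    ∑ m ∈ Finset.range (n + 1), (-1 : ℝ) ^ m * n.choose m * q.eval (m : ℝ) = 0 := by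
  have hdiff := congrFun (Polynomial.fwdDiff_iter_eq_zero_of_degree_lt hq) 0
  rw [fwdDiff_iter_eq_sum_shift, Pi.zero_apply] at hdiff
  rw [← mul_zero ((-1 : ℝ) ^ n), ← hdiff, Finset.mul_sum]
  refine Finset.sum_congr rfl fun m hm ↦ ?_
  rw [← neg_one_pow_mul_neg_one_pow_sub (Finset.mem_range_succ_iff.1 hm)]
  simp only [zero_add, nsmul_eq_mul, mul_one, zsmul_eq_mul]
  push_cast
  ring

lemma one_sub_X_pow_eq_sum (n : ℕ) :
    (1 - X : ℝ[X]) ^ n =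
      ∑ m ∈ Finset.range (n + 1), C ((-1 : ℝ) ^ m * n.choose m) * (X ^ m * 1) := by
  rw [show (1 - X : ℝ[X]) = -X + 1 by ring, add_pow]
  refine Finset.sum_congr rfl fun m _ ↦ ?_
  rw [neg_pow]
  simp only [map_mul, map_pow, map_neg, map_one, map_natCast, one_pow]
  ring

lemma sum_neg_one_pow_mul_choose_mul_Gamma_div {z : ℝ} (hz : 0 < z) (n : ℕ) :
    ∑ m ∈ Finset.range (n + 1),
      (-1 : ℝ) ^ m * n.choose m * (Gamma (z + m) / Gamma (z + m + 1)) =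
        Gamma z * n.factorial / Gamma (z + n + 1) := by
  have hz' : -1 < z - 1 := by linarith
  have hbeta : jacobiInt (z - 1) 0 ((1 - X) ^ n * 1) =
      Gamma z * n.factorial / Gamma (z + n + 1) := by
    rw [jacobiInt_one_sub_X_pow_mul, zero_add,
      jacobiInt_one hz' (by linarith), sub_add_cancel,
      Gamma_nat_eq_factorial]
    congr 2
    ring
  rw [← hbeta, mul_one, one_sub_X_pow_eq_sum, jacobiInt_sum hz' (by norm_num)]
  refine Finset.sum_congr rfl fun m _ ↦ ?_
  rw [jacobiInt_C_mul, jacobiInt_X_pow_mul,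
    jacobiInt_one (by linarith) (by norm_num)]
  simp only [zero_add, add_zero, Gamma_one, mul_one]
  congr 3 <;> ring

lemma coeff_one_sub_X_pow (n : ℕ) : ((1 - X : ℝ[X]) ^ n).coeff n = (-1) ^ n := by
  have h := coeff_pow_of_natDegree_le (m := n) (n := 1) (p := (1 - X : ℝ[X]))
    ((natDegree_sub_le _ _).trans (by simp))
  rwa [mul_one, coeff_sub, coeff_X_one, coeff_one, if_neg one_ne_zero, zero_sub] at h

lemma natDegree_one_sub_X_pow_le (n : ℕ) : ((1 - X : ℝ[X]) ^ n).natDegree ≤ n :=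
  (natDegree_pow_le_of_le n ((natDegree_sub_le (1 : ℝ[X]) X).trans (by simp))).trans
    (mul_one n).le

lemma sum_one_sub_X_pow_eq {q : ℝ[X]} {n : ℕ} (hq : q.degree < n) :
    ∑ k ∈ Finset.range n, C ((-1) ^ k * (taylor 1 q).coeff k) * (1 - X) ^ k = q := by
  conv_rhs => rw [← sum_taylor_eq q 1, Polynomial.sum_def]
  rw [← degree_taylor q 1] at hq
  refine (Finset.sum_subset_zero_on_sdiff (fun k hk ↦ ?_) (fun k hk ↦ ?_) fun k _ ↦ ?_).symm
  · exact Finset.mem_range.2 (by exact_mod_cast (le_degree_of_mem_supp k hk).trans_lt hq)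
  · rw [notMem_support_iff.1 (Finset.mem_sdiff.1 hk).2, mul_zero, C_0, zero_mul]
  · rw [show (X - C 1 : ℝ[X]) = C (-1) * (1 - X) by simp, mul_pow, ← C_pow, ← mul_assoc, ← C_mul,
      mul_comm ((-1 : ℝ) ^ k)]

/-- The multiple `∑ₘ (-1)ᵐ (n choose m) Γ(α+β+n+m+1)/Γ(α+m+1) uᵐ` of the Jacobi polynomial
`P_n^{(α,β)}(t)`, in the variable `u = (1 - t) / 2`. -/
def shiftedJacobi (α β : ℝ) (n : ℕ) : ℝ[X] :=
  ∑ m ∈ Finset.range (n + 1),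
    C ((-1) ^ m * n.choose m * (Gamma (α + β + n + m + 1) / Gamma (α + m + 1))) * X ^ m

variable {α β : ℝ}

lemma natDegree_shiftedJacobi_le (α β : ℝ) (n : ℕ) : (shiftedJacobi α β n).natDegree ≤ n :=
  natDegree_sum_le_of_forall_le _ _ fun m hm ↦
    (natDegree_C_mul_X_pow_le _ m).trans (Finset.mem_range_succ_iff.1 hm)

lemma coeff_shiftedJacobi (α β : ℝ) (n : ℕ) :
    (shiftedJacobi α β n).coeff n =
      Gamma (α + β + 2 * n + 1) / Gamma (α + n + 1) * ((1 - X : ℝ[X]) ^ n).coeff n := by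
  rw [coeff_one_sub_X_pow]
  simp only [shiftedJacobi, finsetSum_coeff, coeff_C_mul, coeff_X_pow, mul_ite, mul_one, mul_zero,
    Finset.sum_ite_eq, Finset.mem_range, lt_add_iff_pos_right, zero_lt_one, if_true,
    Nat.choose_self, Nat.cast_one]
  ring_nf

lemma eval_zero_shiftedJacobi (α β : ℝ) (n : ℕ) :
    (shiftedJacobi α β n).eval 0 = Gamma (α + β + n + 1) / Gamma (α + 1) := by
  rw [← coeff_zero_eq_eval_zero]
  simp [shiftedJacobi, coeff_X_pow]

lemma jacobiInt_shiftedJacobi_mul_one_sub_X_pow (hα : -1 < α) (hβ : -1 < β) (n k : ℕ) :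
    jacobiInt α β (shiftedJacobi α β n * (1 - X) ^ k) =
      Gamma (β + k + 1) * ∑ m ∈ Finset.range (n + 1), (-1) ^ m * n.choose m *
        (Gamma (α + β + n + m + 1) / Gamma (α + β + k + m + 2)) := by
  rw [shiftedJacobi, Finset.sum_mul, jacobiInt_sum hα hβ, Finset.mul_sum]
  refine Finset.sum_congr rfl fun m _ ↦ ?_
  rw [mul_assoc, jacobiInt_C_mul, jacobiInt_X_pow_mul, ← mul_one ((1 - X : ℝ[X]) ^ k),
    jacobiInt_one_sub_X_pow_mul, jacobiInt_one (by linarith) (by linarith),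
    show α + m + (β + k) + 2 = α + β + k + m + 2 by ring]
  have hΓ : Gamma (α + m + 1) ≠ 0 := (Gamma_pos_of_pos (by linarith)).ne'
  field_simp

lemma jacobiInt_shiftedJacobi_mul_one_sub_X_pow_of_lt (hα : -1 < α) (hβ : -1 < β) {n k : ℕ}
    (hk : k < n) : jacobiInt α β (shiftedJacobi α β n * (1 - X) ^ k) = 0 := by
  obtain ⟨j, rfl⟩ := Nat.exists_eq_add_of_lt hk
  have hdeg : ((ascPochhammer ℝ j).comp (X + C (α + β + k + 2))).natDegree < k + j + 1 := by
    rw [natDegree_comp, ascPochhammer_natDegree, natDegree_X_add_C]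
    omega
  rw [jacobiInt_shiftedJacobi_mul_one_sub_X_pow hα hβ, ← mul_zero (Gamma (β + k + 1)),
    ← sum_neg_one_pow_mul_choose_mul_eval hdeg]
  congr 1
  refine Finset.sum_congr rfl fun m _ ↦ ?_
  have hpos : 0 < α + β + k + m + 2 := by linarith
  rw [eval_comp, eval_add, eval_X, eval_C,
    show α + β + ((k + j + 1 : ℕ) : ℝ) + m + 1 = α + β + k + m + 2 + j by push_cast; ring,
    Gamma_add_natCast hpos, mul_div_cancel_left₀ _ (Gamma_pos_of_pos hpos).ne',
    show (m : ℝ) + (α + β + k + 2) = α + β + k + m + 2 by ring]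

lemma isJacobiOrthogonal_shiftedJacobi (hα : -1 < α) (hβ : -1 < β) (n : ℕ) :
    IsJacobiOrthogonal α β n (shiftedJacobi α β n) where
  natDegree_le := natDegree_shiftedJacobi_le α β n
  integral_mul_eq_zero q hq := by
    rw [← sum_one_sub_X_pow_eq hq, Finset.mul_sum, jacobiInt_sum hα hβ]
    refine Finset.sum_eq_zero fun k hk ↦ ?_
    rw [mul_left_comm, jacobiInt_C_mul,
      jacobiInt_shiftedJacobi_mul_one_sub_X_pow_of_lt hα hβ (Finset.mem_range.1 hk), mul_zero]

lemma jacobiInt_shiftedJacobi_mul_self (hα : -1 < α) (hβ : -1 < β) (hαβ : 0 < α + β + 1) (n : ℕ) :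
    jacobiInt α β (shiftedJacobi α β n * shiftedJacobi α β n) =
      n.factorial * Gamma (β + n + 1) * Gamma (α + β + n + 1) /
        (Gamma (α + n + 1) * (α + β + 2 * n + 1)) := by
  have hlead := (isJacobiOrthogonal_shiftedJacobi hα hβ n).integral_mul_eq_zero _
    (degree_sub_C_mul_lt (natDegree_one_sub_X_pow_le n) (natDegree_shiftedJacobi_le α β n)
      (coeff_shiftedJacobi α β n))
  rw [mul_sub, jacobiInt_sub hα hβ, sub_eq_zero, mul_left_comm, jacobiInt_C_mul,
    jacobiInt_shiftedJacobi_mul_one_sub_X_pow hα hβ] at hlead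
  have hsum := sum_neg_one_pow_mul_choose_mul_Gamma_div (z := α + β + n + 1) (by linarith) n
  have hΓ : Gamma (α + β + n + 1 + n + 1) = (α + β + 2 * n + 1) * Gamma (α + β + 2 * n + 1) := by
    rw [← Gamma_add_one (by linarith)]
    ring_nf
  simp only [show ∀ m : ℕ, α + β + n + m + 1 = α + β + n + 1 + m from fun m ↦ by ring,
    show ∀ m : ℕ, α + β + n + m + 2 = α + β + n + 1 + m + 1 from fun m ↦ by ring, hsum, hΓ]
    at hlead
  have hΓ₁ : Gamma (α + n + 1) ≠ 0 := (Gamma_pos_of_pos (by linarith)).ne'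
  have hΓ₂ : Gamma (α + β + 2 * n + 1) ≠ 0 := (Gamma_pos_of_pos (by linarith)).ne'
  have hne : α + β + 2 * n + 1 ≠ 0 := by linarith
  rw [hlead]
  field_simp

end ShiftedJacobi

section ReproducingKernel

namespace IsJacobiOrthogonal

variable {a b c : ℝ} {n : ℕ} {p : ℝ[X]}

lemma C_mul (h : IsJacobiOrthogonal a b n p) (c : ℝ) : IsJacobiOrthogonal a b n (C c * p) where
  natDegree_le := (natDegree_C_mul_le c p).trans h.natDegree_le
  integral_mul_eq_zero q hq := by
    rw [mul_assoc, jacobiInt_C_mul, h.integral_mul_eq_zero q hq, mul_zero]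

lemma coeff_ne_zero (h : IsJacobiOrthogonal a b n p) (hp : jacobiInt a b (p * p) ≠ 0) :
    p.coeff n ≠ 0 := fun hcoeff ↦ hp <| h.integral_mul_eq_zero p <| by
  simpa using degree_sub_C_mul_lt (c := 0) h.natDegree_le h.natDegree_le (by simp [hcoeff])

end IsJacobiOrthogonal

variable {a b c : ℝ}

lemma degree_sum_C_mul_lt {p : ℕ → ℝ[X]} (hp : ∀ l, (p l).natDegree ≤ l) (v : ℕ → ℝ) (n : ℕ) :
    (∑ l ∈ Finset.range n, C (v l) * p l).degree < n := by
  refine (degree_sum_le _ _).trans_lt ((Finset.sup_lt_iff (WithBot.bot_lt_coe n)).2 fun l hl ↦ ?_)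
  refine (degree_le_of_natDegree_le ((natDegree_C_mul_le _ _).trans (hp l))).trans_lt ?_
  exact Nat.cast_lt.2 (Finset.mem_range.1 hl)

lemma jacobiInt_sum_eval_mul (ha : -1 < a) (hb : -1 < b) {p : ℕ → ℝ[X]}
    (hp : ∀ l, IsJacobiOrthogonal a b l (p l)) (hc : c ≠ 0)
    (hnorm : ∀ l, jacobiInt a b (p l * p l) = c) (x : ℝ) {n : ℕ} {q : ℝ[X]} (hq : q.degree < n) :
    jacobiInt a b ((∑ l ∈ Finset.range n, C ((p l).eval x) * p l) * q) = c * q.eval x := by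
  induction n generalizing q with
  | zero => simp_all [jacobiInt]
  | succ n ih =>
    set K := ∑ l ∈ Finset.range n, C ((p l).eval x) * p l with hK
    set k := q.coeff n / (p n).coeff n
    have hpn : (p n).coeff n ≠ 0 := (hp n).coeff_ne_zero (by rwa [hnorm])
    have hqn : q.natDegree ≤ n := natDegree_le_of_degree_le (Order.lt_succ_iff.1 hq)
    have hqk : q.coeff n = k * (p n).coeff n := (div_mul_cancel₀ _ hpn).symm
    have hdeg : (q - C k * p n).degree < n := degree_sub_C_mul_lt (hp n).natDegree_le hqn hqk
    have hKp : jacobiInt a b (K * (C k * p n)) = 0 := by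
      rw [mul_left_comm, jacobiInt_C_mul, mul_comm K, (hp n).integral_mul_eq_zero K
        (degree_sum_C_mul_lt (fun l ↦ (hp l).natDegree_le) _ n), mul_zero]
    have hKq : jacobiInt a b (K * q) = c * (q - C k * p n).eval x := by
      rw [← ih hdeg, mul_sub, jacobiInt_sub ha hb, hKp, sub_zero]
    rw [Finset.sum_range_succ, ← hK, add_mul, jacobiInt_add ha hb, hKq, mul_assoc,
      jacobiInt_C_mul, (hp n).integral_mul_eq ha hb hqn hqk, hnorm]
    simp only [eval_sub, eval_mul, eval_C]
    ring

variable {α β : ℝ}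

/-- The orthonormalised Jacobi polynomial `p_n^{(α,β)}(t)` in the variable `u = (1 - t) / 2`. -/
def orthonormalJacobi (α β : ℝ) (n : ℕ) : ℝ[X] :=
  C (√((2 * n + α + β + 1) / 2 ^ (α + β + 1) *
      (Gamma (n + α + β + 1) * n.factorial / (Gamma (n + α + 1) * Gamma (n + β + 1)))) *
    (Gamma (α + n + 1) / (n.factorial * Gamma (α + β + n + 1)))) * shiftedJacobi α β n

lemma jacobiP_eq_eval (α β : ℝ) (n : ℕ) (t : ℝ) :
    jacobiP α β n t = (orthonormalJacobi α β n).eval ((1 - t) / 2) := by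
  rw [orthonormalJacobi, eval_mul, eval_C, jacobiP, shiftedJacobi, eval_finsetSum]
  congr 1
  refine Finset.sum_congr rfl fun m _ ↦ ?_
  rw [eval_mul, eval_C, eval_pow, eval_X, show (t - 1) / 2 = -1 * ((1 - t) / 2) by ring, mul_pow]
  ring

lemma isJacobiOrthogonal_orthonormalJacobi (hα : -1 < α) (hβ : -1 < β) (n : ℕ) :
    IsJacobiOrthogonal α β n (orthonormalJacobi α β n) :=
  (isJacobiOrthogonal_shiftedJacobi hα hβ n).C_mul _

lemma orthonormalJacobi_mul_self (hα : -1 < α) (hβ : -1 < β) (hαβ : 0 < α + β + 1) (n : ℕ) :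
    orthonormalJacobi α β n * orthonormalJacobi α β n =
      C ((α + β + 2 * n + 1) / 2 ^ (α + β + 1) *
        (Gamma (α + n + 1) / (n.factorial * Gamma (β + n + 1) * Gamma (α + β + n + 1)))) *
      (shiftedJacobi α β n * shiftedJacobi α β n) := by
  have hΓ₁ : 0 < Gamma (α + n + 1) := Gamma_pos_of_pos (by linarith)
  have hΓ₂ : 0 < Gamma (β + n + 1) := Gamma_pos_of_pos (by linarith)
  have hΓ₃ : 0 < Gamma (α + β + n + 1) := Gamma_pos_of_pos (by linarith)
  have hpos : 0 < α + β + 2 * n + 1 := by linarith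
  rw [orthonormalJacobi, mul_mul_mul_comm, ← C_mul, mul_mul_mul_comm,
    show 2 * n + α + β + 1 = α + β + 2 * n + 1 by ring,
    show n + α + β + 1 = α + β + n + 1 by ring, show n + α + 1 = α + n + 1 by ring,
    show n + β + 1 = β + n + 1 by ring, Real.mul_self_sqrt (by positivity)]
  congr 2
  field_simp

lemma jacobiInt_orthonormalJacobi_mul_self (hα : -1 < α) (hβ : -1 < β) (hαβ : 0 < α + β + 1)
    (n : ℕ) :
    jacobiInt α β (orthonormalJacobi α β n * orthonormalJacobi α β n) = 1 / 2 ^ (α + β + 1) := by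
  have hΓ₁ : 0 < Gamma (α + n + 1) := Gamma_pos_of_pos (by linarith)
  have hΓ₂ : 0 < Gamma (β + n + 1) := Gamma_pos_of_pos (by linarith)
  have hΓ₃ : 0 < Gamma (α + β + n + 1) := Gamma_pos_of_pos (by linarith)
  have hpos : 0 < α + β + 2 * n + 1 := by linarith
  rw [orthonormalJacobi_mul_self hα hβ hαβ, jacobiInt_C_mul,
    jacobiInt_shiftedJacobi_mul_self hα hβ hαβ]
  field_simp

/-- The kernel `K_n^{(α,β)}(t)` in the variable `u = (1 - t) / 2`. -/
def jacobiKernel (α β : ℝ) (n : ℕ) : ℝ[X] :=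
  ∑ l ∈ Finset.range n, C ((orthonormalJacobi α β l).eval 0) * orthonormalJacobi α β l

lemma jacobiK_eq_eval (α β : ℝ) (n : ℕ) (t : ℝ) :
    jacobiK α β n t = (jacobiKernel α β n).eval ((1 - t) / 2) := by
  simp [jacobiK, jacobiKernel, eval_finsetSum, jacobiP_eq_eval]

lemma degree_jacobiKernel_lt (hα : -1 < α) (hβ : -1 < β) (n : ℕ) :
    (jacobiKernel α β n).degree < n :=
  degree_sum_C_mul_lt (fun l ↦ (isJacobiOrthogonal_orthonormalJacobi hα hβ l).natDegree_le) _ n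

lemma jacobiInt_jacobiKernel_mul (hα : -1 < α) (hβ : -1 < β) (hαβ : 0 < α + β + 1) {n : ℕ}
    {q : ℝ[X]} (hq : q.degree < n) :
    jacobiInt α β (jacobiKernel α β n * q) = 1 / 2 ^ (α + β + 1) * q.eval 0 :=
  jacobiInt_sum_eval_mul hα hβ (isJacobiOrthogonal_orthonormalJacobi hα hβ) (by positivity)
    (jacobiInt_orthonormalJacobi_mul_self hα hβ hαβ) 0 hq

end ReproducingKernel

section GammaEstimates

lemma rpow_mul_Gamma_le {x s : ℝ} (hx : 0 < x) (hs : 1 ≤ s) :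
    x ^ s * Gamma x ≤ Gamma (x + s) := by
  have hsecant := convexOn_log_Gamma.secant_mono (a := x) (x := x + 1) (y := x + s) (mem_Ioi.2 hx)
    (mem_Ioi.2 (by linarith)) (mem_Ioi.2 (by linarith)) (by linarith) (by linarith) (by linarith)
  have hΓ := Gamma_pos_of_pos hx
  have hΓ' := Gamma_pos_of_pos (by linarith : 0 < x + s)
  simp only [Function.comp_apply, add_sub_cancel_left, div_one] at hsecant
  rw [Gamma_add_one hx.ne', log_mul hx.ne' hΓ.ne', add_sub_cancel_right,
    le_div_iff₀ (by linarith)] at hsecant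
  rw [← log_le_log_iff (by positivity) hΓ', log_mul (by positivity) hΓ.ne', log_rpow hx]
  linarith

lemma Gamma_add_le {x s : ℝ} (hx : 0 < x) (hs : 0 ≤ s) :
    Gamma (x + s) ≤ (x + s) ^ s * Gamma x := by
  rcases hs.eq_or_lt with rfl | hs
  · simp
  have hslope := convexOn_log_Gamma.slope_mono_adjacent (x := x) (y := x + s) (z := x + s + 1)
    (mem_Ioi.2 hx) (mem_Ioi.2 (by linarith)) (by linarith) (by linarith)
  have hΓ := Gamma_pos_of_pos hx
  have hxs : 0 < x + s := by linarith
  have hΓ' := Gamma_pos_of_pos hxs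
  simp only [Function.comp_apply, add_sub_cancel_left, div_one] at hslope
  rw [Gamma_add_one hxs.ne', log_mul hxs.ne' hΓ'.ne', add_sub_cancel_right,
    div_le_iff₀ hs] at hslope
  rw [← log_le_log_iff hΓ' (by positivity), log_mul (by positivity) hΓ.ne', log_rpow hxs]
  linarith

lemma Gamma_natCast_add_sub_one_le {d m : ℕ} (hd : 1 ≤ d) (hm : 1 ≤ m) :
    Gamma ((m : ℝ) + d - 1) ≤ ((m : ℝ) + d) ^ (d - 1) * Gamma m := by
  have hd' : (1 : ℝ) ≤ d := by exact_mod_cast hd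
  have hm' : (1 : ℝ) ≤ m := by exact_mod_cast hm
  have hΓ := Gamma_add_le (x := (m : ℝ)) (s := ((d - 1 : ℕ) : ℝ)) (by linarith) (by positivity)
  rw [rpow_natCast, Nat.cast_sub hd, Nat.cast_one, ← add_sub_assoc] at hΓ
  refine hΓ.trans (mul_le_mul_of_nonneg_right ?_ (Gamma_pos_of_pos (by linarith)).le)
  exact pow_le_pow_left₀ (by linarith) (by linarith) _

end GammaEstimates

section KernelAtOne

/-- The reciprocal of `∫ (u (1 - u)) ^ (d / 2 - 1)` over the unit interval, i.e. the constant in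
the formula which integrates a zonal function over `S^d` in the variable `u = (1 - x·y) / 2`. -/
def zonalConst (d : ℕ) : ℝ := Gamma d / Gamma ((d : ℝ) / 2) ^ 2

lemma zonalConst_pos {d : ℕ} (hd : 1 ≤ d) : 0 < zonalConst d := by
  unfold zonalConst
  positivity

lemma omegaS_div_mul_zonalConst {d : ℕ} (hd : 1 ≤ d) :
    omegaS d / omegaS (d - 1) * zonalConst d = 2 ^ ((d : ℝ) - 1) := by
  have hd' : (1 : ℝ) ≤ d := by exact_mod_cast hd
  have hΓ : 0 < Gamma ((d : ℝ) / 2) := Gamma_pos_of_pos (by linarith)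
  have hduplication := Real.Gamma_mul_Gamma_add_half ((d : ℝ) / 2)
  rw [mul_div_cancel₀ _ two_ne_zero, mul_comm, ← eq_div_iff hΓ.ne'] at hduplication
  have homega : omegaS d = 2 * π ^ ((d : ℝ) / 2) * √π / Gamma ((d : ℝ) / 2 + 1 / 2) := by
    rw [omegaS, show ((d : ℝ) + 1) / 2 = d / 2 + 1 / 2 by ring, rpow_add pi_pos, sqrt_eq_rpow]
    ring
  have homega' : omegaS (d - 1) = 2 * π ^ ((d : ℝ) / 2) / Gamma ((d : ℝ) / 2) := by
    rw [omegaS, Nat.cast_sub hd, Nat.cast_one, sub_add_cancel]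
  have hpow : (2 : ℝ) ^ ((d : ℝ) - 1) * 2 ^ (1 - (d : ℝ)) = 1 := by
    rw [← rpow_add two_pos]
    simp
  rw [homega, homega', zonalConst, hduplication]
  field_simp
  linarith

lemma sphK_one {d : ℕ} (hd : 2 ≤ d) (M : ℕ) : sphK d M 1 =
    ∑ l ∈ Finset.range M,
      (2 * (l : ℝ) + d - 1) * Gamma (l + d - 1) / (l.factorial * Gamma d) := by
  have hd' : (2 : ℝ) ≤ d := by exact_mod_cast hd
  have hκ := zonalConst_pos (by omega : 1 ≤ d)
  rw [sphK, jacobiK, Finset.mul_sum]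
  refine Finset.sum_congr rfl fun l _ ↦ ?_
  have hΓ₃ : 0 < Gamma ((l : ℝ) + d - 1) := Gamma_pos_of_pos (by linarith)
  rw [jacobiP_eq_eval, sub_self, zero_div, ← eval_mul,
    orthonormalJacobi_mul_self (by linarith) (by linarith) (by linarith), eval_mul, eval_C,
    eval_mul, eval_zero_shiftedJacobi, eq_div_of_mul_eq hκ.ne'
    (omegaS_div_mul_zonalConst (by omega)), zonalConst,
    show (d : ℝ) / 2 - 1 + (d / 2 - 1) + 1 = d - 1 by ring,
    show (d : ℝ) / 2 - 1 + (d / 2 - 1) + 2 * l + 1 = 2 * l + d - 1 by ring,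
    show (d : ℝ) / 2 - 1 + (d / 2 - 1) + l + 1 = l + d - 1 by ring,
    show (d : ℝ) / 2 - 1 + l + 1 = d / 2 + l by ring, sub_add_cancel]
  field_simp

lemma sphK_one_pos {d M : ℕ} (hd : 2 ≤ d) (hM : 0 < M) : 0 < sphK d M 1 := by
  have hd' : (2 : ℝ) ≤ d := by exact_mod_cast hd
  rw [sphK_one hd]
  refine Finset.sum_pos (fun l _ ↦ ?_) (Finset.nonempty_range_iff.2 hM.ne')
  have hΓ : 0 < Gamma ((l : ℝ) + d - 1) := Gamma_pos_of_pos (by linarith)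
  have hcoeff : 0 < 2 * (l : ℝ) + d - 1 := by linarith
  positivity

lemma mul_sum_add_pow_le {d : ℕ} (hd : 1 ≤ d) (M : ℕ) :
    d * ∑ l ∈ Finset.range M, ((l : ℝ) + d) ^ (d - 1) ≤ ((M : ℝ) + d) ^ d := by
  induction M with
  | zero => simp
  | succ M ih =>
    have hpos : 0 < (M : ℝ) + d := by positivity
    have hinv : 0 < ((M : ℝ) + d)⁻¹ := by positivity
    have hbernoulli := mul_le_mul_of_nonneg_left
      (one_add_mul_le_pow (a := ((M : ℝ) + d)⁻¹) (by linarith) d)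
      (by positivity : 0 ≤ ((M : ℝ) + d) ^ d)
    calc d * ∑ l ∈ Finset.range (M + 1), ((l : ℝ) + d) ^ (d - 1)
        ≤ ((M : ℝ) + d) ^ d + d * ((M : ℝ) + d) ^ (d - 1) := by
          rw [Finset.sum_range_succ, mul_add]
          gcongr
      _ = ((M : ℝ) + d) ^ d * (1 + d * ((M : ℝ) + d)⁻¹) := by
          rw [← pow_sub_one_mul (by omega : d ≠ 0) ((M : ℝ) + d)]
          field_simp
      _ ≤ (((M : ℝ) + d) * (1 + ((M : ℝ) + d)⁻¹)) ^ d := by rwa [mul_pow]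
      _ = (((M + 1 : ℕ) : ℝ) + d) ^ d := by
          rw [mul_add, mul_inv_cancel₀ hpos.ne']
          push_cast
          ring

lemma sphK_one_le {d : ℕ} (hd : 2 ≤ d) (M : ℕ) :
    sphK d M 1 ≤ 2 * ((M : ℝ) + d) ^ d / (d * Gamma d) := by
  have hd' : (2 : ℝ) ≤ d := by exact_mod_cast hd
  have hterm : ∀ l ∈ Finset.range M,
      (2 * (l : ℝ) + d - 1) * Gamma (l + d - 1) / (l.factorial * Gamma d) ≤
        2 / Gamma d * ((l : ℝ) + d) ^ (d - 1) := by
    intro l _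
    have hΓ_le := Gamma_natCast_add_sub_one_le (d := d - 1) (m := l + 1) (by omega) (by omega)
    push_cast [Nat.cast_sub (by omega : 1 ≤ d)] at hΓ_le
    rw [show (l : ℝ) + 1 + (d - 1) = l + d by ring, Gamma_nat_eq_factorial] at hΓ_le
    rw [div_le_iff₀ (by positivity)]
    calc (2 * (l : ℝ) + d - 1) * Gamma (l + d - 1)
        ≤ (2 * (l + d)) * (((l : ℝ) + d) ^ (d - 1 - 1) * l.factorial) :=
          mul_le_mul (by linarith) hΓ_le (Gamma_pos_of_pos (by linarith)).le (by linarith)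
      _ = 2 / Gamma d * ((l : ℝ) + d) ^ (d - 1) * (l.factorial * Gamma d) := by
          rw [← pow_sub_one_mul (by omega : d - 1 ≠ 0) ((l : ℝ) + d)]
          field_simp
  calc sphK d M 1 ≤ 2 / Gamma d * ∑ l ∈ Finset.range M, ((l : ℝ) + d) ^ (d - 1) := by
        rw [sphK_one hd, Finset.mul_sum]
        exact Finset.sum_le_sum hterm
    _ = 2 * (d * ∑ l ∈ Finset.range M, ((l : ℝ) + d) ^ (d - 1)) / (d * Gamma d) := by
        field_simp
    _ ≤ 2 * ((M : ℝ) + d) ^ d / (d * Gamma d) := by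
        gcongr
        exact mul_sum_add_pow_le (by omega) M

lemma sphK_one_le_exp {d n : ℕ} (hd : 2 ≤ d) (hdn : (d : ℝ) ≤ n) :
    sphK d ((d + 2) * n) 1 ≤ 2 * ((d * n) ^ d * exp 3) / (d * Gamma d) := by
  refine (sphK_one_le hd _).trans ?_
  have hbase : (((d + 2) * n : ℕ) : ℝ) + d ≤ (d * n) * (1 + 3 / d) := by
    have : ((d : ℝ) * n) * (1 + 3 / d) = d * n + 3 * n := by field_simp
    push_cast
    linarith
  have hpow : ((((d + 2) * n : ℕ) : ℝ) + d) ^ d ≤ (d * n) ^ d * exp 3 := by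
    calc ((((d + 2) * n : ℕ) : ℝ) + d) ^ d ≤ ((d * n) * exp (3 / d)) ^ d := by
          refine pow_le_pow_left₀ (by positivity) (hbase.trans ?_) d
          gcongr
          linarith [add_one_le_exp (3 / (d : ℝ))]
      _ = (d * n) ^ d * exp 3 := by
          rw [mul_pow, ← exp_nat_mul]
          congr 2
          field_simp
  gcongr

end KernelAtOne

section LocalizingFactor

variable {α β : ℝ}

lemma rpow_mul_jacobiInt_shiftedJacobi_mul_self_le (hα : 1 ≤ α) (hβ : -1 < β) {N : ℕ}
    (hN : 1 ≤ N) :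
    (N : ℝ) ^ (2 * α) *
        ((α + β + 2 * N + 1) * jacobiInt α β (shiftedJacobi α β N * shiftedJacobi α β N)) ≤
      Gamma (α + β + N + 1) ^ 2 := by
  have hN' : (1 : ℝ) ≤ N := by exact_mod_cast hN
  have hΓβ : 0 < Gamma (β + N + 1) := Gamma_pos_of_pos (by linarith)
  have hΓαβ : 0 < Gamma (α + β + N + 1) := Gamma_pos_of_pos (by linarith)
  have hpos : 0 < α + β + 2 * N + 1 := by linarith
  have hfactorial : (N : ℝ) ^ α * N.factorial ≤ Gamma (α + N + 1) := by
    rw [← Gamma_nat_eq_factorial, show α + N + 1 = N + 1 + α by ring]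
    refine le_trans ?_ (rpow_mul_Gamma_le (by linarith) hα)
    have := Gamma_pos_of_pos (by linarith : (0 : ℝ) < N + 1)
    gcongr
    linarith
  have hΓ_le : (N : ℝ) ^ α * Gamma (β + N + 1) ≤ Gamma (α + β + N + 1) := by
    rw [show α + β + N + 1 = β + N + 1 + α by ring]
    refine le_trans ?_ (rpow_mul_Gamma_le (by linarith) hα)
    gcongr
    linarith
  have hNα : (N : ℝ) ^ (2 * α) = N ^ α * N ^ α := by rw [two_mul, rpow_add (by linarith)]
  rw [jacobiInt_shiftedJacobi_mul_self (by linarith) hβ (by linarith)]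
  calc _ = N ^ α * N.factorial * (N ^ α * Gamma (β + N + 1)) *
        (Gamma (α + β + N + 1) / Gamma (α + N + 1)) := by
        rw [hNα]
        field_simp
    _ ≤ Gamma (α + N + 1) * Gamma (α + β + N + 1) *
        (Gamma (α + β + N + 1) / Gamma (α + N + 1)) := by gcongr
    _ = Gamma (α + β + N + 1) ^ 2 := by field_simp

lemma jacobiInt_shiftedJacobi_mul_self_le (hα : 1 ≤ α) (hβ : -1 < β) {N : ℕ} (hN : 1 ≤ N) :
    jacobiInt (α - 1) (β + 1) (shiftedJacobi α β N * shiftedJacobi α β N) ≤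
      Gamma (α + 1) ^ 2 / (α * (N : ℝ) ^ (2 * α)) * (shiftedJacobi α β N).eval 0 ^ 2 := by
  have hα' : 0 < α := by linarith
  have horth := isJacobiOrthogonal_shiftedJacobi (α := α) (by linarith) hβ N
  have hshift := horth.mul_integral_sq hα' hβ
  have hnorm := rpow_mul_jacobiInt_shiftedJacobi_mul_self_le hα hβ hN
  have hnonneg := jacobiInt_mul_self_nonneg α β (shiftedJacobi α β N)
  rw [eval_zero_shiftedJacobi, div_pow, div_mul_div_cancel₀' (by positivity),
    le_div_iff₀ (by positivity)]
  calc _ = (N : ℝ) ^ (2 * α) *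
        (α * jacobiInt (α - 1) (β + 1) (shiftedJacobi α β N * shiftedJacobi α β N)) := by ring
    _ ≤ (N : ℝ) ^ (2 * α) *
        ((α + β + 2 * N + 1) * jacobiInt α β (shiftedJacobi α β N * shiftedJacobi α β N)) := by
        rw [hshift]
        refine mul_le_mul_of_nonneg_left (mul_le_mul_of_nonneg_right ?_ hnonneg) (by positivity)
        linarith
    _ ≤ _ := hnorm

lemma Gamma_half_add_le {d r : ℝ} (hd : 2 ≤ d) (hr : 0 ≤ r) :
    Gamma (d / 2 + r + 1) ≤ d ^ r * (1 + r) ^ r * (d / 2 * Gamma (d / 2)) := by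
  have hΓ_le := Gamma_add_le (x := d / 2 + 1) (s := r) (by linarith) hr
  rw [Gamma_add_one (by linarith), add_right_comm] at hΓ_le
  rw [← mul_rpow (by linarith) (by linarith)]
  refine hΓ_le.trans ?_
  gcongr
  nlinarith

-- The product of the two kernel factors at `u = 0` loses no power of `d`: the growth
-- `(d n) ^ d / Γ(d + 1)` of `K_{d;(d+2)n}(1)` cancels the decay of the localizing polynomial.
lemma sphK_one_mul_localization_le {d n : ℕ} {r : ℝ} (hd : 2 ≤ d) (hr : 0 ≤ r)
    (hdn : (d : ℝ) ≤ n) :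
    sphK d ((d + 2) * n) 1 * zonalConst d * (Gamma ((d : ℝ) / 2 + r + 1) ^ 2 /
        (((d : ℝ) / 2 + r) * ((d * n : ℕ) : ℝ) ^ (2 * ((d : ℝ) / 2 + r)))) ≤
      exp 3 * (1 + r) ^ (2 * r) * (n : ℝ) ^ (-(2 * r)) := by
  have hd' : (2 : ℝ) ≤ d := by exact_mod_cast hd
  have hn : 0 < (n : ℝ) := by linarith
  have hκ := zonalConst_pos (by omega : 1 ≤ d)
  have hpow : ((d * n : ℕ) : ℝ) ^ (2 * ((d : ℝ) / 2 + r)) =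
      (d * n : ℝ) ^ d * (d ^ r * d ^ r) * (n : ℝ) ^ (2 * r) := by
    push_cast
    rw [show 2 * ((d : ℝ) / 2 + r) = d + 2 * r by ring, rpow_add (by positivity), rpow_natCast,
      mul_rpow (x := (d : ℝ)) (by positivity) hn.le, two_mul,
      rpow_add (x := (d : ℝ)) (by positivity)]
    ring
  have hr_pow : (1 + r) ^ (2 * r) = (1 + r) ^ r * (1 + r) ^ r := by
    rw [two_mul, rpow_add (by linarith)]
  rw [hpow, rpow_neg hn.le, hr_pow]
  calc _ ≤ 2 * ((d * n) ^ d * exp 3) / (d * Gamma d) * zonalConst d *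
      ((d ^ r * (1 + r) ^ r * (d / 2 * Gamma (d / 2))) ^ 2 /
        ((d : ℝ) / 2 * ((d * n : ℝ) ^ d * (d ^ r * d ^ r) * (n : ℝ) ^ (2 * r)))) := by
        gcongr
        · exact sphK_one_le_exp hd hdn
        · exact Gamma_half_add_le hd' hr
        · linarith
    _ = _ := by
        unfold zonalConst
        field_simp

end LocalizingFactor

section Dimension

variable {d m n : ℕ}

lemma dimPi_pos (hd : 1 ≤ d) (hm : 1 ≤ m) : 0 < dimPi d m := by
  have hd' : (1 : ℝ) ≤ d := by exact_mod_cast hd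
  have hm' : (1 : ℝ) ≤ m := by exact_mod_cast hm
  have hΓ₂ : 0 < Gamma ((m : ℝ) + d - 1) := Gamma_pos_of_pos (by linarith)
  have hpos : 0 < 2 * (m : ℝ) + d - 2 := by linarith
  unfold dimPi
  positivity

lemma dimPi_le (hd : 1 ≤ d) (hm : 1 ≤ m) :
    dimPi d m ≤ 2 * ((m : ℝ) + d) ^ d / d.factorial := by
  have hd' : (1 : ℝ) ≤ d := by exact_mod_cast hd
  have hm' : (1 : ℝ) ≤ m := by exact_mod_cast hm
  have hΓ' : 0 < Gamma ((m : ℝ) + d - 1) := Gamma_pos_of_pos (by linarith)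
  calc dimPi d m
      ≤ 2 * ((m : ℝ) + d) * (((m : ℝ) + d) ^ (d - 1) * Gamma m) / (Gamma m * d.factorial) := by
        rw [dimPi, Gamma_nat_eq_factorial]
        gcongr
        · linarith
        · exact Gamma_natCast_add_sub_one_le hd hm
    _ = 2 * ((m : ℝ) + d) ^ d / d.factorial := by
        rw [← pow_sub_one_mul (by omega : d ≠ 0) ((m : ℝ) + d)]
        field_simp

lemma dimPi_le_pow (hd : 3 ≤ d) (hn : 2 ≤ n) :
    dimPi d (2 * (d + 2) * n) ≤ (8 * exp 1 * n) ^ d := by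
  have hd' : (3 : ℝ) ≤ d := by exact_mod_cast hd
  have hn' : (2 : ℝ) ≤ n := by exact_mod_cast hn
  have hfactorial : (d : ℝ) ^ d / d.factorial ≤ exp 1 ^ d := by
    rw [← exp_nat_mul, mul_one]
    exact pow_div_factorial_le_exp d (by positivity) d
  have hbase : ((2 * (d + 2) * n : ℕ) : ℝ) + d ≤ 4 * n * d := by
    push_cast
    nlinarith
  calc dimPi d (2 * (d + 2) * n)
      ≤ 2 * (((2 * (d + 2) * n : ℕ) : ℝ) + d) ^ d / d.factorial :=
        dimPi_le (by omega) (Nat.mul_pos (by omega) (by omega))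
    _ ≤ 2 ^ d * (4 * n * d) ^ d / d.factorial := by
        gcongr
        exact le_self_pow₀ one_le_two (by omega)
    _ = (8 * n) ^ d * ((d : ℝ) ^ d / d.factorial) := by
        rw [← mul_pow, mul_div_assoc', ← mul_pow]
        congr 2
        ring
    _ ≤ (8 * n) ^ d * exp 1 ^ d := by gcongr
    _ = (8 * exp 1 * n) ^ d := by
        rw [← mul_pow]
        congr 1
        ring

lemma rpow_neg_le_dimPi_rpow (hd : 3 ≤ d) (hn : 2 ≤ n) {r : ℝ} (hr : 0 ≤ r) :
    (n : ℝ) ^ (-r) ≤ (8 * exp 1) ^ r * dimPi d (2 * (d + 2) * n) ^ (-(r / (d : ℝ))) := by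
  have hdim : 0 < dimPi d (2 * (d + 2) * n) :=
    dimPi_pos (by omega) (Nat.mul_pos (by omega) (by omega))
  have hn' : 0 < (n : ℝ) := by positivity
  have hd' : (d : ℝ) ≠ 0 := by positivity
  have hroot : dimPi d (2 * (d + 2) * n) ^ (r / (d : ℝ)) ≤ (8 * exp 1) ^ r * (n : ℝ) ^ r :=
    calc _ ≤ ((8 * exp 1 * n) ^ d) ^ (r / (d : ℝ)) := by
          gcongr
          exact dimPi_le_pow hd hn
      _ = (8 * exp 1) ^ r * (n : ℝ) ^ r := by
          rw [← rpow_natCast, ← rpow_mul (by positivity), mul_div_cancel₀ _ hd',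
            mul_rpow (by positivity) hn'.le]
  rw [rpow_neg hn'.le, rpow_neg hdim.le, ← div_eq_mul_inv, le_div_iff₀ (by positivity),
    inv_mul_le_iff₀ (by positivity), mul_comm (_ ^ r)]
  exact hroot

end Dimension

/-- The Euclidean space `ℝ^{d+1}` containing `S^d`. -/
abbrev Ambient (d : ℕ) := EuclideanSpace ℝ (Fin (d + 1))

lemma integral_Ioi_pow_mul_exp_neg_sq (m : ℕ) :
    ∫ t in Ioi (0 : ℝ), t ^ m * exp (-t ^ 2) = Gamma (((m : ℝ) + 1) / 2) / 2 := by
  have h := integral_rpow_mul_exp_neg_rpow (p := 2) (q := m) two_pos (by linarith)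
  simp only [rpow_natCast, rpow_ofNat] at h
  rw [h]
  ring

section Polar

variable {E : Type*} [NormedAddCommGroup E] [NormedSpace ℝ E] [FiniteDimensional ℝ E]
  [Nontrivial E] [MeasurableSpace E] [BorelSpace E]

lemma integral_volumeIoiPow_pow_mul_exp_neg_sq (k m : ℕ) :
    ∫ t : Ioi (0 : ℝ), (t : ℝ) ^ m * exp (-(t : ℝ) ^ 2) ∂Measure.volumeIoiPow k =
      Gamma (((k + m : ℕ) + 1 : ℝ) / 2) / 2 := by
  simp only [Measure.volumeIoiPow, ENNReal.ofReal]
  rw [integral_withDensity_eq_integral_smul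
      (measurable_subtype_coe.pow_const _).real_toNNReal,
    integral_subtype_comap measurableSet_Ioi
      fun t : ℝ ↦ Real.toNNReal (t ^ k) • (t ^ m * exp (-t ^ 2)),
    ← integral_Ioi_pow_mul_exp_neg_sq]
  refine setIntegral_congr_fun measurableSet_Ioi fun t ht ↦ ?_
  rw [mem_Ioi] at ht
  simp only [NNReal.smul_def, Real.coe_toNNReal _ (pow_nonneg ht.le k), smul_eq_mul, pow_add,
    mul_assoc]

lemma integral_mul_exp_neg_norm_sq_of_homogeneous (μ : Measure E) [μ.IsAddHaarMeasure]
    {m : ℕ} {G : E → ℝ} (hG : ∀ ρ : ℝ, 0 < ρ → ∀ z, G (ρ • z) = ρ ^ m * G z) :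
    ∫ z, G z * exp (-‖z‖ ^ 2) ∂μ =
      (∫ y : Metric.sphere (0 : E) 1, G y ∂μ.toSphere) *
        (Gamma (((Module.finrank ℝ E : ℝ) + m) / 2) / 2) := by
  have polar : ∀ z : ({0}ᶜ : Set E), G z * exp (-‖(z : E)‖ ^ 2) =
      G (homeomorphUnitSphereProd E z).1 * (((homeomorphUnitSphereProd E z).2 : ℝ) ^ m *
        exp (-((homeomorphUnitSphereProd E z).2 : ℝ) ^ 2)) := fun z ↦ by
    have hz : 0 < ‖(z : E)‖ := norm_pos_iff.2 z.2
    have scaling := hG ‖(z : E)‖ hz (homeomorphUnitSphereProd E z).1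
    rw [homeomorphUnitSphereProd_apply_fst_coe, smul_inv_smul₀ hz.ne'] at scaling
    rw [homeomorphUnitSphereProd_apply_fst_coe, homeomorphUnitSphereProd_apply_snd_coe, scaling]
    ring
  have hdim : ((Module.finrank ℝ E - 1 + m : ℕ) + 1 : ℝ) = (Module.finrank ℝ E : ℝ) + m := by
    have : 1 ≤ Module.finrank ℝ E := Module.finrank_pos
    push_cast [this]
    ring
  calc ∫ z, G z * exp (-‖z‖ ^ 2) ∂μ
      = ∫ z : ({0}ᶜ : Set E), G z * exp (-‖(z : E)‖ ^ 2) ∂(μ.comap Subtype.val) := by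
        rw [integral_subtype_comap (measurableSet_singleton _).compl
          fun z : E ↦ G z * exp (-‖z‖ ^ 2), restrict_compl_singleton]
    _ = ∫ q : Metric.sphere (0 : E) 1 × Ioi (0 : ℝ), G q.1 * ((q.2 : ℝ) ^ m *
          exp (-(q.2 : ℝ) ^ 2)) ∂(μ.toSphere.prod
            (Measure.volumeIoiPow (Module.finrank ℝ E - 1))) := by
        simp_rw [polar]
        exact μ.measurePreserving_homeomorphUnitSphereProd.integral_comp
          (Homeomorph.measurableEmbedding _) (fun q : Metric.sphere (0 : E) 1 × Ioi (0 : ℝ) ↦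
            G q.1 * ((q.2 : ℝ) ^ m * exp (-(q.2 : ℝ) ^ 2)))
    _ = _ := by
        rw [integral_prod_mul (fun y : Metric.sphere (0 : E) 1 ↦ G y)
          (fun t : Ioi (0 : ℝ) ↦ (t : ℝ) ^ m * exp (-(t : ℝ) ^ 2)),
          integral_volumeIoiPow_pow_mul_exp_neg_sq, hdim]

end Polar

/-- The moment `∫ t^k e^{-t²} dt` of the Gaussian weight on the line. -/
def gaussianMoment (k : ℕ) : ℝ := ∫ t : ℝ, t ^ k * exp (-t ^ 2)

lemma gaussianMoment_of_odd {k : ℕ} (hk : Odd k) : gaussianMoment k = 0 := by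
  have h := integral_neg_eq_self (fun t : ℝ ↦ t ^ k * exp (-t ^ 2)) volume
  simp only [hk.neg_pow, even_two.neg_pow, neg_mul, integral_neg] at h
  unfold gaussianMoment
  linarith

lemma gaussianMoment_of_even {k : ℕ} (hk : Even k) :
    gaussianMoment k = Gamma (((k : ℝ) + 1) / 2) := by
  have h := integral_comp_abs (f := fun t : ℝ ↦ t ^ k * exp (-t ^ 2))
  simp only [hk.pow_abs, sq_abs] at h
  rw [gaussianMoment, h, integral_Ioi_pow_mul_exp_neg_sq]
  ring

lemma gaussianMoment_zero : gaussianMoment 0 = √π := by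
  rw [gaussianMoment_of_even Even.zero, ← Gamma_one_half_eq]
  norm_num

lemma gaussianMoment_add_two (k : ℕ) :
    gaussianMoment (k + 2) = ((k : ℝ) + 1) / 2 * gaussianMoment k := by
  rcases Nat.even_or_odd k with hk | hk
  · rw [gaussianMoment_of_even hk, gaussianMoment_of_even (hk.add even_two),
      ← Gamma_add_one (by positivity)]
    push_cast
    congr 1
    ring
  · rw [gaussianMoment_of_odd hk, gaussianMoment_of_odd (hk.add_even even_two), mul_zero]

lemma integral_prod_inner_pow_mul_exp {ι E : Type*} [Fintype ι] [NormedAddCommGroup E]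
    [InnerProductSpace ℝ E] [MeasurableSpace E] [BorelSpace E] [FiniteDimensional ℝ E]
    (b : OrthonormalBasis ι ℝ E) (a : ι → ℕ) :
    ∫ z, (∏ i, ⟪b i, z⟫ ^ a i) * exp (-‖z‖ ^ 2) = ∏ i, gaussianMoment (a i) := by
  have coord := (PiLp.volume_preserving_toLp ι).integral_comp
    (MeasurableEquiv.toLp 2 _).measurableEmbedding
    (fun z : EuclideanSpace ℝ ι ↦
      (∏ i, ⟪b i, b.repr.symm z⟫ ^ a i) * exp (-‖b.repr.symm z‖ ^ 2))
  rw [← b.measurePreserving_repr_symm.integral_comp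
    b.repr.symm.toHomeomorph.measurableEmbedding]
  refine coord.symm.trans ?_
  simp only [gaussianMoment]
  rw [← integral_fintype_prod_volume_eq_prod (fun i (t : ℝ) ↦ t ^ a i * exp (-t ^ 2))]
  congr 1 with z
  simp [Finset.prod_mul_distrib, ← exp_sum, ← b.repr_apply_apply, EuclideanSpace.norm_sq_eq]

lemma integral_toSphere_prod_inner_pow {ι E : Type*} [Fintype ι] [NormedAddCommGroup E]
    [InnerProductSpace ℝ E] [MeasurableSpace E] [BorelSpace E] [FiniteDimensional ℝ E]
    [Nontrivial E] (b : OrthonormalBasis ι ℝ E) (a : ι → ℕ) :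
    (∫ y : Metric.sphere (0 : E) 1, ∏ i, ⟪b i, (y : E)⟫ ^ a i ∂(volume : Measure E).toSphere) *
      (Gamma (((Fintype.card ι : ℝ) + (∑ i, a i : ℕ)) / 2) / 2) = ∏ i, gaussianMoment (a i) := by
  rw [← integral_prod_inner_pow_mul_exp b, ← Module.finrank_eq_card_basis b.toBasis]
  refine (integral_mul_exp_neg_norm_sq_of_homogeneous (volume : Measure E)
    (G := fun z ↦ ∏ i, ⟪b i, z⟫ ^ a i) fun ρ _ z ↦ ?_).symm
  simp only [inner_smul_right, mul_pow, Finset.prod_mul_distrib, Finset.prod_pow_eq_pow_sum]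

lemma jacobiInt_self_derivative {β : ℝ} (hβ : -1 < β) (p : ℝ[X]) :
    jacobiInt (β + 1) (β + 1) (derivative p) =
      -(β + 1) * jacobiInt β β ((1 - C 2 * X) * p) := by
  have combine : X * p - (1 - X) * p = C (-1) * ((1 - C 2 * X) * p) := by
    simp only [C_ofNat, C_neg, C_1]
    ring
  rw [jacobiInt_derivative (by linarith) (by linarith), add_sub_cancel_right,
    ← jacobiInt_X_mul, ← jacobiInt_one_sub_X_mul, ← mul_sub, ← jacobiInt_sub hβ hβ, combine,
    jacobiInt_C_mul]
  ring

lemma jacobiInt_self_one_sub_two_X {β : ℝ} (hβ : -1 < β) :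
    jacobiInt β β (1 - C 2 * X) = 0 := by
  have h := jacobiInt_self_derivative hβ 1
  have zero : jacobiInt (β + 1) (β + 1) 0 = 0 := by simp [jacobiInt]
  rw [derivative_one, zero, mul_one, zero_eq_mul] at h
  exact h.resolve_left (by linarith)

lemma jacobiInt_self_one_sub_two_X_pow_add_two {β : ℝ} (hβ : -1 < β) (k : ℕ) :
    (β + 1 + ((k : ℝ) + 1) / 2) * jacobiInt β β ((1 - C 2 * X) ^ (k + 2)) =
      ((k : ℝ) + 1) / 2 * jacobiInt β β ((1 - C 2 * X) ^ k) := by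
  have h := jacobiInt_self_derivative hβ ((1 - C 2 * X) ^ (k + 1))
  have deriv : derivative ((1 - C 2 * X : ℝ[X]) ^ (k + 1)) =
      C (-2 * ((k : ℝ) + 1)) * (1 - C 2 * X) ^ k := by
    simp [derivative_pow]
    ring
  have lower : X * ((1 - X) * (1 - C 2 * X : ℝ[X]) ^ k) =
      C (1 / 4) * ((1 - C 2 * X) ^ k - (1 - C 2 * X) ^ (k + 2)) := by
    have : (C (1 / 4) : ℝ[X]) * 4 = 1 := by
      rw [← C_ofNat, ← C_mul]
      norm_num
    simp only [C_ofNat]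
    linear_combination (-X * ((1 - X) * (1 - 2 * X : ℝ[X]) ^ k)) * this
  rw [deriv, jacobiInt_C_mul, ← jacobiInt_one_sub_X_mul (β + 1) β, ← jacobiInt_X_mul β β, lower,
    jacobiInt_C_mul, jacobiInt_sub hβ hβ, ← pow_succ'] at h
  linarith

lemma jacobiInt_self_one_sub_two_X_pow {β : ℝ} (hβ : -1 < β) (k : ℕ) :
    jacobiInt β β ((1 - C 2 * X) ^ k) * (√π * Gamma (β + 1 + ((k : ℝ) + 1) / 2)) =
      jacobiInt β β 1 * Gamma (β + 3 / 2) * gaussianMoment k := by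
  induction k using Nat.twoStepInduction with
  | zero =>
    rw [pow_zero, gaussianMoment_zero]
    norm_num
    ring_nf
  | one => rw [pow_one, jacobiInt_self_one_sub_two_X hβ, gaussianMoment_of_odd odd_one]; simp
  | more k ih _ =>
    have hz : 0 < β + 1 + ((k : ℝ) + 1) / 2 := by linarith [k.cast_nonneg (α := ℝ)]
    rw [show β + 1 + (((k + 2 : ℕ) : ℝ) + 1) / 2 = β + 1 + ((k : ℝ) + 1) / 2 + 1 by
      push_cast; ring, Gamma_add_one hz.ne', gaussianMoment_add_two]
    linear_combination (((k : ℝ) + 1) / 2) * ih + √π * Gamma (β + 1 + ((k : ℝ) + 1) / 2) *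
      jacobiInt_self_one_sub_two_X_pow_add_two hβ k

instance {d : ℕ} : IsProbabilityMeasure (sphMeasure d) := by
  constructor
  rw [sphMeasure, Measure.smul_apply, smul_eq_mul]
  refine ENNReal.inv_mul_cancel ?_ (measure_ne_top _ _)
  rw [Ne, Measure.measure_univ_eq_zero]
  exact Measure.toSphere_ne_zero _

lemma integrable_of_continuous_sphere {d : ℕ} (μ : Measure (Sph d)) [IsFiniteMeasure μ]
    {f : Sph d → ℝ} (hf : Continuous f) : Integrable f μ :=
  hf.integrable_of_hasCompactSupport (HasCompactSupport.of_compactSpace f)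

lemma polynomial_eq_comp_one_sub_two_X (q : ℝ[X]) :
    (q.comp (C (1 / 2) * (1 - X))).comp (1 - C 2 * X) = q := by
  have : (C (1 / 2) * (1 - (1 - C 2 * X)) : ℝ[X]) = X := by
    rw [sub_sub_cancel, ← mul_assoc, ← C_mul]
    norm_num
  simp only [comp_assoc, mul_comp, C_comp, sub_comp, one_comp, X_comp, this, comp_X]

lemma exists_integral_inner_pow_mul_prod_inner_pow {d : ℕ} (hd : 1 ≤ d)
    (b : OrthonormalBasis (Fin (d + 1)) ℝ (Ambient d)) (a : Fin d → ℕ) :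
    ∃ c : ℝ, ∀ k : ℕ,
      ∫ y : Sph d, ⟪b 0, (y : Ambient d)⟫ ^ k * ∏ i, ⟪b i.succ, (y : Ambient d)⟫ ^ a i
        ∂sphMeasure d =
      c * (∏ i, gaussianMoment (a i)) *
        jacobiInt (((d + ∑ i, a i : ℕ) : ℝ) / 2 - 1) (((d + ∑ i, a i : ℕ) : ℝ) / 2 - 1)
          ((1 - C 2 * X) ^ k) := by
  set N : ℝ := ((d + ∑ i, a i : ℕ) : ℝ) with hN
  have hN1 : 1 ≤ N := by
    rw [hN]
    exact_mod_cast hd.trans (Nat.le_add_right d _)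
  set D : ℝ := jacobiInt (N / 2 - 1) (N / 2 - 1) 1 * Gamma (N / 2 - 1 + 3 / 2) with hD
  have hD0 : 0 < D := by
    have : 0 < N / 2 - 1 + 3 / 2 := by linarith
    have : 0 < N / 2 - 1 + 1 := by linarith
    have : 0 < N / 2 - 1 + (N / 2 - 1) + 2 := by linarith
    rw [hD, jacobiInt_one (by linarith) (by linarith)]
    positivity
  refine ⟨((volume : Measure (Ambient d)).toSphere univ)⁻¹.toReal * (2 * √π / D), fun k ↦ ?_⟩
  have sphere := integral_toSphere_prod_inner_pow b (Fin.cons k a)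
  have jacobi := jacobiInt_self_one_sub_two_X_pow (β := N / 2 - 1) (by linarith) k
  simp only [Fin.prod_univ_succ, Fin.sum_univ_succ, Fin.cons_zero, Fin.cons_succ,
    Fintype.card_fin] at sphere
  rw [show (((d + 1 : ℕ) : ℝ) + ((k + ∑ i, a i : ℕ) : ℝ)) / 2 = (N + k + 1) / 2 by
    rw [hN]; push_cast; ring] at sphere
  rw [show N / 2 - 1 + 1 + ((k : ℝ) + 1) / 2 = (N + k + 1) / 2 by ring, ← hD] at jacobi
  have hG : 0 < Gamma ((N + k + 1) / 2) := by positivity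
  rw [sphMeasure, integral_smul_measure, smul_eq_mul, mul_assoc _ (2 * √π / D),
    mul_assoc _ (2 * √π / D * _)]
  congr 1
  rw [div_mul_eq_mul_div, div_mul_eq_mul_div, eq_div_iff hD0.ne']
  refine mul_left_cancel₀ hG.ne' ?_
  linear_combination 2 * D * sphere - 2 * (∏ i, gaussianMoment (a i)) * jacobi

lemma exists_integral_eval_mul_prod_inner_pow {d : ℕ} (hd : 1 ≤ d)
    (b : OrthonormalBasis (Fin (d + 1)) ℝ (Ambient d)) (a : Fin d → ℕ) :
    ∃ c : ℝ, ∀ q : ℝ[X],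
      ∫ y : Sph d, q.eval ((1 - ⟪b 0, (y : Ambient d)⟫) / 2) *
        ∏ i, ⟪b i.succ, (y : Ambient d)⟫ ^ a i ∂sphMeasure d =
      c * (∏ i, gaussianMoment (a i)) *
        jacobiInt (((d + ∑ i, a i : ℕ) : ℝ) / 2 - 1) (((d + ∑ i, a i : ℕ) : ℝ) / 2 - 1) q := by
  obtain ⟨c, hc⟩ := exists_integral_inner_pow_mul_prod_inner_pow hd b a
  refine ⟨c, fun q ↦ ?_⟩
  have hβ : (-1 : ℝ) < ((d + ∑ i, a i : ℕ) : ℝ) / 2 - 1 := by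
    have : (1 : ℝ) ≤ ((d + ∑ i, a i : ℕ) : ℝ) := by exact_mod_cast hd.trans (Nat.le_add_right d _)
    linarith
  rw [← polynomial_eq_comp_one_sub_two_X q]
  induction q.comp (C (1 / 2) * (1 - X)) using Polynomial.induction_on' with
  | add p q hp hq =>
    simp only [add_comp, eval_add, add_mul]
    rw [integral_add, hp, hq, jacobiInt_add hβ hβ, mul_add] <;>
    exact integrable_of_continuous_sphere _ (by fun_prop)
  | monomial k t =>
    rw [monomial_comp, jacobiInt_C_mul, mul_left_comm, ← hc, ← integral_const_mul]
    congr 1 with y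
    simp only [eval_mul, eval_C, eval_pow, eval_sub, eval_one, eval_X]
    ring

lemma exists_orthonormalBasis_zero_eq {d : ℕ} (x : Sph d) :
    ∃ b : OrthonormalBasis (Fin (d + 1)) ℝ (Ambient d), b 0 = (x : Ambient d) := by
  have single : Orthonormal ℝ
      (({0} : Set (Fin (d + 1))).domRestrict fun _ ↦ (x : Ambient d)) := by
    rw [orthonormal_iff_ite]
    rintro ⟨i, rfl⟩ ⟨j, rfl⟩
    simp [Set.domRestrict]
  obtain ⟨b, hb⟩ := single.exists_orthonormalBasis_extension_of_card_eq (by simp)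
  exact ⟨b, hb 0 rfl⟩

lemma integral_eval_ip {d : ℕ} (hd : 1 ≤ d) (x : Sph d) (q : ℝ[X]) :
    ∫ y, q.eval ((1 - ip x y) / 2) ∂sphMeasure d =
      zonalConst d * jacobiInt ((d : ℝ) / 2 - 1) ((d : ℝ) / 2 - 1) q := by
  obtain ⟨b, hb⟩ := exists_orthonormalBasis_zero_eq x
  obtain ⟨c, hc⟩ := exists_integral_eval_mul_prod_inner_pow hd b 0
  have hd0 : (0 : ℝ) < d := by exact_mod_cast hd
  simp only [hb, Pi.zero_apply, pow_zero, Finset.prod_const_one, mul_one, Finset.sum_const_zero,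
    add_zero] at hc
  have total := hc 1
  rw [jacobiInt_one (by linarith) (by linarith), sub_add_cancel,
    show (d : ℝ) / 2 - 1 + (d / 2 - 1) + 2 = d by ring, ← div_eq_iff (by positivity)] at total
  simp only [eval_one, integral_const, probReal_univ, one_smul, one_div_div] at total
  simp only [ip, hc, ← total, zonalConst, sq]

/-- The kernel `K_{d;n}` as a polynomial in `(1 - t) / 2`. -/
def sphKernel (d M : ℕ) : ℝ[X] :=
  C (omegaS d / omegaS (d - 1)) * jacobiKernel ((d : ℝ) / 2 - 1) ((d : ℝ) / 2 - 1) M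

lemma sphK_eq_eval (d M : ℕ) (t : ℝ) : sphK d M t = (sphKernel d M).eval ((1 - t) / 2) := by
  simp [sphK, sphKernel, jacobiK_eq_eval]

lemma zonalConst_mul_jacobiInt_sphKernel_mul {d M : ℕ} (hd : 2 ≤ d) {q : ℝ[X]}
    (hq : q.degree < M) :
    zonalConst d * jacobiInt ((d : ℝ) / 2 - 1) ((d : ℝ) / 2 - 1) (sphKernel d M * q) =
      q.eval 0 := by
  have hd' : (2 : ℝ) ≤ d := by exact_mod_cast hd
  have h2 : (0 : ℝ) < 2 ^ ((d : ℝ) - 1) := by positivity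
  rw [sphKernel, mul_assoc, jacobiInt_C_mul,
    jacobiInt_jacobiKernel_mul (by linarith) (by linarith) (by linarith) hq, ← mul_assoc,
    ← mul_assoc, mul_comm (zonalConst d), omegaS_div_mul_zonalConst (by lia),
    show (d : ℝ) / 2 - 1 + (d / 2 - 1) + 1 = d - 1 by ring, mul_one_div_cancel h2.ne', one_mul]

lemma jacobiInt_self_add_natCast (β : ℝ) (j : ℕ) (p : ℝ[X]) :
    jacobiInt (β + j) (β + j) p = jacobiInt β β (p * (X * (1 - X)) ^ j) := by
  rw [mul_pow, mul_comm p, mul_assoc, jacobiInt_X_pow_mul, jacobiInt_one_sub_X_pow_mul]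

lemma degree_one_sub_two_X_pow_mul_lt {j k M : ℕ} (h : 2 * j + k < M) :
    ((1 - C 2 * X : ℝ[X]) ^ k * (X * (1 - X)) ^ j).degree < (M : WithBot ℕ) := by
  have natDegree_le : ((1 - C 2 * X : ℝ[X]) ^ k * (X * (1 - X)) ^ j).natDegree ≤
      k * 1 + j * 2 := by
    refine natDegree_mul_le.trans (add_le_add ?_ ?_)
    · refine natDegree_pow_le.trans (Nat.mul_le_mul_left _ ?_)
      compute_degree
    · refine natDegree_pow_le.trans (Nat.mul_le_mul_left _ ?_)
      compute_degree
  refine (degree_le_of_natDegree_le natDegree_le).trans_lt ?_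
  exact_mod_cast (by lia : k * 1 + j * 2 < M)

/-- Monomials containing one of the coordinates transversal to `b 0` integrate to `0`: by parity,
or because the even powers contribute a factor `u^j (1 - u)^j`, which vanishes at `u = 0`. -/
lemma integral_sphK_mul_prod_inner_pow_eq_zero {d M k : ℕ} (hd : 2 ≤ d)
    (b : OrthonormalBasis (Fin (d + 1)) ℝ (Ambient d)) {a : Fin d → ℕ} (ha : a ≠ 0)
    (hM : k + ∑ i, a i < M) :
    ∫ y : Sph d, sphK d M ⟪b 0, (y : Ambient d)⟫ * ⟪b 0, (y : Ambient d)⟫ ^ k *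
      ∏ i, ⟪b i.succ, (y : Ambient d)⟫ ^ a i ∂sphMeasure d = 0 := by
  obtain ⟨c, hc⟩ := exists_integral_eval_mul_prod_inner_pow (by lia) b a
  have slice := hc (sphKernel d M * (1 - C 2 * X) ^ k)
  have recover : ∀ t : ℝ, 1 - 2 * ((1 - t) / 2) = t := fun t ↦ by ring
  simp only [eval_mul, eval_pow, eval_sub, eval_one, eval_C, eval_X, ← sphK_eq_eval,
    recover] at slice
  rw [slice]
  by_cases odd : ∃ i, Odd (a i)
  · obtain ⟨i, hi⟩ := odd
    rw [Finset.prod_eq_zero (Finset.mem_univ i) (gaussianMoment_of_odd hi), mul_zero, zero_mul]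
  · simp only [not_exists, Nat.not_odd_iff_even] at odd
    obtain ⟨j, hj⟩ := (Finset.even_sum _ fun i _ ↦ odd i : Even (∑ i, a i)).two_dvd
    obtain ⟨i, hi⟩ := Function.ne_iff.1 ha
    have hj0 : j ≠ 0 := by
      have := Finset.single_le_sum (fun i _ ↦ (a i).zero_le) (Finset.mem_univ i)
      simp only [Pi.zero_apply] at hi
      lia
    have reproduce := zonalConst_mul_jacobiInt_sphKernel_mul hd
      (degree_one_sub_two_X_pow_mul_lt (by lia : 2 * j + k < M))
    rw [show ((d + ∑ i, a i : ℕ) : ℝ) / 2 - 1 = (d : ℝ) / 2 - 1 + j by rw [hj]; push_cast; ring,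
      jacobiInt_self_add_natCast, mul_assoc (sphKernel d M)]
    have vanish : ((1 - C 2 * X : ℝ[X]) ^ k * (X * (1 - X)) ^ j).eval 0 = 0 := by simp [hj0]
    rw [vanish] at reproduce
    rw [(mul_eq_zero.1 reproduce).resolve_left (zonalConst_pos (by lia)).ne', mul_zero]

lemma integral_prod_inner_pow_mul_sphK {d M : ℕ} (hd : 2 ≤ d)
    (b : OrthonormalBasis (Fin (d + 1)) ℝ (Ambient d)) {s : Fin (d + 1) → ℕ}
    (hs : ∑ i, s i < M) {x : Sph d} (hx : b 0 = (x : Ambient d)) :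
    ∫ y : Sph d, (∏ i, ⟪b i, (y : Ambient d)⟫ ^ s i) * sphK d M (ip x y) ∂sphMeasure d =
      ∏ i, ⟪b i, (x : Ambient d)⟫ ^ s i := by
  have rearrange : ∀ y : Sph d, (∏ i, ⟪b i, (y : Ambient d)⟫ ^ s i) * sphK d M (ip x y) =
      sphK d M ⟪b 0, (y : Ambient d)⟫ * ⟪b 0, (y : Ambient d)⟫ ^ s 0 *
        ∏ i : Fin d, ⟪b i.succ, (y : Ambient d)⟫ ^ s i.succ := fun y ↦ by
    rw [Fin.prod_univ_succ, ip, hx]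
    ring
  have value : ∏ i, ⟪b i, (x : Ambient d)⟫ ^ s i = ∏ i : Fin d, (0 : ℝ) ^ s i.succ := by
    simp [← hx, Fin.prod_univ_succ, orthonormal_iff_ite.1 b.orthonormal, Fin.succ_ne_zero]
  rw [Fin.sum_univ_succ] at hs
  simp only [rearrange, value]
  by_cases ha : (fun i : Fin d ↦ s i.succ) = 0
  · have zonal := integral_eval_ip (by lia) x (sphKernel d M * (1 - C 2 * X) ^ s 0)
    have degree := degree_one_sub_two_X_pow_mul_lt (j := 0) (by lia : 2 * 0 + s 0 < M)
    rw [pow_zero, mul_one] at degree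
    rw [zonalConst_mul_jacobiInt_sphKernel_mul hd degree] at zonal
    have recover : ∀ t : ℝ, 1 - 2 * ((1 - t) / 2) = t := fun t ↦ by ring
    simp only [eval_mul, eval_pow, eval_sub, eval_one, eval_C, eval_X, ← sphK_eq_eval, recover,
      mul_zero, sub_zero, one_pow] at zonal
    simpa [congrFun ha _, hx, ip] using zonal
  · rw [integral_sphK_mul_prod_inner_pow_eq_zero hd b ha hs]
    obtain ⟨i, hi⟩ := Function.ne_iff.1 ha
    exact (Finset.prod_eq_zero (Finset.mem_univ i) (zero_pow hi)).symm

section SphericalPolynomials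

/-- The space `Π_{m+1}^d` of restrictions to `S^d` of polynomials of total degree at most `m`. -/
def sphPoly (d m : ℕ) : Submodule ℝ (Sph d → ℝ) :=
  (MvPolynomial.restrictTotalDegree (Fin (d + 1)) ℝ m).map
    (MvPolynomial.aeval fun i (y : Sph d) ↦ (y : Ambient d) i).toLinearMap

variable {d m : ℕ} {f g : Sph d → ℝ}

lemma mem_sphPoly_iff : f ∈ sphPoly d m ↔ ∃ p : MvPolynomial (Fin (d + 1)) ℝ,
    p.totalDegree ≤ m ∧ ∀ y : Sph d, f y = MvPolynomial.eval (fun i ↦ (y : Ambient d) i) p := by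
  have eval_eq : ∀ (p : MvPolynomial (Fin (d + 1)) ℝ) (y : Sph d),
      MvPolynomial.aeval (fun i (y : Sph d) ↦ (y : Ambient d) i) p y =
        MvPolynomial.eval (fun i ↦ (y : Ambient d) i) p := fun p y ↦ by
    rw [MvPolynomial.aeval_def, MvPolynomial.eval₂_eq', MvPolynomial.eval_eq']
    simp
  simp only [sphPoly, Submodule.mem_map, MvPolynomial.mem_restrictTotalDegree,
    AlgHom.toLinearMap_apply, funext_iff, eval_eq, eq_comm]

lemma isSphPoly_of_mem_sphPoly (hf : f ∈ sphPoly d m) {n : ℝ} (hmn : (m : ℝ) < n) :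
    IsSphPoly d n f := by
  obtain ⟨p, hp, h⟩ := mem_sphPoly_iff.1 hf
  exact ⟨p, (Nat.cast_le.2 hp).trans_lt hmn, h⟩

lemma mem_sphPoly_of_isSphPoly {n : ℝ} (hf : IsSphPoly d n f) (hnm : n ≤ m + 1) :
    f ∈ sphPoly d m := by
  obtain ⟨p, hp, h⟩ := hf
  have : p.totalDegree < m + 1 := by exact_mod_cast hp.trans_le hnm
  exact mem_sphPoly_iff.2 ⟨p, by lia, h⟩

lemma sphPoly_mono {m' : ℕ} (h : m ≤ m') : sphPoly d m ≤ sphPoly d m' :=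
  Submodule.map_mono fun p hp ↦ by
    rw [MvPolynomial.mem_restrictTotalDegree] at hp ⊢
    exact hp.trans h

lemma one_mem_sphPoly : 1 ∈ sphPoly d m := mem_sphPoly_iff.2 ⟨1, by simp, by simp⟩

lemma coord_mem_sphPoly (i : Fin (d + 1)) : (fun y : Sph d ↦ (y : Ambient d) i) ∈ sphPoly d 1 :=
  mem_sphPoly_iff.2 ⟨MvPolynomial.X i, by simp, by simp⟩

lemma mul_mem_sphPoly {m' : ℕ} (hf : f ∈ sphPoly d m) (hg : g ∈ sphPoly d m') :
    f * g ∈ sphPoly d (m + m') := by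
  obtain ⟨p, hp, hf⟩ := mem_sphPoly_iff.1 hf
  obtain ⟨q, hq, hg⟩ := mem_sphPoly_iff.1 hg
  exact mem_sphPoly_iff.2 ⟨p * q, (MvPolynomial.totalDegree_mul p q).trans (add_le_add hp hq),
    fun y ↦ by simp [hf, hg]⟩

lemma pow_mem_sphPoly (hf : f ∈ sphPoly d m) (k : ℕ) : f ^ k ∈ sphPoly d (k * m) := by
  induction k with
  | zero => exact one_mem_sphPoly
  | succ k ih => rw [pow_succ, Nat.succ_mul]; exact mul_mem_sphPoly ih hf

lemma eval_mem_sphPoly (hf : f ∈ sphPoly d m) {q : ℝ[X]} {k : ℕ} (hq : q.natDegree ≤ k) :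
    (fun y ↦ q.eval (f y)) ∈ sphPoly d (k * m) := by
  have expand : (fun y ↦ q.eval (f y)) =
      ∑ i ∈ Finset.range (q.natDegree + 1), q.coeff i • f ^ i := by
    ext y
    simp [eval_eq_sum_range]
  rw [expand]
  refine Submodule.sum_mem _ fun i hi ↦ Submodule.smul_mem _ _ ?_
  exact sphPoly_mono (Nat.mul_le_mul_right m (by grind)) (pow_mem_sphPoly hf i)

lemma continuous_of_mem_sphPoly (hf : f ∈ sphPoly d m) : Continuous f := by
  obtain ⟨p, -, h⟩ := mem_sphPoly_iff.1 hf
  rw [funext h]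
  exact p.continuous_eval.comp (by fun_prop)

lemma totalDegree_bind₁_le {σ τ R : Type*} [CommSemiring R] {L : σ → MvPolynomial τ R}
    (hL : ∀ i, (L i).totalDegree ≤ 1) (p : MvPolynomial σ R) :
    (MvPolynomial.bind₁ L p).totalDegree ≤ p.totalDegree := by
  rw [MvPolynomial.bind₁, MvPolynomial.aeval_def, MvPolynomial.eval₂_eq,
    MvPolynomial.algebraMap_eq]
  refine MvPolynomial.totalDegree_finsetSum_le fun s hs ↦ ?_
  calc (MvPolynomial.C (p.coeff s) * ∏ i ∈ s.support, L i ^ s i).totalDegree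
      ≤ (∏ i ∈ s.support, L i ^ s i).totalDegree :=
        (MvPolynomial.totalDegree_mul _ _).trans (by simp)
    _ ≤ ∑ i ∈ s.support, (L i ^ s i).totalDegree := MvPolynomial.totalDegree_finsetProd _ _
    _ ≤ ∑ i ∈ s.support, s i := Finset.sum_le_sum fun i _ ↦ (MvPolynomial.totalDegree_pow _ _).trans
        ((Nat.mul_le_mul_left (s i) (hL i)).trans_eq (mul_one _))
    _ ≤ p.totalDegree := MvPolynomial.le_totalDegree hs

lemma exists_eval_inner_of_mem_sphPoly (b : OrthonormalBasis (Fin (d + 1)) ℝ (Ambient d))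
    (hf : f ∈ sphPoly d m) : ∃ p : MvPolynomial (Fin (d + 1)) ℝ, p.totalDegree ≤ m ∧
      ∀ y : Sph d, f y = MvPolynomial.eval (fun i ↦ ⟪b i, (y : Ambient d)⟫) p := by
  obtain ⟨p, hp, h⟩ := mem_sphPoly_iff.1 hf
  refine ⟨MvPolynomial.bind₁ (fun i ↦ ∑ j, MvPolynomial.C (b j i) * MvPolynomial.X j) p,
    (totalDegree_bind₁_le (fun i ↦ ?_) p).trans hp, fun y ↦ ?_⟩
  · refine MvPolynomial.totalDegree_finsetSum_le fun j _ ↦ ?_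
    exact (MvPolynomial.totalDegree_mul _ _).trans (by simp)
  · have coord : ∀ i, (y : Ambient d) i = ∑ j, b j i * ⟪b j, (y : Ambient d)⟫ := fun i ↦ by
      conv_lhs => rw [← b.sum_repr' (y : Ambient d)]
      simp [mul_comm]
    rw [h, ← MvPolynomial.coe_aeval_eq_eval, ← MvPolynomial.coe_aeval_eq_eval]
    simp only [RingHom.coe_coe, MvPolynomial.aeval_bind₁, coord]
    simp

end SphericalPolynomials

section Haversine

variable {d : ℕ}

/-- The variable `u = (1 - x·y) / 2`, in which all zonal kernels are expressed. -/
def haversine (x y : Sph d) : ℝ := (1 - ip x y) / 2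

lemma haversine_eq_norm_sub_sq (x y : Sph d) :
    haversine x y = ‖(x : Ambient d) - y‖ ^ 2 / 4 := by
  rw [haversine, ip, norm_sub_sq_real]
  norm_num
  ring

lemma one_sub_haversine_eq_norm_add_sq (x y : Sph d) :
    1 - haversine x y = ‖(x : Ambient d) + y‖ ^ 2 / 4 := by
  rw [haversine, ip, norm_add_sq_real]
  norm_num
  ring

lemma haversine_self (x : Sph d) : haversine x x = 0 := by
  rw [haversine_eq_norm_sub_sq, sub_self, norm_zero]
  norm_num

lemma haversine_mem_Icc (x y : Sph d) : haversine x y ∈ Icc (0 : ℝ) 1 := by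
  constructor
  · rw [haversine_eq_norm_sub_sq]
    positivity
  · rw [← sub_nonneg, one_sub_haversine_eq_norm_add_sq]
    positivity

lemma dist_sq_eq_four_mul_haversine (x y : Sph d) : dist x y ^ 2 = 4 * haversine x y := by
  rw [haversine_eq_norm_sub_sq, Subtype.dist_eq, dist_eq_norm]
  ring

lemma haversine_mem_sphPoly (x : Sph d) : haversine x ∈ sphPoly d 1 := by
  have expand : haversine x =
      (1 / 2 : ℝ) • (1 - ∑ i, (x : Ambient d) i • fun y : Sph d ↦ (y : Ambient d) i) := by
    ext y
    simp [haversine, ip, PiLp.inner_apply, mul_comm]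
    ring
  rw [expand]
  exact Submodule.smul_mem _ _ (Submodule.sub_mem _ one_mem_sphPoly
    (Submodule.sum_mem _ fun i _ ↦ Submodule.smul_mem _ _ (coord_mem_sphPoly i)))

lemma continuous_haversine (x : Sph d) : Continuous (haversine x) :=
  continuous_of_mem_sphPoly (haversine_mem_sphPoly x)

end Haversine

section Reproduction

variable {d m M : ℕ} {f : Sph d → ℝ}

lemma continuous_sphK_ip (M : ℕ) (x : Sph d) : Continuous fun y ↦ sphK d M (ip x y) := by
  simp only [sphK_eq_eval]
  exact (sphKernel d M).continuous.comp (continuous_haversine x)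

lemma integral_mul_sphK (hd : 2 ≤ d) (hmM : m < M) (hf : f ∈ sphPoly d m) (x : Sph d) :
    ∫ y, f y * sphK d M (ip x y) ∂sphMeasure d = f x := by
  obtain ⟨b, hb⟩ := exists_orthonormalBasis_zero_eq x
  obtain ⟨p, hp, hfp⟩ := exists_eval_inner_of_mem_sphPoly b hf
  simp only [hfp, MvPolynomial.eval_eq', Finset.sum_mul, mul_assoc]
  rw [integral_finsetSum]
  · refine Finset.sum_congr rfl fun s hs ↦ ?_
    have degree_lt : ∑ i, s i < M := by
      rw [← Finsupp.sum_fintype s (fun _ e ↦ e) (by simp)]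
      exact ((MvPolynomial.le_totalDegree hs).trans hp).trans_lt hmM
    rw [integral_const_mul, integral_prod_inner_pow_mul_sphK hd b degree_lt hb]
  · exact fun s _ ↦ (integrable_of_continuous_sphere _
      (by have := continuous_sphK_ip M x; fun_prop)).const_mul _

end Reproduction

section SumsOfSquares

/-- The cone of sums of squares of polynomials of total degree at most `m`, restricted to `S^d`.
It is the class of nonnegative functions to which a Marcinkiewicz–Zygmund inequality applies. -/
def sphSumSq (d m : ℕ) : AddSubmonoid (Sph d → ℝ) :=
  AddSubmonoid.closure ((· ^ 2) '' (sphPoly d m : Set (Sph d → ℝ)))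

variable {d m m' : ℕ} {f g : Sph d → ℝ}

lemma sq_mem_sphSumSq (hf : f ∈ sphPoly d m) : f ^ 2 ∈ sphSumSq d m :=
  AddSubmonoid.subset_closure ⟨f, hf, rfl⟩

lemma sphSumSq_mono (h : m ≤ m') : sphSumSq d m ≤ sphSumSq d m' :=
  AddSubmonoid.closure_mono (image_mono (sphPoly_mono h))

lemma mul_mem_sphSumSq (hf : f ∈ sphSumSq d m) (hg : g ∈ sphSumSq d m') :
    f * g ∈ sphSumSq d (m + m') := by
  have h := AddSubmonoid.mul_mem_mul hf hg
  rw [sphSumSq, sphSumSq, AddSubmonoid.closure_mul_closure] at h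
  refine AddSubmonoid.closure_mono ?_ h
  rintro _ ⟨_, ⟨f, hf, rfl⟩, _, ⟨g, hg, rfl⟩, rfl⟩
  exact ⟨f * g, mul_mem_sphPoly hf hg, mul_pow f g 2⟩

lemma smul_mem_sphSumSq {a : ℝ} (ha : 0 ≤ a) (hf : f ∈ sphSumSq d m) : a • f ∈ sphSumSq d m := by
  have h := mul_mem_sphSumSq
    (sq_mem_sphSumSq (Submodule.smul_mem (sphPoly d 0) √a one_mem_sphPoly)) hf
  rwa [_root_.smul_pow, sq_sqrt ha, one_pow, smul_mul_assoc, one_mul, zero_add] at h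

lemma one_mem_sphSumSq : 1 ∈ sphSumSq d m := by
  simpa using sq_mem_sphSumSq (one_mem_sphPoly (d := d) (m := m))

lemma pow_mem_sphSumSq (hf : f ∈ sphSumSq d m) (k : ℕ) : f ^ k ∈ sphSumSq d (k * m) := by
  induction k with
  | zero => exact one_mem_sphSumSq
  | succ k ih => rw [pow_succ, Nat.succ_mul]; exact mul_mem_sphSumSq ih hf

lemma continuous_of_mem_sphSumSq (hf : f ∈ sphSumSq d m) : Continuous f := by
  induction hf using AddSubmonoid.closure_induction with
  | mem _ h => obtain ⟨g, hg, rfl⟩ := h; exact (continuous_of_mem_sphPoly hg).pow 2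
  | zero => exact continuous_zero
  | add _ _ _ _ hf hg => exact hf.add hg

instance isFiniteMeasure_totalVariation {X : Type*} [MeasurableSpace X] (ν : SignedMeasure X) :
    IsFiniteMeasure ν.totalVariation := by
  unfold SignedMeasure.totalVariation
  infer_instance

lemma integral_totalVariation_le_of_mem_sphSumSq {n c : ℝ} {ν : SignedMeasure (Sph d)}
    (hν : IsMZ d n ν c) (hmn : (m : ℝ) < n / 2) (hf : f ∈ sphSumSq d m) :
    ∫ y, f y ∂ν.totalVariation ≤ c * ∫ y, f y ∂sphMeasure d := by
  induction hf using AddSubmonoid.closure_induction with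
  | mem _ h =>
    obtain ⟨g, hg, rfl⟩ := h
    exact hν g (isSphPoly_of_mem_sphPoly hg hmn)
  | zero => simp
  | add f g hf hg ihf ihg =>
    have integrable (μ : Measure (Sph d)) [IsFiniteMeasure μ] {h : Sph d → ℝ}
        (hh : h ∈ sphSumSq d m) : Integrable h μ :=
      integrable_of_continuous_sphere μ (continuous_of_mem_sphSumSq hh)
    simp only [Pi.add_apply]
    rw [integral_add (integrable _ hf) (integrable _ hg),
      integral_add (integrable _ hf) (integrable _ hg)]
    linarith

lemma haversine_mem_sphSumSq (x : Sph d) : haversine x ∈ sphSumSq d 1 := by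
  have expand : haversine x =
      (1 / 4 : ℝ) • ∑ i, (((x : Ambient d) i) • 1 - fun y : Sph d ↦ (y : Ambient d) i) ^ 2 := by
    ext y
    simp [haversine_eq_norm_sub_sq, EuclideanSpace.norm_sq_eq]
    ring
  rw [expand]
  exact smul_mem_sphSumSq (by norm_num) (AddSubmonoid.sum_mem _ fun i _ ↦ sq_mem_sphSumSq
    (Submodule.sub_mem _ (Submodule.smul_mem _ _ one_mem_sphPoly) (coord_mem_sphPoly i)))

lemma one_sub_haversine_mem_sphSumSq (x : Sph d) : 1 - haversine x ∈ sphSumSq d 1 := by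
  have expand : 1 - haversine x =
      (1 / 4 : ℝ) • ∑ i, (((x : Ambient d) i) • 1 + fun y : Sph d ↦ (y : Ambient d) i) ^ 2 := by
    ext y
    simp [one_sub_haversine_eq_norm_add_sq, EuclideanSpace.norm_sq_eq]
    ring
  rw [expand]
  exact smul_mem_sphSumSq (by norm_num) (AddSubmonoid.sum_mem _ fun i _ ↦ sq_mem_sphSumSq
    (Submodule.add_mem _ (Submodule.smul_mem _ _ one_mem_sphPoly) (coord_mem_sphPoly i)))

end SumsOfSquares

section PowerMajorant

/-- Polynomial majorants of `u ↦ u ^ θ` on `[0, 1]`, accurate down to the scale `4 ^ (-K)`. They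
iterate the angle doubling `sin² φ ↦ sin² (2φ)`, that is `u ↦ 4u(1 - u)`, under which `u ^ θ`
almost scales by `4 ^ θ`. -/
def rpowMajorant (θ : ℝ) : ℕ → ℝ[X]
  | 0 => 1
  | K + 1 => X + C ((4 : ℝ) ^ (-θ)) * (rpowMajorant θ K).comp (4 * X * (1 - X))

variable {θ u : ℝ}

lemma eval_rpowMajorant_succ (θ u : ℝ) (K : ℕ) : (rpowMajorant θ (K + 1)).eval u =
    u + (4 : ℝ) ^ (-θ) * (rpowMajorant θ K).eval (4 * u * (1 - u)) := by
  simp [rpowMajorant]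

lemma four_mul_mul_one_sub_mem_Icc (hu : u ∈ Icc (0 : ℝ) 1) :
    4 * u * (1 - u) ∈ Icc (0 : ℝ) 1 :=
  ⟨by nlinarith [mul_nonneg hu.1 (sub_nonneg.2 hu.2)], by nlinarith [sq_nonneg (1 - 2 * u)]⟩

lemma four_rpow_neg_mul_rpow (θ : ℝ) (hu : u ∈ Icc (0 : ℝ) 1) :
    (4 : ℝ) ^ (-θ) * (4 * u * (1 - u)) ^ θ = u ^ θ * (1 - u) ^ θ := by
  rw [mul_rpow (mul_nonneg (by norm_num) hu.1) (sub_nonneg.2 hu.2),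
    mul_rpow (by norm_num) hu.1, rpow_neg (by norm_num)]
  field_simp

lemma self_le_rpow (hu : u ∈ Icc (0 : ℝ) 1) (h0 : 0 ≤ θ) (h1 : θ ≤ 1) : u ≤ u ^ θ := by
  simpa using rpow_le_rpow_of_exponent_ge' hu.1 hu.2 h0 h1

lemma rpow_le_eval_rpowMajorant (h0 : 0 ≤ θ) (h1 : θ ≤ 1) (K : ℕ) (hu : u ∈ Icc (0 : ℝ) 1) :
    u ^ θ ≤ (rpowMajorant θ K).eval u := by
  induction K generalizing u with
  | zero => simpa [rpowMajorant] using rpow_le_one hu.1 hu.2 h0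
  | succ K ih =>
    have one_sub_le : 1 - u ≤ (1 - u) ^ θ :=
      self_le_rpow ⟨sub_nonneg.2 hu.2, sub_le_self 1 hu.1⟩ h0 h1
    calc u ^ θ ≤ u + u ^ θ * (1 - u) ^ θ := by
          nlinarith [rpow_le_one hu.1 hu.2 h0, rpow_nonneg hu.1 θ, hu.1]
      _ = u + (4 : ℝ) ^ (-θ) * (4 * u * (1 - u)) ^ θ := by rw [four_rpow_neg_mul_rpow θ hu]
      _ ≤ (rpowMajorant θ (K + 1)).eval u := by
          rw [eval_rpowMajorant_succ]
          gcongr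
          exact ih (four_mul_mul_one_sub_mem_Icc hu)

lemma add_mul_rpow_mul_one_sub_rpow_le {B b : ℝ} (h0 : 0 < θ) (h1 : θ ≤ 1) (hb : 0 ≤ b)
    (hB : B * θ = b + 1) (hu : u ∈ Icc (0 : ℝ) 1) :
    u + (B * (u ^ θ * (1 - u) ^ θ) - (b + 1) * (u * (1 - u))) ≤ B * u ^ θ - b * u := by
  have B_nonneg : 0 ≤ B := nonneg_of_mul_nonneg_left (hB ▸ by positivity) h0
  have bernoulli : (1 - u) ^ θ ≤ 1 - θ * u := by
    have := rpow_one_add_le_one_add_mul_self (s := -u) (by linarith [hu.2]) h0.le h1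
    rwa [mul_neg] at this
  have scaled : B * (u ^ θ * (1 - u) ^ θ) ≤ B * u ^ θ - (b + 1) * (u * u ^ θ) :=
    calc B * (u ^ θ * (1 - u) ^ θ) ≤ B * (u ^ θ * (1 - θ * u)) := by
          have := rpow_nonneg hu.1 θ
          gcongr
      _ = B * u ^ θ - (b + 1) * (u * u ^ θ) := by rw [← hB]; ring
  have : (b + 1) * (u * u) ≤ (b + 1) * (u * u ^ θ) := by
    have := self_le_rpow hu h0.le h1
    have := hu.1
    gcongr
  linarith

lemma eval_rpowMajorant_le {B b : ℝ} (h0 : 0 < θ) (h1 : θ ≤ 1) (hb : 0 ≤ b)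
    (hbθ : b * (4 : ℝ) ^ (1 - θ) = b + 1) (hB : B * θ = b + 1) (K : ℕ) (hu : u ∈ Icc (0 : ℝ) 1) :
    (rpowMajorant θ K).eval u ≤ B * u ^ θ - b * u + (4 : ℝ) ^ (-(K * θ)) := by
  induction K generalizing u with
  | zero =>
    have b_le : b ≤ B := by nlinarith
    have : b * u ≤ B * u ^ θ :=
      mul_le_mul b_le (self_le_rpow hu h0.le h1) hu.1 (hb.trans b_le)
    simpa [rpowMajorant] using this
  | succ K ih =>
    have four_mul : (4 : ℝ) ^ (1 - θ) = 4 * 4 ^ (-θ) := by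
      rw [sub_eq_add_neg, rpow_add (by norm_num), rpow_one]
    have error_succ : (4 : ℝ) ^ (-(((K + 1 : ℕ) : ℝ) * θ)) = 4 ^ (-θ) * 4 ^ (-(K * θ)) := by
      rw [← rpow_add (by norm_num)]
      push_cast
      ring_nf
    calc (rpowMajorant θ (K + 1)).eval u
        ≤ u + (4 : ℝ) ^ (-θ) *
            (B * (4 * u * (1 - u)) ^ θ - b * (4 * u * (1 - u)) + 4 ^ (-(K * θ))) := by
          rw [eval_rpowMajorant_succ]
          gcongr
          exact ih (four_mul_mul_one_sub_mem_Icc hu)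
      _ = u + (B * (u ^ θ * (1 - u) ^ θ) - (b + 1) * (u * (1 - u))) +
            (4 : ℝ) ^ (-(((K + 1 : ℕ) : ℝ) * θ)) := by
          rw [← four_rpow_neg_mul_rpow θ hu, ← hbθ, four_mul, error_succ]
          ring
      _ ≤ B * u ^ θ - b * u + (4 : ℝ) ^ (-(((K + 1 : ℕ) : ℝ) * θ)) := by
          gcongr
          exact add_mul_rpow_mul_one_sub_rpow_le h0 h1 hb hB hu

lemma four_rpow_neg_log_mul_le (h0 : 0 ≤ θ) {n : ℕ} (hn : 1 ≤ n) :
    (4 : ℝ) ^ (-((Nat.log 2 n : ℝ) * θ)) ≤ 4 ^ θ * (n : ℝ) ^ (-(2 * θ)) := by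
  have n_le : (n : ℝ) ≤ 2 ^ (Nat.log 2 n + 1) := by
    exact_mod_cast (Nat.lt_pow_succ_log_self (by norm_num) n).le
  have h : (n : ℝ) ^ (2 * θ) ≤ 4 ^ θ * 4 ^ ((Nat.log 2 n : ℝ) * θ) :=
    calc (n : ℝ) ^ (2 * θ) ≤ ((2 : ℝ) ^ (Nat.log 2 n + 1)) ^ (2 * θ) := by gcongr
      _ = (4 : ℝ) ^ (θ + Nat.log 2 n * θ) := by
          rw [show (4 : ℝ) = 2 ^ (2 : ℝ) by norm_num, ← rpow_natCast,
            ← rpow_mul (by norm_num), ← rpow_mul (by norm_num)]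
          push_cast
          ring_nf
      _ = 4 ^ θ * 4 ^ ((Nat.log 2 n : ℝ) * θ) := rpow_add (by norm_num) _ _
  have n_pos : (0 : ℝ) < n := by exact_mod_cast hn
  rw [rpow_neg (by norm_num), rpow_neg n_pos.le, ← div_eq_mul_inv, le_div_iff₀ (by positivity),
    inv_mul_le_iff₀ (by positivity)]
  linarith

lemma eval_rpowMajorant_mem_sphSumSq {d m : ℕ} (θ : ℝ) (K : ℕ) {w : Sph d → ℝ}
    (hw : w ∈ sphPoly d m) (hw₀ : w ∈ sphSumSq d m) (hw₁ : 1 - w ∈ sphSumSq d m) :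
    (fun y ↦ (rpowMajorant θ K).eval (w y)) ∈ sphSumSq d (m * 2 ^ K) := by
  induction K generalizing m w with
  | zero =>
    simp only [rpowMajorant, eval_one]
    exact one_mem_sphSumSq
  | succ K ih =>
    have logistic_poly : (4 : ℝ) • (w * (1 - w)) ∈ sphPoly d (m + m) :=
      Submodule.smul_mem _ _ (mul_mem_sphPoly hw (Submodule.sub_mem _ one_mem_sphPoly hw))
    have logistic_sumSq : (4 : ℝ) • (w * (1 - w)) ∈ sphSumSq d (m + m) :=
      smul_mem_sphSumSq (by norm_num) (mul_mem_sphSumSq hw₀ hw₁)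
    have one_sub_logistic_sumSq : 1 - (4 : ℝ) • (w * (1 - w)) ∈ sphSumSq d (m + m) := by
      have complete_square : 1 - (4 : ℝ) • (w * (1 - w)) = (1 - (2 : ℝ) • w) ^ 2 := by
        ext y
        simp
        ring
      rw [complete_square]
      exact sphSumSq_mono (m.le_add_right m)
        (sq_mem_sphSumSq (Submodule.sub_mem _ one_mem_sphPoly (Submodule.smul_mem _ _ hw)))
    have step := AddSubmonoid.add_mem _
      (sphSumSq_mono (Nat.le_mul_of_pos_right m (by positivity : 0 < 2 ^ (K + 1))) hw₀)
      (smul_mem_sphSumSq (rpow_nonneg (by norm_num : (0 : ℝ) ≤ 4) (-θ))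
        (by simpa [pow_succ', ← mul_assoc, mul_two] using
          ih logistic_poly logistic_sumSq one_sub_logistic_sumSq))
    convert step using 1
    ext y
    simp [eval_rpowMajorant_succ, mul_assoc]

lemma exists_polynomial_near_rpow (h0 : 0 ≤ θ) (h1 : θ < 1) : ∃ B : ℝ, 0 < B ∧ ∀ n : ℕ, 1 ≤ n →
    ∃ v : ℝ[X], (∀ u ∈ Icc (0 : ℝ) 1,
        u ^ θ ≤ v.eval u ∧ v.eval u ≤ B * (u ^ θ + (n : ℝ) ^ (-(2 * θ)))) ∧
      ∀ (d : ℕ) (x : Sph d), (fun y ↦ v.eval (haversine x y)) ∈ sphSumSq d n := by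
  rcases h0.eq_or_lt with rfl | h0
  · refine ⟨1, one_pos, fun n _ ↦ ⟨1, fun u _ ↦ by simp, fun d x ↦ ?_⟩⟩
    simp only [eval_one]
    exact one_mem_sphSumSq
  have four_rpow : 0 < (4 : ℝ) ^ (1 - θ) - 1 :=
    sub_pos.2 (one_lt_rpow (by norm_num) (by linarith))
  set b := ((4 : ℝ) ^ (1 - θ) - 1)⁻¹ with hb
  have b_pos : 0 < b := by positivity
  have hbθ : b * (4 : ℝ) ^ (1 - θ) = b + 1 := by
    rw [hb]
    field_simp
    ring
  refine ⟨(b + 1) / θ + 4 ^ θ, by positivity, fun n hn ↦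
    ⟨rpowMajorant θ (Nat.log 2 n), fun u hu ↦ ⟨rpow_le_eval_rpowMajorant h0.le h1.le _ hu, ?_⟩,
      fun d x ↦ ?_⟩⟩
  · have uθ_nonneg : 0 ≤ u ^ θ := rpow_nonneg hu.1 θ
    have bu_nonneg : 0 ≤ b * u := mul_nonneg b_pos.le hu.1
    calc (rpowMajorant θ (Nat.log 2 n)).eval u
        ≤ (b + 1) / θ * u ^ θ - b * u + (4 : ℝ) ^ (-((Nat.log 2 n : ℝ) * θ)) :=
          eval_rpowMajorant_le h0 h1.le b_pos.le hbθ (div_mul_cancel₀ _ h0.ne') _ hu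
      _ ≤ (b + 1) / θ * u ^ θ + 4 ^ θ * (n : ℝ) ^ (-(2 * θ)) := by
          linarith [four_rpow_neg_log_mul_le h0.le hn]
      _ ≤ ((b + 1) / θ + 4 ^ θ) * (u ^ θ + (n : ℝ) ^ (-(2 * θ))) := by
          have : 0 ≤ (b + 1) / θ * (n : ℝ) ^ (-(2 * θ)) + 4 ^ θ * u ^ θ := by positivity
          linarith
  · have h := eval_rpowMajorant_mem_sphSumSq θ (Nat.log 2 n) (haversine_mem_sphPoly x)
      (haversine_mem_sphSumSq x) (one_sub_haversine_mem_sphSumSq x)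
    rw [one_mul] at h
    exact sphSumSq_mono (Nat.pow_log_le_self 2 (by lia)) h

end PowerMajorant

section NormalizedJacobi

variable {α β : ℝ}

/-- The quotient `p_N^{(α,β)}(t) / p_N^{(α,β)}(1)` in the variable `u = (1 - t) / 2`. -/
def normalizedJacobi (α β : ℝ) (N : ℕ) : ℝ[X] :=
  C ((shiftedJacobi α β N).eval 0)⁻¹ * shiftedJacobi α β N

lemma natDegree_normalizedJacobi_le (α β : ℝ) (N : ℕ) : (normalizedJacobi α β N).natDegree ≤ N :=
  (natDegree_C_mul_le _ _).trans (natDegree_shiftedJacobi_le α β N)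

lemma eval_zero_shiftedJacobi_pos (hα : -1 < α) (hαβ : 0 < α + β + 1) (N : ℕ) :
    0 < (shiftedJacobi α β N).eval 0 := by
  rw [eval_zero_shiftedJacobi]
  exact div_pos (Gamma_pos_of_pos (by linarith)) (Gamma_pos_of_pos (by linarith))

lemma eval_zero_normalizedJacobi (hα : -1 < α) (hαβ : 0 < α + β + 1) (N : ℕ) :
    (normalizedJacobi α β N).eval 0 = 1 := by
  rw [normalizedJacobi, eval_mul, eval_C,
    inv_mul_cancel₀ (eval_zero_shiftedJacobi_pos hα hαβ N).ne']

lemma jacobiP_div_jacobiP_one (hα : -1 < α) (hβ : -1 < β) (hαβ : 0 < α + β + 1) (N : ℕ) (t : ℝ) :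
    jacobiP α β N t / jacobiP α β N 1 = (normalizedJacobi α β N).eval ((1 - t) / 2) := by
  simp only [jacobiP_eq_eval, orthonormalJacobi, normalizedJacobi, eval_mul, eval_C, sub_self,
    zero_div]
  rw [mul_div_mul_left, inv_mul_eq_div]
  have hΓ₁ : 0 < Gamma (N + α + β + 1) := Gamma_pos_of_pos (by linarith)
  have hΓ₂ : 0 < Gamma (N + α + 1) := Gamma_pos_of_pos (by linarith)
  have hΓ₃ : 0 < Gamma (N + β + 1) := Gamma_pos_of_pos (by linarith)
  have hΓ₄ : 0 < Gamma (α + N + 1) := Gamma_pos_of_pos (by linarith)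
  have hΓ₅ : 0 < Gamma (α + β + N + 1) := Gamma_pos_of_pos (by linarith)
  have : 0 < 2 * N + α + β + 1 := by linarith
  positivity

lemma normalizedJacobi_isJacobiOrthogonal (hα : -1 < α) (hβ : -1 < β) (N : ℕ) :
    IsJacobiOrthogonal α β N (normalizedJacobi α β N) :=
  (isJacobiOrthogonal_shiftedJacobi hα hβ N).C_mul _

lemma jacobiInt_normalizedJacobi_mul_self_le (hα : 1 ≤ α) (hβ : -1 < β) (hαβ : 0 < α + β + 1)
    {N : ℕ} (hN : 1 ≤ N) :
    jacobiInt (α - 1) (β + 1) (normalizedJacobi α β N * normalizedJacobi α β N) ≤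
      Gamma (α + 1) ^ 2 / (α * (N : ℝ) ^ (2 * α)) := by
  have h₀ := eval_zero_shiftedJacobi_pos (by linarith) hαβ N
  have h := jacobiInt_shiftedJacobi_mul_self_le hα hβ hN
  rw [normalizedJacobi]
  generalize shiftedJacobi α β N = P at h h₀ ⊢
  rw [mul_mul_mul_comm, ← C_mul, jacobiInt_C_mul, ← mul_inv,
    inv_mul_le_iff₀ (by positivity), ← sq (P.eval 0), mul_comm (P.eval 0 ^ 2)]
  exact h

/-- The factor of `Φ_{d;n,r}` that localizes the reproducing kernel to a neighbourhood of the
pole, in the variable `u = (1 - t) / 2`. -/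
def localizer (d n : ℕ) (r : ℝ) : ℝ[X] :=
  normalizedJacobi ((d : ℝ) / 2 + r) ((d : ℝ) / 2 - 2) (d * n)

variable {d n : ℕ} {r : ℝ}

lemma jacobiInt_localizer_mul_self_le_mul (hd : 3 ≤ d) (hr : 0 ≤ r) (hn : 1 ≤ n) (hrn : r ≤ n) :
    jacobiInt ((d : ℝ) / 2 + r - 2) ((d : ℝ) / 2 - 1) (localizer d n r * localizer d n r) ≤
      580 * (n : ℝ) ^ 2 * jacobiInt ((d : ℝ) / 2 + r - 1) ((d : ℝ) / 2 - 1)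
        (localizer d n r * localizer d n r) := by
  have hd' : (3 : ℝ) ≤ d := by exact_mod_cast hd
  have hn' : (1 : ℝ) ≤ n := by exact_mod_cast hn
  have hdn : (d : ℝ) - 1 + n ≤ d * n := by nlinarith
  have ratio_le : ((d * n : ℕ) : ℝ) / ((d : ℝ) / 2 + r - 1) ≤ 6 * n := by
    rw [div_le_iff₀ (by linarith)]
    push_cast
    nlinarith
  have factor_le : 4 + 16 * (((d * n : ℕ) : ℝ) / ((d : ℝ) / 2 + r - 1)) ^ 2 ≤
      580 * (n : ℝ) ^ 2 := by
    have : (((d * n : ℕ) : ℝ) / ((d : ℝ) / 2 + r - 1)) ^ 2 ≤ (6 * n) ^ 2 := by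
      have : (0 : ℝ) ≤ (d : ℝ) / 2 + r - 1 := by linarith
      gcongr
    nlinarith
  have h := (normalizedJacobi_isJacobiOrthogonal (α := (d : ℝ) / 2 + r) (β := (d : ℝ) / 2 - 2)
    (by linarith) (by linarith) (d * n)).integral_sq_le_mul (by linarith) (by linarith)
    (by linarith) (by push_cast; linarith)
  rw [show (d : ℝ) / 2 - 2 + 1 = (d : ℝ) / 2 - 1 by ring] at h
  exact h.trans (mul_le_mul_of_nonneg_right factor_le (jacobiInt_mul_self_nonneg _ _ _))

lemma sphK_one_mul_jacobiInt_localizer_le (hd : 3 ≤ d) (hr : 0 ≤ r) (hdn : d ≤ n) :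
    sphK d ((d + 2) * n) 1 * (zonalConst d * jacobiInt ((d : ℝ) / 2 + r - 1) ((d : ℝ) / 2 - 1)
        (localizer d n r * localizer d n r)) ≤
      exp 3 * (1 + r) ^ (2 * r) * (n : ℝ) ^ (-(2 * r)) := by
  have hd' : (3 : ℝ) ≤ d := by exact_mod_cast hd
  have h := jacobiInt_normalizedJacobi_mul_self_le (α := (d : ℝ) / 2 + r) (β := (d : ℝ) / 2 - 2)
    (by linarith) (by linarith) (by linarith) (N := d * n)
    (Nat.mul_pos (by lia) (by lia))
  rw [show (d : ℝ) / 2 - 2 + 1 = (d : ℝ) / 2 - 1 by ring] at h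
  have hK := sphK_one_pos (show 2 ≤ d by lia) (Nat.mul_pos (by lia : 0 < d + 2) (by lia : 0 < n))
  have hκ := zonalConst_pos (show 1 ≤ d by lia)
  refine le_trans ?_ (sphK_one_mul_localization_le (d := d) (by lia) hr (by exact_mod_cast hdn))
  rw [← mul_assoc]
  exact mul_le_mul_of_nonneg_left h (mul_pos hK hκ).le

end NormalizedJacobi

section WeightedMarcinkiewiczZygmund

lemma IsMZ.nonneg {d : ℕ} {n c : ℝ} {ν : SignedMeasure (Sph d)} (hν : IsMZ d n ν c) (hn : 0 < n) :
    0 ≤ c := by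
  have h := hν 1 (isSphPoly_of_mem_sphPoly (one_mem_sphPoly (m := 0)) (by simpa using hn))
  simp only [Pi.one_apply, one_pow, integral_const, smul_eq_mul, probReal_univ, mul_one] at h
  exact measureReal_nonneg.trans h

lemma rpow_mul_add_rpow_le {θ h u : ℝ} (hθ₀ : 0 ≤ θ) (hθ₁ : θ ≤ 1) (hh : 0 ≤ h) (hu : 0 < u) :
    u ^ (1 - θ) * (u ^ θ + h ^ θ) ≤ 2 * u + h := by
  have split : u ^ (1 - θ) * u ^ θ = u := by rw [← rpow_add hu]; simp
  have amgm := geom_mean_le_arith_mean2_weighted hθ₀ (sub_nonneg.2 hθ₁) hh hu.le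
    (add_sub_cancel θ 1)
  nlinarith

lemma jacobiInt_X_pow_mul_mul_mul_self_le {a b θ B h : ℝ} {s : ℕ} (hθ₀ : 0 ≤ θ) (hθ₁ : θ ≤ 1)
    (ha : -1 < a + s) (haθ : 0 < a + s + θ) (hb : -1 < b) (hB : 0 ≤ B) (hh : 0 ≤ h) {v : ℝ[X]}
    (hv : ∀ u ∈ Icc (0 : ℝ) 1, v.eval u ≤ B * (u ^ θ + h ^ θ)) (q : ℝ[X]) :
    jacobiInt a b (X ^ s * (v * (q * q))) ≤ B * (2 * jacobiInt (a + s + θ) b (q * q) +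
      h * jacobiInt (a + s + θ - 1) b (q * q)) := by
  have haθ' : -1 < a + s + θ - 1 := by linarith
  have hshift : jacobiInt (a + s + θ) b (q * q) = jacobiInt (a + s + θ - 1) b (X * (q * q)) := by
    rw [jacobiInt_X_mul, sub_add_cancel]
  rw [jacobiInt_X_pow_mul, hshift, ← jacobiInt_C_mul, ← jacobiInt_C_mul, ← jacobiInt_add haθ' hb,
    ← jacobiInt_C_mul]
  refine intervalIntegral.integral_mono_on_of_le_Ioo zero_le_one
    (intervalIntegrable_jacobiWeight_mul ha hb (v * (q * q)).continuous)
    (intervalIntegrable_jacobiWeight_mul haθ' hb (Polynomial.continuous _)) fun u hu ↦ ?_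
  have hu₁ : 0 < 1 - u := sub_pos.2 hu.2
  have exponent : u ^ (a + s) = u ^ (a + s + θ - 1) * u ^ (1 - θ) := by
    rw [← rpow_add hu.1]
    ring_nf
  simp only [eval_mul, eval_add, eval_C, eval_X]
  calc u ^ (a + s) * (1 - u) ^ b * (v.eval u * (q.eval u * q.eval u))
      ≤ u ^ (a + s) * (1 - u) ^ b * (B * (u ^ θ + h ^ θ) * (q.eval u * q.eval u)) := by
        have := hu.1
        have := mul_self_nonneg (q.eval u)
        gcongr
        exact hv u (Ioo_subset_Icc_self hu)
    _ = u ^ (a + s + θ - 1) * (1 - u) ^ b * (B * ((u ^ (1 - θ) * (u ^ θ + h ^ θ)) *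
          (q.eval u * q.eval u))) := by
        rw [exponent]
        ring
    _ ≤ u ^ (a + s + θ - 1) * (1 - u) ^ b * (B * ((2 * u + h) * (q.eval u * q.eval u))) := by
        have := hu.1
        have := mul_self_nonneg (q.eval u)
        gcongr
        exact rpow_mul_add_rpow_le hθ₀ hθ₁ hh hu.1
    _ = _ := by ring

lemma integral_haversine_rpow_mul_sq_le_jacobiInt {m n : ℕ} {N c θ : ℝ}
    {ν : SignedMeasure (Sph d)} {v q : ℝ[X]} (hd : 1 ≤ d) (hθ : 0 ≤ θ) (hν : IsMZ d N ν c) (s : ℕ)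
    (hN : (s : ℝ) + n + m < N / 2) (x : Sph d) (hv : ∀ u ∈ Icc (0 : ℝ) 1, u ^ θ ≤ v.eval u)
    (v_sumSq : (fun y ↦ v.eval (haversine x y)) ∈ sphSumSq d n) (hq : q.natDegree ≤ m) :
    ∫ y, haversine x y ^ (s + θ) * q.eval (haversine x y) ^ 2 ∂ν.totalVariation ≤
      c * (zonalConst d *
        jacobiInt ((d : ℝ) / 2 - 1) ((d : ℝ) / 2 - 1) (X ^ s * (v * (q * q)))) := by
  have q_poly : (fun y ↦ q.eval (haversine x y)) ∈ sphPoly d m := by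
    simpa using eval_mem_sphPoly (haversine_mem_sphPoly x) hq
  have sumSq : (fun y ↦ (X ^ s * (v * (q * q))).eval (haversine x y)) ∈ sphSumSq d (s + n + m) := by
    have h := mul_mem_sphSumSq
      (mul_mem_sphSumSq (pow_mem_sphSumSq (haversine_mem_sphSumSq x) s) v_sumSq)
      (sq_mem_sphSumSq q_poly)
    rw [mul_one] at h
    convert h using 1
    ext y
    simp
    ring
  calc ∫ y, haversine x y ^ (s + θ) * q.eval (haversine x y) ^ 2 ∂ν.totalVariation
      ≤ ∫ y, (X ^ s * (v * (q * q))).eval (haversine x y) ∂ν.totalVariation := by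
        refine integral_mono (integrable_of_continuous_sphere _ ?_)
          (integrable_of_continuous_sphere _ (continuous_of_mem_sphSumSq sumSq)) fun y ↦ ?_
        · exact ((continuous_haversine x).rpow_const fun _ ↦ Or.inr (by positivity)).mul
            ((continuous_of_mem_sphPoly q_poly).pow 2)
        · have hu := haversine_mem_Icc x y
          have hu₀ := hu.1
          simp only [eval_mul, eval_pow, eval_X, rpow_add_of_nonneg hu₀ (Nat.cast_nonneg s) hθ,
            rpow_natCast, ← sq, mul_assoc]
          gcongr
          exact hv _ hu
    _ ≤ c * ∫ y, (X ^ s * (v * (q * q))).eval (haversine x y) ∂sphMeasure d :=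
        integral_totalVariation_le_of_mem_sphSumSq hν (by push_cast; linarith) sumSq
    _ = c * (zonalConst d *
          jacobiInt ((d : ℝ) / 2 - 1) ((d : ℝ) / 2 - 1) (X ^ s * (v * (q * q)))) := by
        rw [← integral_eval_ip hd x]
        rfl

lemma exists_integral_haversine_rpow_mul_sq_le {r : ℝ} (hr : 0 ≤ r) :
    ∃ B : ℝ, 0 < B ∧ ∀ (d m n : ℕ) (N c : ℝ) (x : Sph d) (ν : SignedMeasure (Sph d)) (q : ℝ[X]),
      3 ≤ d → 1 ≤ n → IsMZ d N ν c → q.natDegree ≤ m → r + n + m < N / 2 →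
      ∫ y, haversine x y ^ r * q.eval (haversine x y) ^ 2 ∂ν.totalVariation ≤
        c * (zonalConst d * (B * (2 * jacobiInt ((d : ℝ) / 2 + r - 1) ((d : ℝ) / 2 - 1) (q * q) +
          ((n : ℝ) ^ 2)⁻¹ * jacobiInt ((d : ℝ) / 2 + r - 2) ((d : ℝ) / 2 - 1) (q * q)))) := by
  obtain ⟨s, θ, hθ₀, hθ₁, rfl⟩ : ∃ (s : ℕ) (θ : ℝ), 0 ≤ θ ∧ θ < 1 ∧ r = s + θ :=
    ⟨⌊r⌋₊, r - ⌊r⌋₊, sub_nonneg.2 (Nat.floor_le hr), by linarith [Nat.lt_floor_add_one r], by ring⟩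
  obtain ⟨B, hB, majorant⟩ := exists_polynomial_near_rpow hθ₀ hθ₁
  refine ⟨B, hB, fun d m n N c x ν q hd hn hν hq hN ↦ ?_⟩
  have hd' : (3 : ℝ) ≤ d := by exact_mod_cast hd
  obtain ⟨v, hv, v_sumSq⟩ := majorant n hn
  have hc : 0 ≤ c := hν.nonneg (by linarith)
  have hκ := zonalConst_pos (show 1 ≤ d by lia)
  have h_rpow : (n : ℝ) ^ (-(2 * θ)) = (((n : ℝ) ^ 2)⁻¹) ^ θ := by
    rw [rpow_neg (by positivity), inv_rpow (by positivity), rpow_mul (by positivity), rpow_two]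
  have h := jacobiInt_X_pow_mul_mul_mul_self_le (a := (d : ℝ) / 2 - 1) (s := s) hθ₀ hθ₁.le
    (by linarith) (by linarith) (by linarith : -1 < (d : ℝ) / 2 - 1) hB.le
    (by positivity : 0 ≤ ((n : ℝ) ^ 2)⁻¹) (fun u hu ↦ h_rpow ▸ (hv u hu).2) q
  rw [show (d : ℝ) / 2 - 1 + s + θ = (d : ℝ) / 2 + (s + θ) - 1 by ring,
    show (d : ℝ) / 2 + (s + θ) - 1 - 1 = (d : ℝ) / 2 + (s + θ) - 2 by ring] at h
  refine (integral_haversine_rpow_mul_sq_le_jacobiInt (by lia) hθ₀ hν s (by linarith) x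
    (fun u hu ↦ (hv u hu).1) (v_sumSq d x) hq).trans ?_
  gcongr

lemma exists_sphK_one_mul_integral_localizer_le {r : ℝ} (hr : 0 ≤ r) :
    ∃ D : ℝ, 0 < D ∧ ∀ (d n : ℕ) (x : Sph d) (ν : SignedMeasure (Sph d)) (c : ℝ),
      3 ≤ d → d ≤ n → r < n → IsMZ d ((2 * (d + 2) * n : ℕ) : ℝ) ν c →
      sphK d ((d + 2) * n) 1 *
          ∫ y, haversine x y ^ r * (localizer d n r).eval (haversine x y) ^ 2 ∂ν.totalVariation ≤
        D * (n : ℝ) ^ (-(2 * r)) * c := by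
  obtain ⟨B, hB, moment⟩ := exists_integral_haversine_rpow_mul_sq_le hr
  refine ⟨582 * B * (exp 3 * (1 + r) ^ (2 * r)), by positivity, fun d n x ν c hd hdn hrn hν ↦ ?_⟩
  have hn : (0 : ℝ) < n := by exact_mod_cast (by lia : 0 < n)
  set I := jacobiInt ((d : ℝ) / 2 + r - 1) ((d : ℝ) / 2 - 1) (localizer d n r * localizer d n r)
  have moment := moment d (d * n) n _ c x ν (localizer d n r) hd (by lia) hν
    (natDegree_normalizedJacobi_le _ _ _) (by push_cast; linarith)
  have lower_weight : ((n : ℝ) ^ 2)⁻¹ * jacobiInt ((d : ℝ) / 2 + r - 2) ((d : ℝ) / 2 - 1)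
      (localizer d n r * localizer d n r) ≤ 580 * I := by
    rw [inv_mul_le_iff₀ (by positivity)]
    linarith [jacobiInt_localizer_mul_self_le_mul hd hr (by lia) hrn.le]
  have hc : 0 ≤ c := hν.nonneg (by push_cast; positivity)
  have hκ := zonalConst_pos (show 1 ≤ d by lia)
  have hK := sphK_one_pos (show 2 ≤ d by lia) (Nat.mul_pos (by lia : 0 < d + 2) (by lia : 0 < n))
  calc sphK d ((d + 2) * n) 1 * _
      ≤ sphK d ((d + 2) * n) 1 * (c * (zonalConst d * (B * (2 * I + 580 * I)))) := by
        refine mul_le_mul_of_nonneg_left (moment.trans ?_) hK.le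
        gcongr
    _ = c * (582 * B) * (sphK d ((d + 2) * n) 1 * (zonalConst d * I)) := by ring
    _ ≤ c * (582 * B) * (exp 3 * (1 + r) ^ (2 * r) * (n : ℝ) ^ (-(2 * r))) := by
        exact mul_le_mul_of_nonneg_left (sphK_one_mul_jacobiInt_localizer_le hd hr hdn)
          (by positivity)
    _ = 582 * B * (exp 3 * (1 + r) ^ (2 * r)) * (n : ℝ) ^ (-(2 * r)) * c := by ring

end WeightedMarcinkiewiczZygmund

section LocalizedKernel

variable {d : ℕ}

lemma ip_self (x : Sph d) : ip x x = 1 := by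
  rw [ip, real_inner_self_eq_norm_sq, norm_eq_of_mem_sphere, one_pow]

lemma natDegree_sphKernel_le (hd : 1 ≤ d) (M : ℕ) : (sphKernel d M).natDegree ≤ M - 1 := by
  have hd' : (1 : ℝ) ≤ d := by exact_mod_cast hd
  refine (natDegree_C_mul_le _ _).trans (natDegree_le_of_degree_le ?_)
  have degree_lt := degree_jacobiKernel_lt (α := (d : ℝ) / 2 - 1) (β := (d : ℝ) / 2 - 1)
    (by linarith) (by linarith) M
  rcases M with _ | M
  · exact (Nat.WithBot.lt_zero_iff.1 degree_lt).le.trans bot_le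
  · exact Order.le_of_lt_succ degree_lt

lemma sphK_ip_mem_sphPoly (hd : 1 ≤ d) (M : ℕ) (x : Sph d) :
    (fun y ↦ sphK d M (ip x y)) ∈ sphPoly d (M - 1) := by
  simp only [sphK_eq_eval]
  have h := eval_mem_sphPoly (haversine_mem_sphPoly x) (natDegree_sphKernel_le hd M)
  rwa [mul_one] at h

lemma integral_sphK_sq_le {M : ℕ} (hd : 2 ≤ d) (hM : 0 < M) (x : Sph d)
    {ν : SignedMeasure (Sph d)} {c : ℝ} (hν : IsMZ d ((2 * M : ℕ) : ℝ) ν c) :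
    ∫ y, sphK d M (ip x y) ^ 2 ∂ν.totalVariation ≤ c * sphK d M 1 := by
  have pred_lt : M - 1 < M := Nat.sub_one_lt_of_lt hM
  have kernel_mem := sphK_ip_mem_sphPoly (by lia : 1 ≤ d) M x
  have reproduce := integral_mul_sphK hd pred_lt kernel_mem x
  simp only [ip_self, ← sq] at reproduce
  rw [← reproduce]
  refine hν _ (isSphPoly_of_mem_sphPoly kernel_mem ?_)
  rw [Nat.cast_mul, Nat.cast_two, mul_div_cancel_left₀ _ two_ne_zero]
  exact_mod_cast pred_lt

lemma dist_rpow_mul_abs_mul_le {τ : ℝ} (hτ : 0 < τ) (r k p : ℝ) (x y : Sph d) :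
    dist x y ^ r * |k * p| ≤ τ * k ^ 2 + 4 ^ r / τ * (haversine x y ^ r * p ^ 2) := by
  have dist_rpow_sq : (dist x y ^ r) ^ 2 = 4 ^ r * haversine x y ^ r := by
    rw [← rpow_natCast, ← rpow_mul dist_nonneg, mul_comm r, rpow_mul dist_nonneg, rpow_natCast,
      dist_sq_eq_four_mul_haversine, mul_rpow (by norm_num) (haversine_mem_Icc x y).1]
  have amgm := two_mul_le_add_sq (τ * |k|) (dist x y ^ r * |p|)
  have nonneg : 0 ≤ τ * |k| * (dist x y ^ r * |p|) := by positivity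
  rw [mul_pow, mul_pow, sq_abs, sq_abs, dist_rpow_sq] at amgm
  rw [abs_mul, ← mul_le_mul_iff_right₀ hτ]
  calc τ * (dist x y ^ r * (|k| * |p|)) = τ * |k| * (dist x y ^ r * |p|) := by ring
    _ ≤ τ ^ 2 * k ^ 2 + 4 ^ r * haversine x y ^ r * p ^ 2 := by linarith
    _ = _ := by field_simp

lemma exists_integral_dist_rpow_mul_abs_sphK_mul_localizer_le {r : ℝ} (hr : 0 ≤ r) :
    ∃ D : ℝ, 0 < D ∧ ∀ (d n : ℕ) (x : Sph d) (ν : SignedMeasure (Sph d)) (c : ℝ),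
      3 ≤ d → d ≤ n → r < n → IsMZ d ((2 * (d + 2) * n : ℕ) : ℝ) ν c →
      ∫ y, dist x y ^ r * |sphK d ((d + 2) * n) (ip x y) * (localizer d n r).eval (haversine x y)|
          ∂ν.totalVariation ≤
        D * (n : ℝ) ^ (-r) * c := by
  obtain ⟨D, hD, weighted⟩ := exists_sphK_one_mul_integral_localizer_le hr
  refine ⟨1 + 4 ^ r * D, by positivity, fun d n x ν c hd hdn hrn hν ↦ ?_⟩
  have hn : (0 : ℝ) < n := by exact_mod_cast (by lia : 0 < n)
  have weighted := weighted d n x ν c hd hdn hrn hν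
  have hM : 0 < (d + 2) * n := Nat.mul_pos (by lia) (by lia)
  rw [mul_assoc 2] at hν
  have unweighted := integral_sphK_sq_le (by lia) hM x hν
  have hK : 0 < sphK d ((d + 2) * n) 1 := sphK_one_pos (by lia) hM
  have rpow_split : (n : ℝ) ^ (-(2 * r)) = (n : ℝ) ^ (-r) * (n : ℝ) ^ (-r) := by
    rw [← rpow_add hn]
    ring_nf
  rw [rpow_split] at weighted
  have hτ : 0 < (n : ℝ) ^ (-r) / sphK d ((d + 2) * n) 1 := by positivity
  have hweight := (continuous_haversine x).rpow_const (p := r) fun _ ↦ Or.inr hr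
  have hkernel := continuous_sphK_ip ((d + 2) * n) x
  have hlocalizer : Continuous fun y ↦ (localizer d n r).eval (haversine x y) :=
    (localizer d n r).continuous.comp (continuous_haversine x)
  calc _ ≤ ∫ y, ((n : ℝ) ^ (-r) / sphK d ((d + 2) * n) 1 * sphK d ((d + 2) * n) (ip x y) ^ 2 +
          4 ^ r / ((n : ℝ) ^ (-r) / sphK d ((d + 2) * n) 1) *
            (haversine x y ^ r * (localizer d n r).eval (haversine x y) ^ 2))
          ∂ν.totalVariation :=
        integral_mono (integrable_of_continuous_sphere _ (by fun_prop))
          (integrable_of_continuous_sphere _ (by fun_prop))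
          fun y ↦ dist_rpow_mul_abs_mul_le hτ r _ _ x y
    _ = (n : ℝ) ^ (-r) / sphK d ((d + 2) * n) 1 *
          ∫ y, sphK d ((d + 2) * n) (ip x y) ^ 2 ∂ν.totalVariation +
        4 ^ r / (n : ℝ) ^ (-r) * (sphK d ((d + 2) * n) 1 *
          ∫ y, haversine x y ^ r * (localizer d n r).eval (haversine x y) ^ 2
            ∂ν.totalVariation) := by
        rw [integral_add (integrable_of_continuous_sphere _ (by fun_prop))
          (integrable_of_continuous_sphere _ (by fun_prop)), integral_const_mul,
          integral_const_mul]
        field_simp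
    _ ≤ (n : ℝ) ^ (-r) / sphK d ((d + 2) * n) 1 * (c * sphK d ((d + 2) * n) 1) +
        4 ^ r / (n : ℝ) ^ (-r) * (D * ((n : ℝ) ^ (-r) * (n : ℝ) ^ (-r)) * c) := by gcongr
    _ = _ := by field_simp

end LocalizedKernel

section Growth

lemma eval_T_le_two_mul_pow {x : ℝ} (hx : 1 ≤ x) (n : ℕ) :
    (Chebyshev.T ℝ n).eval x ≤ (2 * x) ^ n := by
  induction n with
  | zero => simp
  | succ n ih =>
    have pred_pos := Chebyshev.one_le_eval_T_real (n - 1) hx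
    rw [Nat.cast_succ, Chebyshev.T_add_one, pow_succ']
    simp only [eval_sub, eval_mul, eval_ofNat, eval_X]
    have := mul_le_mul_of_nonneg_left ih (by linarith : 0 ≤ 2 * x)
    linarith

lemma eval_le_mul_two_mul_pow {q : ℝ[X]} {N : ℕ} (hq : q.natDegree ≤ N) {B : ℝ}
    (hB : ∀ t ∈ Icc (-1 : ℝ) 1, |q.eval t| ≤ B) {x : ℝ} (hx : 1 ≤ x) :
    q.eval x ≤ B * (2 * x) ^ N := by
  rw [← div_le_iff₀ (by positivity)]
  refine le_of_forall_gt_imp_ge_of_dense fun B' hB' ↦ ?_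
  have hB'_pos : 0 < B' := (abs_nonneg _).trans_lt ((hB 0 (by simp)).trans_lt hB')
  rw [div_le_iff₀ (by positivity), ← inv_mul_le_iff₀ hB'_pos]
  have extremal := Chebyshev.eval_iterate_derivative_le_of_forall_abs_le_one (k := 0)
    (P := C B'⁻¹ * q) hx (degree_le_of_natDegree_le ((natDegree_C_mul_le _ _).trans hq))
    fun t ht ↦ by
      rw [eval_mul, eval_C, abs_mul, abs_inv, abs_of_pos hB'_pos, inv_mul_le_iff₀ hB'_pos, mul_one]
      exact (hB t ht).trans hB'.le
  rw [Function.iterate_zero_apply, Function.iterate_zero_apply, eval_mul, eval_C] at extremal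
  exact extremal.trans (eval_T_le_two_mul_pow hx N)

lemma exists_eval_add_eval_neg_eq (p : MvPolynomial (Fin 2) ℝ) :
    ∃ q : ℝ[X], q.natDegree ≤ p.totalDegree ∧ ∀ c s : ℝ, c ^ 2 + s ^ 2 = 1 →
      MvPolynomial.eval ![c, s] p + MvPolynomial.eval ![c, -s] p = q.eval c := by
  refine ⟨∑ e ∈ p.support, C (p.coeff e * (1 + (-1) ^ e 1)) * (X ^ e 0 * (1 - X ^ 2) ^ (e 1 / 2)),
    natDegree_sum_le_of_forall_le _ _ fun e he ↦ ?_, fun c s hcs ↦ ?_⟩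
  · have degree_le := MvPolynomial.le_totalDegree he
    rw [Finsupp.sum_fintype _ _ fun _ ↦ rfl, Fin.sum_univ_two] at degree_le
    have : (X ^ e 0 * (1 - X ^ 2) ^ (e 1 / 2) : ℝ[X]).natDegree ≤ e 0 + (e 1 / 2) * 2 := by
      refine natDegree_mul_le.trans (add_le_add (natDegree_X_pow_le _) ?_)
      exact natDegree_pow_le.trans (Nat.mul_le_mul_left _ (by compute_degree))
    exact (natDegree_C_mul_le _ _).trans (this.trans (by lia))
  · have hs : 1 - c ^ 2 = s ^ 2 := by linarith
    rw [MvPolynomial.eval_eq', MvPolynomial.eval_eq', ← Finset.sum_add_distrib, eval_finsetSum]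
    refine Finset.sum_congr rfl fun e _ ↦ ?_
    simp only [Fin.prod_univ_two, Matrix.cons_val_zero, Matrix.cons_val_one, eval_mul, eval_C,
      eval_pow, eval_sub, eval_one, eval_X, hs, ← pow_mul]
    rcases Nat.even_or_odd (e 1) with even | odd
    · rw [even.neg_pow, even.neg_one_pow, Nat.two_mul_div_two_of_even even]
      ring
    · rw [odd.neg_pow, odd.neg_one_pow]
      ring

variable {d m : ℕ} {f : Sph d → ℝ}

lemma exists_add_eq_eval_of_mem_sphPoly (hf : f ∈ sphPoly d m) (x w : Ambient d) :
    ∃ q : ℝ[X], q.natDegree ≤ m ∧ ∀ (c s : ℝ) (y z : Sph d), c ^ 2 + s ^ 2 = 1 →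
      (y : Ambient d) = c • x + s • w → (z : Ambient d) = c • x + (-s) • w →
      f y + f z = q.eval c := by
  obtain ⟨p, hp, hfp⟩ := mem_sphPoly_iff.1 hf
  let L : Fin (d + 1) → MvPolynomial (Fin 2) ℝ := fun i ↦
    MvPolynomial.C (x i) * MvPolynomial.X 0 + MvPolynomial.C (w i) * MvPolynomial.X 1
  have hL : ∀ i, (L i).totalDegree ≤ 1 := fun i ↦ by
    refine (MvPolynomial.totalDegree_add _ _).trans (max_le ?_ ?_) <;>
      exact (MvPolynomial.totalDegree_mul _ _).trans (by simp)
  have on_circle : ∀ (c s : ℝ) (y : Sph d), (y : Ambient d) = c • x + s • w →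
      f y = MvPolynomial.eval ![c, s] (MvPolynomial.bind₁ L p) := fun c s y hy ↦ by
    rw [hfp, ← MvPolynomial.coe_aeval_eq_eval, ← MvPolynomial.coe_aeval_eq_eval]
    simp only [RingHom.coe_coe, MvPolynomial.aeval_bind₁, hy]
    simp [L, mul_comm]
  obtain ⟨q, hq, symm⟩ := exists_eval_add_eval_neg_eq (MvPolynomial.bind₁ L p)
  refine ⟨q, hq.trans ((totalDegree_bind₁_le hL p).trans hp), fun c s y z hcs hy hz ↦ ?_⟩
  rw [on_circle c s y hy, on_circle c (-s) z hz, symm c s hcs]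

lemma exists_orthogonal_unit_eq_smul_add_smul (hd : 1 ≤ d) (x y : Sph d) :
    ∃ w : Ambient d, ‖w‖ = 1 ∧ ⟪(x : Ambient d), w⟫ = 0 ∧
      (y : Ambient d) = ip x y • (x : Ambient d) + √(1 - ip x y ^ 2) • w := by
  set v := (y : Ambient d) - ip x y • (x : Ambient d) with hv
  have inner_v : ⟪(x : Ambient d), v⟫ = 0 := by
    rw [hv, inner_sub_right, inner_smul_right, ← ip, ← ip, ip_self, mul_one, sub_self]
  have norm_v : ‖v‖ = √(1 - ip x y ^ 2) := by
    rw [hv, norm_eq_sqrt_real_inner]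
    congr 1
    rw [inner_sub_left, inner_smul_left, ← hv, inner_v, hv, inner_sub_right, inner_smul_right,
      ← ip, real_inner_comm, ← ip, ip_self]
    simp
    ring
  rcases eq_or_ne v 0 with hv0 | hv0
  · obtain ⟨b, hb⟩ := exists_orthonormalBasis_zero_eq x
    refine ⟨b (Fin.last d), b.norm_eq_one _, ?_, ?_⟩
    · rw [← hb]
      exact b.inner_eq_zero (Fin.ne_of_val_ne (by simp; lia))
    · rw [← norm_v, hv0, norm_zero, zero_smul, add_zero]
      exact sub_eq_zero.1 hv0
  · have norm_ne : ‖v‖ ≠ 0 := norm_ne_zero_iff.2 hv0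
    refine ⟨‖v‖⁻¹ • v, ?_, ?_, ?_⟩
    · rw [norm_smul, norm_inv, norm_norm, inv_mul_cancel₀ norm_ne]
    · rw [inner_smul_right, inner_v, mul_zero]
    · rw [← norm_v, smul_inv_smul₀ norm_ne, hv, add_sub_cancel]

lemma norm_smul_add_smul_of_orthogonal {E : Type*} [NormedAddCommGroup E]
    [InnerProductSpace ℝ E] {x w : E} (hx : ‖x‖ = 1) (hw : ‖w‖ = 1) (hxw : ⟪x, w⟫ = 0) {c s : ℝ}
    (hcs : c ^ 2 + s ^ 2 = 1) : ‖c • x + s • w‖ = 1 := by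
  rw [← sq_eq_sq₀ (norm_nonneg _) zero_le_one, norm_add_sq_real, norm_smul, norm_smul, hx, hw,
    inner_smul_left, inner_smul_right, hxw]
  simp [hcs]

lemma exists_add_eq_eval_haversine (hd : 1 ≤ d) (hf : f ∈ sphPoly d m) (x y : Sph d) :
    ∃ q : ℝ[X], q.natDegree ≤ m ∧ (∃ y', f y + f y' = q.eval (haversine x y)) ∧
      ∀ u ∈ Icc (0 : ℝ) 1, ∃ z z', haversine x z = u ∧ haversine x z' = u ∧
        f z + f z' = q.eval u := by
  obtain ⟨w, hw, hxw, hyw⟩ := exists_orthogonal_unit_eq_smul_add_smul hd x y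
  have hx : ‖(x : Ambient d)‖ = 1 := norm_eq_of_mem_sphere x
  obtain ⟨q, hq, eval_q⟩ := exists_add_eq_eval_of_mem_sphPoly hf x w
  let point (c s : ℝ) (hcs : c ^ 2 + s ^ 2 = 1) : Sph d :=
    ⟨c • (x : Ambient d) + s • w,
      mem_sphere_zero_iff_norm.2 (norm_smul_add_smul_of_orthogonal hx hw hxw hcs)⟩
  have haversine_point : ∀ c s hcs, haversine x (point c s hcs) = (1 - c) / 2 := fun c s hcs ↦ by
    rw [haversine, ip, inner_add_right, inner_smul_right, inner_smul_right, hxw, ← ip, ip_self]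
    ring
  have sq_add_sqrt_sq : ∀ u ∈ Icc (0 : ℝ) 1,
      (1 - 2 * u) ^ 2 + √(1 - (1 - 2 * u) ^ 2) ^ 2 = 1 := by
    rintro u ⟨hu₀, hu₁⟩
    rw [sq_sqrt (by nlinarith), add_sub_cancel]
  have ip_eq : ip x y = 1 - 2 * haversine x y := by
    rw [haversine]
    ring
  refine ⟨q.comp (1 - C 2 * X), ?_, ?_, fun u hu ↦ ?_⟩
  · refine natDegree_comp_le.trans ((Nat.mul_le_mul hq (?_ : _ ≤ 1)).trans_eq (mul_one m))
    compute_degree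
  · rw [ip_eq] at hyw
    have hcs := sq_add_sqrt_sq _ (haversine_mem_Icc x y)
    refine ⟨point _ _ ((congrArg _ (neg_sq _)).trans hcs), ?_⟩
    rw [eval_q _ _ _ _ hcs hyw rfl]
    simp
  · have hcs := sq_add_sqrt_sq u hu
    have hcs' := (congrArg ((1 - 2 * u) ^ 2 + ·) (neg_sq _)).trans hcs
    have haversine_eq : (1 - (1 - 2 * u)) / 2 = u := by ring
    refine ⟨point _ _ hcs, point _ _ hcs', (haversine_point _ _ hcs).trans haversine_eq,
      (haversine_point _ _ hcs').trans haversine_eq, ?_⟩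
    rw [eval_q _ _ _ _ hcs rfl rfl]
    simp

/-- Symmetrising `f ^ 2` on the great circle through `x` and `y` leaves a polynomial in the
haversine, whose growth off `[0, h]` is controlled by the extremality of Chebyshev polynomials. -/
lemma abs_le_mul_pow_of_abs_le_on_cap (hd : 1 ≤ d) (hf : f ∈ sphPoly d m) {x y : Sph d} {h A : ℝ}
    (hh : 0 < h) (hA : ∀ z, haversine x z ≤ h → |f z| ≤ A) (hy : h ≤ haversine x y) :
    |f y| ≤ 2 * A * (4 * (haversine x y / h)) ^ m := by
  have hA₀ : 0 ≤ A := (abs_nonneg _).trans (hA x (by rw [haversine_self]; exact hh.le))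
  obtain ⟨q, hq, ⟨y', eval_y⟩, eval_cap⟩ :=
    exists_add_eq_eval_haversine hd (pow_mem_sphPoly hf 2) x y
  have hu := (haversine_mem_Icc x y).2
  set u := haversine x y
  simp only [Pi.pow_apply] at eval_y eval_cap
  have one_le : 1 ≤ u / h := (one_le_div hh).2 hy
  have degree_le : (q.comp (C (h / 2) * (1 + X))).natDegree ≤ 2 * m := by
    refine natDegree_comp_le.trans ((Nat.mul_le_mul hq (?_ : _ ≤ 1)).trans_eq (mul_one _))
    compute_degree
  have growth := eval_le_mul_two_mul_pow (B := 2 * A ^ 2) degree_le (fun t ht ↦ ?_)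
    (by linarith : 1 ≤ 2 * (u / h) - 1)
  · have eval_growth : (q.comp (C (h / 2) * (1 + X))).eval (2 * (u / h) - 1) = q.eval u := by
      rw [eval_comp]
      congr 1
      simp
      field_simp
    rw [eval_growth, ← eval_y] at growth
    refine abs_le_of_sq_le_sq ?_ (by positivity)
    calc f y ^ 2 ≤ 2 * A ^ 2 * (2 * (2 * (u / h) - 1)) ^ (2 * m) := by
          linarith [sq_nonneg (f y')]
      _ ≤ (2 * A) ^ 2 * (4 * (u / h)) ^ (2 * m) := by
          refine mul_le_mul (by nlinarith) ?_ (pow_nonneg (by linarith) _) (by positivity)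
          exact pow_le_pow_left₀ (by linarith) (by linarith) _
      _ = _ := by ring
  · obtain ⟨z, z', hz, hz', eval_z⟩ := eval_cap (h / 2 * (1 + t))
      ⟨by nlinarith [ht.1], by nlinarith [ht.2]⟩
    have le_h : h / 2 * (1 + t) ≤ h := by nlinarith [ht.2]
    simp only [eval_comp, eval_mul, eval_C, eval_add, eval_one, eval_X, ← eval_z]
    rw [abs_of_nonneg (by positivity)]
    have sq_le := sq_le_sq.2 ((hA z (hz.trans_le le_h)).trans (le_abs_self A))
    have sq_le' := sq_le_sq.2 ((hA z' (hz'.trans_le le_h)).trans (le_abs_self A))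
    linarith

end Growth

section PointwiseBound

variable {d m n : ℕ} {f P : Sph d → ℝ} {x y : Sph d} {r h L S : ℝ}

lemma haversine_le_iff (hh : 0 ≤ h) : haversine x y ≤ h ↔ dist x y ≤ √(4 * h) := by
  rw [le_sqrt dist_nonneg (by positivity), dist_sq_eq_four_mul_haversine]
  exact (mul_le_mul_iff_right₀ (by norm_num)).symm

lemma haversine_le_dist : haversine x y ≤ dist x y := by
  have hu := haversine_mem_Icc x y
  refine le_of_sq_le_sq ?_ dist_nonneg
  rw [dist_sq_eq_four_mul_haversine]
  nlinarith [hu.1, hu.2]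

lemma abs_sub_le_of_haversine_ge (hd : 1 ≤ d) (hmr : m ≤ r) (hh : 0 < h) (hL : 0 ≤ L)
    (hf : ∀ z, |f z| ≤ S) (hP : P ∈ sphPoly d m)
    (hcap : ∀ z, haversine x z ≤ h → |f z - P z| ≤ L * dist x z ^ r) (hy : h ≤ haversine x y) :
    |f y - P y| ≤ 3 * 8 ^ r * (S + L) * (h ^ r)⁻¹ := by
  have hr : 0 ≤ r := m.cast_nonneg.trans hmr
  have hS : 0 ≤ S := (abs_nonneg _).trans (hf x)
  have hu := (haversine_mem_Icc x y).2
  have cap_bound : ∀ z, haversine x z ≤ h → |P z| ≤ S + 2 ^ r * L := fun z hz ↦ by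
    have dist_le : dist x z ≤ 2 := by
      refine le_of_sq_le_sq ?_ zero_le_two
      linarith [dist_sq_eq_four_mul_haversine x z, (haversine_mem_Icc x z).2]
    have dist_rpow_le := mul_le_mul_of_nonneg_left (rpow_le_rpow dist_nonneg dist_le hr) hL
    have triangle := abs_sub (f z) (f z - P z)
    rw [sub_sub_cancel] at triangle
    linarith [hf z, hcap z hz]
  have growth : |P y| ≤ 2 * (S + 2 ^ r * L) * (4 ^ r * (h ^ r)⁻¹) := by
    refine (abs_le_mul_pow_of_abs_le_on_cap hd hP hh cap_bound hy).trans ?_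
    gcongr
    have one_le : 1 ≤ 4 * (haversine x y / h) := by linarith [(one_le_div hh).2 hy]
    calc (4 * (haversine x y / h)) ^ m ≤ (4 * (haversine x y / h)) ^ r := by
          rw [← rpow_natCast]
          exact rpow_le_rpow_of_exponent_le one_le hmr
      _ ≤ (4 * h⁻¹) ^ r := by
          rw [← one_div]
          gcongr
      _ = _ := by rw [mul_rpow zero_le_four (by positivity), inv_rpow hh.le]
  have one_le_inv : 1 ≤ (h ^ r)⁻¹ :=
    (one_le_inv₀ (by positivity)).2 (rpow_le_one hh.le (hy.trans hu) hr)
  have rpow_mul : (8 : ℝ) ^ r = 2 ^ r * 4 ^ r := by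
    rw [← mul_rpow zero_le_two zero_le_four]
    norm_num
  have one_le_two : (1 : ℝ) ≤ 2 ^ r := one_le_rpow one_le_two hr
  have one_le_four : (1 : ℝ) ≤ 4 ^ r := one_le_rpow (by norm_num) hr
  calc |f y - P y| ≤ S * (1 * 1 * 1) + 2 * (S + 2 ^ r * L) * (4 ^ r * (h ^ r)⁻¹) := by
        linarith [abs_sub (f y) (P y), hf y]
    _ ≤ S * (2 ^ r * 4 ^ r * (h ^ r)⁻¹) +
        2 * (2 ^ r * S + 2 ^ r * L) * (4 ^ r * (h ^ r)⁻¹) + L * (2 ^ r * 4 ^ r * (h ^ r)⁻¹) := by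
        refine le_add_of_le_of_nonneg ?_ (by positivity)
        gcongr
        exact le_mul_of_one_le_left hS one_le_two
    _ = _ := by
        rw [rpow_mul]
        ring

lemma one_sub_pow_le_log_div_rpow {u : ℝ} (hr : 0 ≤ r) (hn : 3 ≤ n) (hu : 4 * (r * (log n / n)) ≤ u)
    (hu₁ : u ≤ 1) : (1 - u) ^ n ≤ (log n / n) ^ (2 * r) := by
  have hn₃ : (3 : ℝ) ≤ n := by exact_mod_cast hn
  have hn₀ : (0 : ℝ) < n := by linarith
  have one_le_log : 1 ≤ log n := by
    rw [le_log_iff_exp_le hn₀]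
    linarith [exp_one_lt_d9]
  calc (1 - u) ^ n ≤ exp (-(4 * (r * (log n / n)))) ^ n := by
        refine pow_le_pow_left₀ (by linarith) ?_ n
        linarith [add_one_le_exp (-(4 * (r * (log n / n))))]
    _ = (n : ℝ) ^ (-(4 * r)) := by
        rw [← exp_nat_mul, rpow_def_of_pos hn₀]
        congr 1
        field_simp
    _ ≤ (n : ℝ) ^ (-(2 * r)) := rpow_le_rpow_of_exponent_le (by linarith) (by linarith)
    _ = (1 / n : ℝ) ^ (2 * r) := by rw [rpow_neg hn₀.le, one_div, inv_rpow hn₀.le]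
    _ ≤ _ := by gcongr

lemma exists_abs_sub_mul_one_sub_haversine_pow_le (hr : 0 < r) :
    ∃ E : ℝ, 0 < E ∧ ∀ (d m n : ℕ) (x : Sph d) (f P : Sph d → ℝ) (L S : ℝ),
      1 ≤ d → m ≤ r → 3 ≤ n → 0 ≤ L → (∀ y, |f y| ≤ S) → P ∈ sphPoly d m →
      (∀ y ∈ Metric.closedBall x √(16 * r * log n / n), |f y - P y| ≤ L * dist x y ^ r) →
      ∀ y, |f y - P y| * (1 - haversine x y) ^ n ≤ E * (S + L) * dist x y ^ r := by
  refine ⟨1 + 3 * 8 ^ r * ((4 * r) ^ (2 * r))⁻¹, by positivity,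
    fun d m n x f P L S hd hmr hn hL hf hP hball y ↦ ?_⟩
  have hS : 0 ≤ S := (abs_nonneg _).trans (hf x)
  have hu := haversine_mem_Icc x y
  have hℓ : 0 < log n / n := by
    have : (1 : ℝ) < n := by exact_mod_cast (by lia : 1 < n)
    have := log_pos this
    positivity
  have hh : 0 < 4 * (r * (log n / n)) := by positivity
  have radius_eq : 16 * r * log n / n = 4 * (4 * (r * (log n / n))) := by ring
  have hcap : ∀ z, haversine x z ≤ 4 * (r * (log n / n)) → |f z - P z| ≤ L * dist x z ^ r :=
    fun z hz ↦ hball z <| by rwa [Metric.mem_closedBall', radius_eq, ← haversine_le_iff hh.le]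
  set ℓ := log n / n
  rcases le_total (haversine x y) (4 * (r * ℓ)) with inside | outside
  · calc _ ≤ L * dist x y ^ r * 1 :=
          mul_le_mul (hcap y inside) (pow_le_one₀ (by linarith [hu.2]) (by linarith [hu.1]))
            (pow_nonneg (by linarith [hu.2]) _) (by positivity)
      _ = 1 * L * dist x y ^ r := by ring
      _ ≤ _ := by
        gcongr
        · exact le_add_of_nonneg_right (by positivity)
        · exact le_add_of_nonneg_left hS
  · have rpow_eq : ((4 * (r * ℓ)) ^ r)⁻¹ * ℓ ^ (2 * r) =
        ((4 * r) ^ (2 * r))⁻¹ * (4 * (r * ℓ)) ^ r := by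
      rw [← mul_assoc 4, mul_rpow (by positivity) hℓ.le, two_mul, rpow_add hℓ,
        rpow_add (by positivity)]
      field_simp
    calc _ ≤ 3 * 8 ^ r * (S + L) * ((4 * (r * ℓ)) ^ r)⁻¹ * ℓ ^ (2 * r) :=
          mul_le_mul (abs_sub_le_of_haversine_ge hd hmr hh hL hf hP hcap outside)
            (one_sub_pow_le_log_div_rpow hr.le hn outside hu.2) (pow_nonneg (by linarith [hu.2]) _)
            (by positivity)
      _ = 3 * 8 ^ r * ((4 * r) ^ (2 * r))⁻¹ * (S + L) * (4 * (r * ℓ)) ^ r := by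
          rw [mul_assoc _ _ (ℓ ^ (2 * r)), rpow_eq]
          ring
      _ ≤ _ := by
          gcongr
          · exact le_add_of_nonneg_left zero_le_one
          · exact outside.trans haversine_le_dist

end PointwiseBound

section LocalApproximation

variable {d n m : ℕ} {r : ℝ} {ν : SignedMeasure (Sph d)}

lemma abs_le_supNorm {X : Type*} [TopologicalSpace X] [CompactSpace X] {f : X → ℝ}
    (hf : Continuous f) (y : X) : |f y| ≤ supNorm f :=
  le_csSup (isCompact_range hf.abs).bddAbove ⟨y, rfl⟩

lemma abs_sInt_sub_sInt_le (ν : SignedMeasure (Sph d)) {f g : Sph d → ℝ} (hf : Continuous f)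
    (hg : Continuous g) : |sInt ν f - sInt ν g| ≤ ∫ y, |f y - g y| ∂ν.totalVariation := by
  have hfg : Continuous fun y ↦ |f y - g y| := (hf.sub hg).abs
  have sub_eq : sInt ν f - sInt ν g = sInt ν fun y ↦ f y - g y := by
    simp only [sInt]
    rw [integral_sub (integrable_of_continuous_sphere _ hf) (integrable_of_continuous_sphere _ hg),
      integral_sub (integrable_of_continuous_sphere _ hf) (integrable_of_continuous_sphere _ hg)]
    ring
  rw [sub_eq, sInt, SignedMeasure.totalVariation,
    integral_add_measure (integrable_of_continuous_sphere _ hfg)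
      (integrable_of_continuous_sphere _ hfg)]
  exact (abs_sub _ _).trans (add_le_add abs_integral_le_integral_abs abs_integral_le_integral_abs)

lemma Phi_ip (hd : 3 ≤ d) (hr : 0 ≤ r) (x y : Sph d) :
    Phi d n r (ip x y) = sphK d ((d + 2) * n) (ip x y) * (localizer d n r).eval (haversine x y) *
      (1 - haversine x y) ^ n := by
  have hd' : (3 : ℝ) ≤ d := by exact_mod_cast hd
  rw [Phi, PhiTilde, jacobiP_div_jacobiP_one (by linarith) (by linarith) (by linarith), ← localizer,
    haversine]
  congr 2
  ring

lemma localizer_mul_pow_mem_sphPoly (x : Sph d) :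
    (fun y ↦ (localizer d n r).eval (haversine x y) * (1 - haversine x y) ^ n) ∈
      sphPoly d (d * n + n) := by
  have localizer_mem := eval_mem_sphPoly (haversine_mem_sphPoly x)
    (natDegree_normalizedJacobi_le ((d : ℝ) / 2 + r) ((d : ℝ) / 2 - 2) (d * n))
  have pow_mem := pow_mem_sphPoly (sub_mem one_mem_sphPoly (haversine_mem_sphPoly x)) n
  rw [mul_one] at localizer_mem pow_mem
  exact mul_mem_sphPoly localizer_mem pow_mem

lemma continuous_Phi_ip (hd : 3 ≤ d) (hr : 0 ≤ r) (x : Sph d) :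
    Continuous fun y ↦ Phi d n r (ip x y) := by
  simp only [Phi_ip hd hr, mul_assoc]
  exact (continuous_sphK_ip _ x).mul (continuous_of_mem_sphPoly (localizer_mul_pow_mem_sphPoly x))

lemma sigmaOp_eq_of_mem_sphPoly (hd : 3 ≤ d) (hr : 0 ≤ r) (hmn : m < n) {P : Sph d → ℝ}
    (hP : P ∈ sphPoly d m) (hν : IsQuadrature d ((2 * (d + 2) * n : ℕ) : ℝ) ν) (x : Sph d) :
    sigmaOp d n r ν P x = P x := by
  have hd' : (3 : ℝ) ≤ d := by exact_mod_cast hd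
  have product_mem := mul_mem_sphPoly hP (localizer_mul_pow_mem_sphPoly (n := n) (r := r) x)
  have kernel_mem := sphK_ip_mem_sphPoly (by lia : 1 ≤ d) ((d + 2) * n) x
  have degree_lt : m + (d * n + n) < (d + 2) * n := by linarith
  have total_degree_lt : m + (d * n + n) + ((d + 2) * n - 1) < 2 * (d + 2) * n := by
    rw [mul_assoc 2]
    lia
  have reproduce := integral_mul_sphK (by lia) degree_lt product_mem x
  have quadrature := hν _ (isSphPoly_of_mem_sphPoly (mul_mem_sphPoly product_mem kernel_mem)
    (by exact_mod_cast total_degree_lt))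
  calc sigmaOp d n r ν P x = sInt ν fun y ↦ P y * ((localizer d n r).eval (haversine x y) *
        (1 - haversine x y) ^ n) * sphK d ((d + 2) * n) (ip x y) := by
        rw [sigmaOp]
        congr 1
        ext y
        rw [Phi_ip hd hr]
        ring
    _ = P x * ((localizer d n r).eval (haversine x x) * (1 - haversine x x) ^ n) :=
        quadrature.trans reproduce
    _ = P x := by
        rw [haversine_self, localizer, eval_zero_normalizedJacobi (by linarith) (by linarith),
          sub_zero, one_pow, mul_one, mul_one]

lemma abs_sigmaOp_sub_sigmaOp_le (hd : 3 ≤ d) (hr : 0 ≤ r) {f P : Sph d → ℝ} (hf : Continuous f)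
    (hP : Continuous P) {A : ℝ} {x : Sph d}
    (hA : ∀ y, |f y - P y| * (1 - haversine x y) ^ n ≤ A * dist x y ^ r) :
    |sigmaOp d n r ν P x - sigmaOp d n r ν f x| ≤ A * ∫ y, dist x y ^ r *
      |sphK d ((d + 2) * n) (ip x y) * (localizer d n r).eval (haversine x y)|
        ∂ν.totalVariation := by
  have hΦ := continuous_Phi_ip (n := n) hd hr x
  have hkernel := continuous_sphK_ip ((d + 2) * n) x
  have hlocalizer : Continuous fun y ↦ (localizer d n r).eval (haversine x y) :=
    (localizer d n r).continuous.comp (continuous_haversine x)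
  refine (abs_sInt_sub_sInt_le ν (hP.mul hΦ) (hf.mul hΦ)).trans ?_
  rw [← integral_const_mul]
  refine integral_mono (integrable_of_continuous_sphere _ (by fun_prop))
    (integrable_of_continuous_sphere _ (by fun_prop)) fun y ↦ ?_
  have hu : 0 ≤ 1 - haversine x y := by linarith [(haversine_mem_Icc x y).2]
  calc |P y * Phi d n r (ip x y) - f y * Phi d n r (ip x y)| =
        |f y - P y| * (1 - haversine x y) ^ n *
          |sphK d ((d + 2) * n) (ip x y) * (localizer d n r).eval (haversine x y)| := by
        rw [← sub_mul, abs_mul, abs_sub_comm, Phi_ip hd hr, abs_mul _ ((1 - haversine x y) ^ n),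
          abs_of_nonneg (pow_nonneg hu n)]
        ring
    _ ≤ A * dist x y ^ r *
          |sphK d ((d + 2) * n) (ip x y) * (localizer d n r).eval (haversine x y)| :=
        mul_le_mul_of_nonneg_right (hA y) (abs_nonneg _)
    _ = _ := mul_assoc _ _ _

end LocalApproximation

theorem local_smooth_approx_general {r : ℝ} (hr : 0 < r) :
    ∃ C : ℝ, 0 < C ∧
      ∀ (d : ℕ) (x : Sph d) (δ : ℝ) (f : Sph d → ℝ) (L : ℝ) (n : ℕ)
        (ν : SignedMeasure (Sph d)) (c : ℝ),
        3 ≤ d → Continuous f → 0 ≤ L →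
        (∃ P, IsSphPoly d r P ∧
          ∀ y ∈ Metric.closedBall x δ, |f y - P y| ≤ L * dist x y ^ r) →
        d ≤ n → r < n → √(16 * r * log n / n) ≤ δ →
        IsQuadrature d ((2 * (d + 2) * n : ℕ) : ℝ) ν →
        IsMZ d ((2 * (d + 2) * n : ℕ) : ℝ) ν c →
        |f x - sigmaOp d n r ν f x| ≤
          C * dimPi d (2 * (d + 2) * n) ^ (-(r / (d : ℝ))) * (supNorm f + L) * c := by
  obtain ⟨E, hE, pointwise⟩ := exists_abs_sub_mul_one_sub_haversine_pow_le hr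
  obtain ⟨D, hD, kernel_bound⟩ := exists_integral_dist_rpow_mul_abs_sphK_mul_localizer_le hr.le
  refine ⟨E * D * (8 * exp 1) ^ r, by positivity,
    fun d x δ f L n ν c hd hf hL ⟨P, hP, hball⟩ hdn hrn hδ hquad hMZ ↦ ?_⟩
  have hc : 0 ≤ c := hMZ.nonneg (Nat.cast_pos.2 (Nat.mul_pos (by lia) (by lia)))
  have hS : 0 ≤ supNorm f := (abs_nonneg _).trans (abs_le_supNorm hf x)
  obtain ⟨m, hm⟩ := Nat.exists_eq_succ_of_ne_zero (Nat.ceil_pos.2 hr).ne'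
  have hmr : (m : ℝ) < r := Nat.lt_ceil.1 (hm ▸ m.lt_succ_self)
  have P_mem : P ∈ sphPoly d m := mem_sphPoly_of_isSphPoly hP (by exact_mod_cast hm ▸ Nat.le_ceil r)
  have at_center := hball x (Metric.mem_closedBall_self ((sqrt_nonneg _).trans hδ))
  rw [dist_self, zero_rpow hr.ne', mul_zero, abs_nonpos_iff, sub_eq_zero] at at_center
  have hmn : m < n := by exact_mod_cast hmr.trans hrn
  have reproduce := sigmaOp_eq_of_mem_sphPoly hd hr.le hmn P_mem hquad x
  calc |f x - sigmaOp d n r ν f x| = |sigmaOp d n r ν P x - sigmaOp d n r ν f x| := by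
        rw [reproduce, at_center]
    _ ≤ E * (supNorm f + L) * _ :=
        abs_sigmaOp_sub_sigmaOp_le hd hr.le hf (continuous_of_mem_sphPoly P_mem) <|
          pointwise d m n x f P L _ (by lia) hmr.le (hd.trans hdn) hL (abs_le_supNorm hf) P_mem
            fun y hy ↦ hball y (Metric.closedBall_subset_closedBall hδ hy)
    _ ≤ E * (supNorm f + L) * (D * ((8 * exp 1) ^ r *
          dimPi d (2 * (d + 2) * n) ^ (-(r / (d : ℝ)))) * c) := by
        gcongr
        refine (kernel_bound d n x ν c hd hdn hrn hMZ).trans ?_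
        gcongr
        exact rpow_neg_le_dimPi_rpow hd (by lia) hr.le
    _ = _ := by ring

/-- Local approximation: if `f` is `r`-smooth at `x` (with local Lipschitz-type constant `L`
for some `P ∈ Π_r^d` on the cap `B(x,δ)`), then `σ_{d;n,r}(ν,f)(x)` approximates `f(x)`
with rate `dim(Π_{2(d+2)n}^d)^{−r/d}`, the constant depending only on `r`. -/
theorem local_smooth_approx :
    ∀ r : ℝ, 0 < r → ∃ C : ℝ, 0 < C ∧
      ∀ (d : ℕ) (x : Sph d) (δ : ℝ) (f : Sph d → ℝ) (L : ℝ) (n : ℕ)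
        (ν : SignedMeasure (Sph d)) (c : ℝ),
        3 ≤ d → 0 < δ → Continuous f → 0 ≤ L →
        (∃ P, IsSphPoly d r P ∧
          ∀ y ∈ Metric.closedBall x δ, |f y - P y| ≤ L * dist x y ^ r) →
        ((d : ℝ) + r + 1) ^ 2 ≤ (n : ℝ) * d →
        Real.sqrt (16 * r * Real.log n / n) ≤ δ →
        IsQuadrature d ((2 * (d + 2) * n : ℕ) : ℝ) ν →
        IsMZ d ((2 * (d + 2) * n : ℕ) : ℝ) ν c →
        |f x - sigmaOp d n r ν f x| ≤
          C * (d : ℝ) ^ ((1 : ℝ)/6) * dimPi d (2 * (d + 2) * n) ^ (-(r / (d : ℝ))) *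
            (supNorm f + L) * c := by
  intro r hr
  obtain ⟨C, hC, bound⟩ := local_smooth_approx_general hr
  refine ⟨C, hC, fun d x δ f L n ν c hd _ hf hL hP hn hδ hquad hMZ ↦ ?_⟩
  have hd' : (3 : ℝ) ≤ d := by exact_mod_cast hd
  have hdrn : (d : ℝ) + r ≤ n := by nlinarith
  have hdn : d ≤ n := by exact_mod_cast (by linarith : (d : ℝ) ≤ n)
  have le_bound := bound d x δ f L n ν c hd hf hL hP hdn (by linarith) hδ hquad hMZ
  have one_le : (1 : ℝ) ≤ d ^ ((1 : ℝ) / 6) := one_le_rpow (by linarith) (by norm_num)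
  calc _ ≤ 1 * (C * dimPi d (2 * (d + 2) * n) ^ (-(r / (d : ℝ))) * (supNorm f + L) * c) := by
        rwa [one_mul]
    _ ≤ d ^ ((1 : ℝ) / 6) *
          (C * dimPi d (2 * (d + 2) * n) ^ (-(r / (d : ℝ))) * (supNorm f + L) * c) :=
        mul_le_mul_of_nonneg_right one_le ((abs_nonneg _).trans le_bound)
    _ = _ := by ring

end
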